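/- arXiv:1808.04948 — 2 statements merged into one kernel-verified Lean document; each statement's English description precedes it below -/
import Mathlib

section
/- Fix K, K̂ ∈ ℕ with 1 ≤ K < K̂. Define ξ₁ := ((K̂+1)/K̂)^{h(K̂)}, ξ₂ := ∏_{k=K+1}^{K̂} ((k+1)/k)^{k(k−1)^{k−2} e^{−k}/k!}, ξ₃ := ∏_{k=K+1}^{K̂} ((2k−1)/(2k−2))^{(k^{k−1} − k(k−1)^{k−2}) e^{−k}/k!}, and ξ₄ := ∏_{k=1}^{K} ∏_{(T,v) ∈ 𝓕_k} g(T,v)^{f_K(k)}. Then for every ε > 0, asymptotically almost surely c(𝒯_n) ≤ (ξ₁ξ₂ξ₃ξ₄ + ε)^n. -/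
/-!
Root the tree at a vertex `r`, describe it by its parent map `p`, and let `s(v)` be the number of
subtrees whose topmost vertex is `v` (`scount`). Such a subtree is determined by its possibly empty
traces on the fringe subtrees at the children of `v`, so `s(v) = ∏ (1 + s(w))` over the children `w`
of `v` (`IsRT.scount_eq`). Taking logarithms and summing over `v` gives
`log s(r) = ∑_{v ≠ r} log (1 + 1 / s(v))` (`IsRT.log_scount_root`), while `c(T) ≤ n s(r)`
(`subtreeCount_le`), and the factor `n` is negligible at exponential scale.

The summand at a vertex whose fringe subtree (the set of its descendants) has size `k` is kept as it
is for `k ≤ K`. For `K < k ≤ Khat` it is bounded by `log ((k + 1) / k)`, since `s(v) ≥ k`, and by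
`log ((2k - 1) / (2k - 2))` if `v` does not have exactly one child, since then `s(v) ≥ 2k - 2`.
For `k > Khat` it is bounded by `log ((Khat + 1) / Khat)`. The result is `log_scount_le`, whose
right-hand side involves finitely many fringe statistics, that is, sums over the non-root vertices
with fringe subtree of size `k` of a bounded functional of the fringe subtree.

Each such statistic is within `δ n` of `n e^{-k} / k!` times the sum of the functional over all
rooted labelled trees on `k` vertices, for all but a vanishing proportion of the trees
(`concentration`). This is Chebyshev's inequality. Both moments come from cutting off a fringe
subtree (`sum_fringe`) and Cayley's formula (`card_trees`), which is in turn proved by counting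
forests with a prescribed root set.

It remains to identify the constants (`log_xi`). There are `k^{k-1}` rooted labelled trees on `k`
vertices, and in `k (k - 1)^{k-2}` of them the root has exactly one child; this gives `ξ₁`, `ξ₂` and
`ξ₃`. For `ξ₄`, summing the recursion for `log s` over all rooted trees of a given size
(`treeSum_sF`) rewrites the density-weighted sum of `log (1 + 1 / s)` as the sum of
`f_K(k) log g(T, v)` (`sum_dens_eq_fK`).
-/

open Filter Topology
open scoped Classical

/-- The number of subtrees of a graph `G` on `Fin n`: the number of (nonempty) vertex
subsets inducing a connected subgraph. -/
noncomputable def subtreeCount {n : ℕ} (G : SimpleGraph (Fin n)) : ℕ :=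
  Nat.card {S : Set (Fin n) // (G.induce S).Connected}

/-- The probability that a uniformly random labelled tree on `n` vertices satisfies `p`. -/
noncomputable def treeProb (n : ℕ) (p : SimpleGraph (Fin n) → Prop) : ℝ :=
  (Nat.card {G : SimpleGraph (Fin n) // G.IsTree ∧ p G} : ℝ) /
    (Nat.card {G : SimpleGraph (Fin n) // G.IsTree} : ℝ)

/-- `g(T,v)`: one plus the number of subtrees of `T` containing `v`. -/
noncomputable def gval {k : ℕ} (T : SimpleGraph (Fin k)) (v : Fin k) : ℕ :=
  1 + Nat.card {S : Set (Fin k) // v ∈ S ∧ (T.induce S).Connected}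

/-- `f_K(k) = e^{-k}/k! - ∑_{ℓ=k+1}^K (ℓ-k)^{ℓ-k-1} C(ℓ, ℓ-k) e^{-ℓ}/ℓ!`. -/
noncomputable def fK (K k : ℕ) : ℝ :=
  Real.exp (-(k : ℝ)) / (Nat.factorial k) -
    ∑ l ∈ Finset.Icc (k + 1) K,
      ((l - k : ℕ) : ℝ) ^ (l - k - 1) * (Nat.choose l (l - k)) *
        Real.exp (-(l : ℝ)) / (Nat.factorial l)

/-- `h(K) = 1 - ∑_{k=1}^K k^{k-1} e^{-k}/k!`. -/
noncomputable def hfun (K : ℕ) : ℝ :=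
  1 - ∑ k ∈ Finset.Icc 1 K, (k : ℝ) ^ (k - 1) * Real.exp (-(k : ℝ)) / (Nat.factorial k)

/-- `ξ₁ = ((K̂+1)/K̂)^{h(K̂)}`. -/
noncomputable def xi1 (Khat : ℕ) : ℝ :=
  (((Khat : ℝ) + 1) / (Khat : ℝ)) ^ (hfun Khat)

/-- `ξ₂ = ∏_{k=K+1}^{K̂} ((k+1)/k)^{k (k-1)^{k-2} e^{-k}/k!}`. -/
noncomputable def xi2 (K Khat : ℕ) : ℝ :=
  ∏ k ∈ Finset.Icc (K + 1) Khat,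
    (((k : ℝ) + 1) / (k : ℝ)) ^
      (((k * (k - 1) ^ (k - 2) : ℕ) : ℝ) * Real.exp (-(k : ℝ)) / (Nat.factorial k))

/-- `ξ₃ = ∏_{k=K+1}^{K̂} ((2k-1)/(2k-2))^{(k^{k-1} - k (k-1)^{k-2}) e^{-k}/k!}`. -/
noncomputable def xi3 (K Khat : ℕ) : ℝ :=
  ∏ k ∈ Finset.Icc (K + 1) Khat,
    ((2 * (k : ℝ) - 1) / (2 * (k : ℝ) - 2)) ^
      (((k ^ (k - 1) - k * (k - 1) ^ (k - 2) : ℕ) : ℝ) *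
        Real.exp (-(k : ℝ)) / (Nat.factorial k))

/-- `ξ₄ = P_K = ∏_{k=1}^K ∏_{(T,v) ∈ 𝓕_k} g(T,v)^{f_K(k)}`. -/
noncomputable def xi4 (K : ℕ) : ℝ :=
  ∏ k ∈ Finset.Icc 1 K,
    ∏ T : SimpleGraph (Fin k), ∏ v : Fin k,
      if T.IsTree then ((gval T v : ℝ)) ^ (fK K k) else 1

/-! ### Parent maps and Cayley's formula for forests -/

/-- The descendants of `v` under the parent map `p`, with `v` included: the vertex set of the
fringe subtree at `v`. -/
noncomputable def Dset {n : ℕ} (p : Fin n → Fin n) (v : Fin n) : Finset (Fin n) :=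
  Finset.univ.filter fun w => ∃ i : ℕ, p^[i] w = v

lemma mem_Dset {n : ℕ} {p : Fin n → Fin n} {v w : Fin n} :
    w ∈ Dset p v ↔ ∃ i : ℕ, p^[i] w = v := by simp [Dset]

lemma self_mem_Dset {n : ℕ} (p : Fin n → Fin n) (v : Fin n) : v ∈ Dset p v :=
  mem_Dset.2 ⟨0, rfl⟩

lemma mem_Dset_iff {n : ℕ} {p : Fin n → Fin n} {v w : Fin n} :
    w ∈ Dset p v ↔ w = v ∨ p w ∈ Dset p v := by
  simp only [mem_Dset]
  constructor
  · rintro ⟨i, hi⟩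
    cases i with
    | zero => exact Or.inl hi
    | succ i => exact Or.inr ⟨i, by simpa using hi⟩
  · rintro (h | ⟨i, hi⟩)
    · exact ⟨0, h⟩
    · exact ⟨i + 1, by simpa using hi⟩

lemma Dset_trans {n : ℕ} {p : Fin n → Fin n} {u v w : Fin n}
    (h1 : u ∈ Dset p v) (h2 : v ∈ Dset p w) : u ∈ Dset p w := by
  rw [mem_Dset] at *
  obtain ⟨i, hi⟩ := h1
  obtain ⟨j, hj⟩ := h2
  exact ⟨j + i, by rw [Function.iterate_add_apply, hi, hj]⟩

/-- Two vertices with a common descendant are comparable. -/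
lemma Dset_chain {n : ℕ} {p : Fin n → Fin n} {x v w : Fin n}
    (h1 : x ∈ Dset p v) (h2 : x ∈ Dset p w) : v ∈ Dset p w ∨ w ∈ Dset p v := by
  simp only [mem_Dset] at *
  obtain ⟨i, hi⟩ := h1
  obtain ⟨j, hj⟩ := h2
  rcases le_total i j with h | h
  · left
    exact ⟨j - i, by rw [← hi, ← Function.iterate_add_apply, Nat.sub_add_cancel h, hj]⟩
  · right
    exact ⟨i - j, by rw [← hj, ← Function.iterate_add_apply, Nat.sub_add_cancel h, hi]⟩

/-- A periodic point whose orbit reaches a fixed point is that fixed point. -/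
lemma eq_of_periodic {n : ℕ} {p : Fin n → Fin n} {x y : Fin n} {i j : ℕ}
    (hy : p y = y) (hi : p^[i] x = y) (hj : p^[j + 1] x = x) : x = y := by
  have h1 : p^[(j + 1) * i] x = x := by
    rw [Function.iterate_mul]
    exact Function.iterate_fixed hj i
  have h2 : p^[(j * i) + i] x = y := by
    rw [Function.iterate_add_apply, hi]
    exact Function.iterate_fixed hy _
  rw [show (j + 1) * i = j * i + i by ring] at h1
  exact h1.symm.trans h2

/-- If `p` and `p'` differ at most at `x`, then a vertex led into `R` by `p` is led by `p'` either
to `x` or into `R`. -/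
lemma reach_update {n : ℕ} {p p' : Fin n → Fin n} {x : Fin n}
    (h : ∀ w, w ≠ x → p w = p' w) (R : Finset (Fin n)) (i : ℕ) :
    ∀ y, p^[i] y ∈ R → y ∈ Dset p' x ∨ ∃ i, p'^[i] y ∈ R := by
  induction i with
  | zero => intro y hy; exact Or.inr ⟨0, hy⟩
  | succ i ih =>
    intro y hy
    by_cases hyx : y = x
    · left; rw [hyx]; exact self_mem_Dset _ _
    · rw [Function.iterate_succ_apply, h y hyx] at hy
      rcases ih _ hy with h' | ⟨j, hj⟩
      · exact Or.inl (mem_Dset_iff.2 (Or.inr h'))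
      · exact Or.inr ⟨j + 1, hj⟩

lemma Dset_subset_of_agree {n : ℕ} {p p' : Fin n → Fin n} {x : Fin n}
    (h : ∀ w, w ≠ x → p w = p' w) : Dset p x ⊆ Dset p' x := by
  intro y hy
  obtain ⟨i, hi⟩ := mem_Dset.1 hy
  rcases reach_update h {x} i y (by simpa using hi) with h' | ⟨j, hj⟩
  · exact h'
  · exact mem_Dset.2 ⟨j, by simpa using hj⟩

/-- `p` is a rooted forest on `Fin n` with root set `R`, given by its parent map, the roots
being fixed points. -/
def IsForest {n : ℕ} (R : Finset (Fin n)) (p : Fin n → Fin n) : Prop :=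
  (∀ x ∈ R, p x = x) ∧ ∀ x, ∃ i : ℕ, p^[i] x ∈ R

/-- The rooted forests on `Fin n` with root set `R`. -/
noncomputable def forests {n : ℕ} (R : Finset (Fin n)) : Finset (Fin n → Fin n) :=
  Finset.univ.filter (IsForest R)

lemma mem_forests {n : ℕ} {R : Finset (Fin n)} {p : Fin n → Fin n} :
    p ∈ forests R ↔ IsForest R p := by simp [forests]

/-- Cutting the edge above `x` turns a forest with root set `R` into one with root set
`R ∪ {x}` together with the former parent of `x`, which may be any vertex outside the tree
of `x`. -/
lemma card_forests_cut {n : ℕ} (R : Finset (Fin n)) (x : Fin n) (hx : x ∉ R) :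
    (forests R).card = ∑ p ∈ forests (insert x R), (n - (Dset p x).card) := by
  have key : ∀ p : Fin n → Fin n, n - (Dset p x).card = ((Dset p x)ᶜ).card := by
    intro p; rw [Finset.card_compl, Fintype.card_fin]
  simp only [key]
  rw [← Finset.card_sigma]
  refine Finset.card_nbij' (fun p => ⟨Function.update p x x, p x⟩)
    (fun a => Function.update a.1 x a.2) ?_ ?_ ?_ ?_
  · intro p hp
    have hp := mem_forests.1 hp
    simp only [Finset.coe_sigma, Set.mem_sigma_iff, Finset.mem_coe, Finset.mem_compl]
    have hag : ∀ w, w ≠ x → p w = Function.update p x x w := by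
      intro w hw; simp [hw]
    refine ⟨mem_forests.2 ⟨?_, ?_⟩, ?_⟩
    · intro y hy
      rcases Finset.mem_insert.1 hy with rfl | hy
      · simp
      · have : y ≠ x := fun h => hx (h ▸ hy)
        simp [this, hp.1 y hy]
    · intro y
      obtain ⟨i, hi⟩ := hp.2 y
      rcases reach_update hag R i y hi with h | ⟨j, hj⟩
      · obtain ⟨j, hj⟩ := mem_Dset.1 h
        exact ⟨j, by rw [hj]; simp⟩
      · exact ⟨j, Finset.mem_insert_of_mem hj⟩
    · intro h
      have h2 := Dset_subset_of_agree (fun w hw => (hag w hw).symm) h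
      obtain ⟨j, hj⟩ := mem_Dset.1 h2
      obtain ⟨i, hi⟩ := hp.2 x
      have := eq_of_periodic (p := p) (x := x) (j := j) (hp.1 _ hi) rfl (by simpa using hj)
      exact hx (this ▸ hi)
  · rintro ⟨p, u⟩ h
    simp only [Finset.coe_sigma, Set.mem_sigma_iff, Finset.mem_coe, Finset.mem_compl] at h
    obtain ⟨hp, hu⟩ := h
    have hp := mem_forests.1 hp
    have hag : ∀ w, w ≠ x → p w = Function.update p x u w := by
      intro w hw; simp [hw]
    refine mem_forests.2 ⟨?_, ?_⟩
    · intro y hy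
      have : y ≠ x := fun h => hx (h ▸ hy)
      simp [this, hp.1 y (Finset.mem_insert_of_mem hy)]
    · have hu' : ∃ i, (Function.update p x u)^[i] u ∈ R := by
        obtain ⟨i, hi⟩ := hp.2 u
        have hi' : p^[i] u ∈ R := by
          rcases Finset.mem_insert.1 hi with h | h
          · exact absurd (mem_Dset.2 ⟨i, h⟩) hu
          · exact h
        rcases reach_update hag R i u hi' with h | h
        · exact absurd (Dset_subset_of_agree (fun w hw => (hag w hw).symm) h) hu
        · exact h
      have hx' : ∀ y ∈ Dset (Function.update p x u) x,
          ∃ i, (Function.update p x u)^[i] y ∈ R := by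
        intro y hy
        obtain ⟨i, hi⟩ := mem_Dset.1 hy
        obtain ⟨j, hj⟩ := hu'
        refine ⟨j + 1 + i, ?_⟩
        rw [Function.iterate_add_apply, hi, Function.iterate_succ_apply]
        simpa using hj
      intro y
      obtain ⟨i, hi⟩ := hp.2 y
      rcases Finset.mem_insert.1 hi with h | h
      · exact hx' y (Dset_subset_of_agree hag (mem_Dset.2 ⟨i, h⟩))
      · rcases reach_update hag R i y h with h | h
        · exact hx' y h
        · exact h
  · intro p hp
    simp
  · rintro ⟨p, u⟩ h
    simp only [Finset.coe_sigma, Set.mem_sigma_iff, Finset.mem_coe, Finset.mem_compl] at h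
    have hp := (mem_forests.1 h.1).1 x (by simp)
    ext1
    · simp only [Function.update_idem]
      funext w
      by_cases hw : w = x
      · subst hw; simp [hp]
      · simp [hw]
    · simp

/-- The trees of a forest partition the vertex set. -/
lemma sum_card_Dset_roots {n : ℕ} {R : Finset (Fin n)} {p : Fin n → Fin n}
    (hp : IsForest R p) : ∑ y ∈ R, (Dset p y).card = n := by
  rw [← Finset.card_biUnion]
  · have : R.biUnion (Dset p) = Finset.univ := by
      ext w
      simp only [Finset.mem_biUnion, Finset.mem_univ, iff_true]
      obtain ⟨i, hi⟩ := hp.2 w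
      exact ⟨_, hi, mem_Dset.2 ⟨i, rfl⟩⟩
    rw [this, Finset.card_univ, Fintype.card_fin]
  · intro y hy z hz hyz
    rw [Function.onFun, Finset.disjoint_left]
    intro w h1 h2
    apply hyz
    rcases Dset_chain h1 h2 with h | h
    · obtain ⟨i, hi⟩ := mem_Dset.1 h
      rwa [Function.iterate_fixed (hp.1 y hy)] at hi
    · obtain ⟨i, hi⟩ := mem_Dset.1 h
      rw [Function.iterate_fixed (hp.1 z hz)] at hi
      exact hi.symm

/-- By symmetry the roots of a uniformly random forest have equidistributed tree sizes. -/
lemma sum_card_Dset_symm {n : ℕ} {R : Finset (Fin n)} {x y : Fin n} (hx : x ∈ R) (hy : y ∈ R) :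
    ∑ p ∈ forests R, (Dset p x).card = ∑ p ∈ forests R, (Dset p y).card := by
  let σ : Equiv.Perm (Fin n) := Equiv.swap x y
  have hσ : ∀ z, σ (σ z) = z := fun z => Equiv.swap_apply_self _ _ z
  have hit : ∀ (p : Fin n → Fin n) (i : ℕ) (z : Fin n),
      (fun w => σ (p (σ w)))^[i] z = σ (p^[i] (σ z)) := by
    intro p i
    induction i with
    | zero => intro z; simp [hσ]
    | succ i ih => intro z; rw [Function.iterate_succ_apply, ih]; simp [hσ]
  have hR : ∀ z, σ z ∈ R ↔ z ∈ R := by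
    intro z
    by_cases h1 : z = x
    · subst h1; simp [σ, hx, hy]
    · by_cases h2 : z = y
      · subst h2; simp [σ, hx, hy]
      · rw [show σ z = z from Equiv.swap_apply_of_ne_of_ne h1 h2]
  have hmem : ∀ p ∈ forests R, (fun w => σ (p (σ w))) ∈ forests R := by
    intro p hp
    have hp := mem_forests.1 hp
    refine mem_forests.2 ⟨fun z hz => ?_, fun z => ?_⟩
    · change σ (p (σ z)) = z
      rw [hp.1 _ ((hR z).2 hz), hσ]
    · obtain ⟨i, hi⟩ := hp.2 (σ z)
      exact ⟨i, by rw [hit]; exact (hR _).2 hi⟩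
  refine Finset.sum_nbij' (fun p => fun w => σ (p (σ w))) (fun p => fun w => σ (p (σ w)))
    hmem hmem ?_ ?_ ?_
  · intro p _; funext w; simp [hσ]
  · intro p _; funext w; simp [hσ]
  · intro p _
    refine Finset.card_nbij' σ σ ?_ ?_ (fun z _ => hσ z) (fun z _ => hσ z)
    · intro z hz
      obtain ⟨i, hi⟩ := mem_Dset.1 (Finset.mem_coe.1 hz)
      refine Finset.mem_coe.2 (mem_Dset.2 ⟨i, ?_⟩)
      rw [hit, hσ, hi]; simp [σ]
    · intro z hz
      obtain ⟨i, hi⟩ := mem_Dset.1 (Finset.mem_coe.1 hz)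
      refine Finset.mem_coe.2 (mem_Dset.2 ⟨i, ?_⟩)
      rw [hit] at hi
      have := congrArg σ hi
      rw [hσ] at this
      rw [this]; simp [σ]

/-- Cayley's formula for rooted forests with prescribed root set. -/
lemma card_forests {n : ℕ} (m : ℕ) : ∀ (R : Finset (Fin n)), R.Nonempty → R.card + m = n →
    (forests R).card * n = R.card * n ^ m := by
  induction m with
  | zero =>
    intro R hR hc
    have : R = Finset.univ := by
      apply Finset.eq_univ_of_card; simpa using hc
    subst this
    have : forests (Finset.univ : Finset (Fin n)) = {id} := by
      ext p
      rw [mem_forests, Finset.mem_singleton]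
      constructor
      · intro h; funext x; exact h.1 x (Finset.mem_univ _)
      · rintro rfl; exact ⟨fun _ _ => rfl, fun x => ⟨0, Finset.mem_univ _⟩⟩
    rw [this]; simp
  | succ m ih =>
    intro R hR hc
    obtain ⟨x, hx⟩ : ∃ x, x ∉ R := by
      by_contra h
      push Not at h
      have : R = Finset.univ := Finset.eq_univ_of_forall h
      rw [this] at hc; simp at hc
    have hj : (insert x R).card = R.card + 1 := Finset.card_insert_of_notMem hx
    have ih' := ih (insert x R) (Finset.insert_nonempty _ _) (by omega)
    have hcut := card_forests_cut R x hx
    have hle : ∀ p : Fin n → Fin n, (Dset p x).card ≤ n := fun p => by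
      simpa using Finset.card_le_univ (Dset p x)
    have hsum : (forests R).card + ∑ p ∈ forests (insert x R), (Dset p x).card
        = (forests (insert x R)).card * n := by
      rw [hcut, ← Finset.sum_add_distrib, Finset.sum_congr rfl
        (fun p _ => Nat.sub_add_cancel (hle p))]
      simp
    have hdbl : (insert x R).card * ∑ p ∈ forests (insert x R), (Dset p x).card
        = (forests (insert x R)).card * n := by
      calc _ = ∑ y ∈ insert x R, ∑ p ∈ forests (insert x R), (Dset p x).card := by simp
        _ = ∑ y ∈ insert x R, ∑ p ∈ forests (insert x R), (Dset p y).card :=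
          Finset.sum_congr rfl fun y hy =>
            sum_card_Dset_symm (Finset.mem_insert_self x R) hy
        _ = ∑ p ∈ forests (insert x R), ∑ y ∈ insert x R, (Dset p y).card := Finset.sum_comm
        _ = ∑ p ∈ forests (insert x R), n :=
          Finset.sum_congr rfl fun p hp => sum_card_Dset_roots (mem_forests.1 hp)
        _ = _ := by simp
    rw [hj] at ih' hdbl
    have : (R.card + 1) * ((forests R).card * n) = (R.card + 1) * (R.card * n ^ (m + 1)) := by
      have h1 : (R.card + 1) * (forests R).card = R.card * ((forests (insert x R)).card * n) := by
        have := congrArg (fun z => (R.card + 1) * z) hsum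
        simp only [mul_add] at this
        rw [hdbl] at this
        linarith
      calc _ = (R.card + 1) * (forests R).card * n := by ring
        _ = R.card * ((forests (insert x R)).card * n) * n := by rw [h1]
        _ = _ := by rw [ih']; ring
    exact Nat.eq_of_mul_eq_mul_left (Nat.succ_pos _) this

/-! ### Rooted trees and the fringe decomposition -/

/-- `p` is the parent map of a rooted tree with vertex set `M` and root `r`. The root and all
vertices outside `M` are fixed points. -/
structure IsRT {n : ℕ} (M : Finset (Fin n)) (r : Fin n) (p : Fin n → Fin n) : Prop where
  out : ∀ x, x ∉ M → p x = x
  maps : ∀ x ∈ M, p x ∈ M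
  root : p r = r
  lead : ∀ x ∈ M, x ∈ Dset p r

/-- The rooted trees with vertex set `M` and root `r`, given by their parent maps. -/
noncomputable def trees {n : ℕ} (M : Finset (Fin n)) (r : Fin n) : Finset (Fin n → Fin n) :=
  Finset.univ.filter (IsRT M r)

lemma mem_trees {n : ℕ} {M : Finset (Fin n)} {r : Fin n} {p : Fin n → Fin n} :
    p ∈ trees M r ↔ IsRT M r p := by simp [trees]

/-- If `p` and `q` agree on `A` away from `v`, and `p` stays in `A` until it meets `v`, then a
vertex of `A` led to `v` by `p` is led to `v` by `q`. -/
lemma reach_congr {n : ℕ} {p q : Fin n → Fin n} {v : Fin n} {A : Finset (Fin n)}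
    (h : ∀ w ∈ A, w ≠ v → p w = q w) (hA : ∀ w ∈ A, w ≠ v → p w ∈ A) (i : ℕ) :
    ∀ x ∈ A, p^[i] x = v → x ∈ Dset q v := by
  induction i with
  | zero => intro x _ hx; exact mem_Dset.2 ⟨0, hx⟩
  | succ i ih =>
    intro x hxA hx
    by_cases hxv : x = v
    · rw [hxv]; exact self_mem_Dset _ _
    · rw [Function.iterate_succ_apply] at hx
      have := ih _ (hA x hxA hxv) hx
      rw [h x hxA hxv] at this
      exact mem_Dset_iff.2 (Or.inr this)

lemma IsRT.Dset_subset {n : ℕ} {M : Finset (Fin n)} {r v : Fin n} {p : Fin n → Fin n}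
    (hp : IsRT M r p) (hv : v ∈ M) : Dset p v ⊆ M := by
  intro w hw
  by_contra hwM
  obtain ⟨i, hi⟩ := mem_Dset.1 hw
  rw [Function.iterate_fixed (hp.out w hwM)] at hi
  exact hwM (hi ▸ hv)

lemma IsRT.root_notMem {n : ℕ} {M : Finset (Fin n)} {r v : Fin n} {p : Fin n → Fin n}
    (hp : IsRT M r p) (hv : v ≠ r) : r ∉ Dset p v := by
  intro h
  obtain ⟨i, hi⟩ := mem_Dset.1 h
  rw [Function.iterate_fixed hp.root] at hi
  exact hv hi.symm

lemma IsRT.parent_notMem {n : ℕ} {M : Finset (Fin n)} {r v : Fin n} {p : Fin n → Fin n}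
    (hp : IsRT M r p) (hvM : v ∈ M) (hv : v ≠ r) : p v ∉ Dset p v := by
  intro h
  obtain ⟨j, hj⟩ := mem_Dset.1 h
  obtain ⟨i, hi⟩ := mem_Dset.1 (hp.lead v hvM)
  exact hv (eq_of_periodic (j := j) hp.root hi (by simpa using hj))

/-- The tree obtained by hanging `q`, a tree on `S` with root `v`, below the vertex `u` of the
tree `p'`. -/
noncomputable def glue {n : ℕ} (S : Finset (Fin n)) (v : Fin n) (q p' : Fin n → Fin n)
    (u : Fin n) : Fin n → Fin n :=
  fun x => if x = v then u else if x ∈ S then q x else p' x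

lemma glue_self {n : ℕ} (S : Finset (Fin n)) (v : Fin n) (q p' : Fin n → Fin n)
    (u : Fin n) : glue S v q p' u v = u := by simp [glue]

lemma glue_in {n : ℕ} {S : Finset (Fin n)} {v : Fin n} (q p' : Fin n → Fin n)
    (u : Fin n) {x : Fin n} (hx : x ∈ S) (hxv : x ≠ v) : glue S v q p' u x = q x := by
  simp [glue, hx, hxv]

lemma glue_out {n : ℕ} {S : Finset (Fin n)} {v : Fin n} (q p' : Fin n → Fin n)
    (u : Fin n) (hv : v ∈ S) {x : Fin n} (hx : x ∉ S) : glue S v q p' u x = p' x := by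
  have : x ≠ v := fun h => hx (h ▸ hv)
  simp [glue, hx, this]

/-- Hanging a tree on `S` below a vertex of a tree on `M \ S` gives a tree on `M` whose fringe
subtree at `v` has vertex set `S`. -/
lemma glue_spec {n : ℕ} {M S : Finset (Fin n)} {r v : Fin n} (hSM : S ⊆ M) (hr : r ∉ S)
    (hv : v ∈ S) {q p' : Fin n → Fin n} {u : Fin n} (hq : IsRT S v q)
    (hp : IsRT (M \ S) r p') (hu : u ∈ M \ S) :
    IsRT M r (glue S v q p' u) ∧ Dset (glue S v q p' u) v = S := by
  have houtS : ∀ x ∈ M \ S, glue S v q p' u x = p' x := fun x hx =>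
    glue_out q p' u hv (Finset.mem_sdiff.1 hx).2
  have hlead1 : ∀ x ∈ M \ S, x ∈ Dset (glue S v q p' u) r := by
    intro x hx
    obtain ⟨i, hi⟩ := mem_Dset.1 (hp.lead x hx)
    exact reach_congr (A := M \ S) (fun w hw _ => (houtS w hw).symm)
      (fun w hw _ => hp.maps w hw) i x hx hi
  have hlead2 : ∀ x ∈ S, x ∈ Dset (glue S v q p' u) v := by
    intro x hx
    obtain ⟨i, hi⟩ := mem_Dset.1 (hq.lead x hx)
    exact reach_congr (A := S) (fun w hw hwv => (glue_in q p' u hw hwv).symm)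
      (fun w hw _ => hq.maps w hw) i x hx hi
  have hvr : v ∈ Dset (glue S v q p' u) r := by
    rw [mem_Dset_iff, glue_self]
    exact Or.inr (hlead1 u hu)
  refine ⟨⟨?_, ?_, ?_, ?_⟩, ?_⟩
  · intro x hx
    rw [glue_out q p' u hv (fun h => hx (hSM h))]
    exact hp.out x (fun h => hx (Finset.mem_sdiff.1 h).1)
  · intro x hx
    by_cases hxS : x ∈ S
    · by_cases hxv : x = v
      · rw [hxv, glue_self]; exact (Finset.mem_sdiff.1 hu).1
      · rw [glue_in q p' u hxS hxv]; exact hSM (hq.maps x hxS)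
    · rw [glue_out q p' u hv hxS]
      exact (Finset.mem_sdiff.1 (hp.maps x (Finset.mem_sdiff.2 ⟨hx, hxS⟩))).1
  · rw [glue_out q p' u hv hr]; exact hp.root
  · intro x hx
    by_cases hxS : x ∈ S
    · exact Dset_trans (hlead2 x hxS) hvr
    · exact hlead1 x (Finset.mem_sdiff.2 ⟨hx, hxS⟩)
  · apply Finset.Subset.antisymm
    · intro x hx
      by_contra hxS
      obtain ⟨i, hi⟩ := mem_Dset.1 hx
      have hcl : ∀ y, y ∉ S → glue S v q p' u y ∉ S := by
        intro y hy
        rw [glue_out q p' u hv hy]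
        by_cases hyM : y ∈ M
        · exact (Finset.mem_sdiff.1 (hp.maps y (Finset.mem_sdiff.2 ⟨hyM, hy⟩))).2
        · rw [hp.out y (fun h => hyM (Finset.mem_sdiff.1 h).1)]; exact hy
      have : ∀ i : ℕ, (glue S v q p' u)^[i] x ∉ S := by
        intro i
        induction i with
        | zero => exact hxS
        | succ i ih => rw [Function.iterate_succ_apply']; exact hcl _ ih
      exact this i (by rw [hi]; exact hv)
    · exact hlead2

/-- Conversely, a tree whose fringe subtree at `v` has vertex set `S` splits into a tree on `S`,
a tree on `M \ S` and the point of attachment `p v`. -/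
lemma cut_spec {n : ℕ} {M S : Finset (Fin n)} {r v : Fin n} (hSM : S ⊆ M) (hr : r ∉ S)
    (hv : v ∈ S) {p : Fin n → Fin n} (hp : IsRT M r p) (hD : Dset p v = S) :
    IsRT S v (fun x => if x ∈ S ∧ x ≠ v then p x else x) ∧
    IsRT (M \ S) r (fun x => if x ∈ M \ S then p x else x) ∧ p v ∈ M \ S := by
  have hvr : v ≠ r := fun h => hr (h ▸ hv)
  have hin : ∀ x ∈ S, x ≠ v → p x ∈ S := by
    intro x hx hxv
    rw [← hD] at hx ⊢
    exact (mem_Dset_iff.1 hx).resolve_left hxv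
  have hout : ∀ x ∈ M \ S, p x ∈ M \ S := by
    intro x hx
    rw [Finset.mem_sdiff] at hx ⊢
    refine ⟨hp.maps x hx.1, fun h => hx.2 ?_⟩
    rw [← hD] at h ⊢
    exact mem_Dset_iff.2 (Or.inr h)
  refine ⟨⟨?_, ?_, ?_, ?_⟩, ⟨?_, ?_, ?_, ?_⟩, ?_⟩
  · intro x hx; simp [hx]
  · intro x hx
    by_cases hxv : x = v
    · simp [hxv, hv]
    · simp [hx, hxv, hin x hx hxv]
  · simp
  · intro x hx
    obtain ⟨i, hi⟩ := mem_Dset.1 (hD.symm ▸ hx : x ∈ Dset p v)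
    exact reach_congr (A := S) (fun w hw hwv => by simp [hw, hwv]) hin i x hx hi
  · intro x hx; exact if_neg hx
  · intro x hx
    rw [if_pos hx]; exact hout x hx
  · split_ifs
    · exact hp.root
    · rfl
  · intro x hx
    obtain ⟨i, hi⟩ := mem_Dset.1 (hp.lead x (Finset.mem_sdiff.1 hx).1)
    exact reach_congr (A := M \ S) (fun w hw _ => (if_pos hw).symm)
      (fun w hw _ => hout w hw) i x hx hi
  · rw [Finset.mem_sdiff]
    exact ⟨hp.maps v (hSM hv), fun h => hp.parent_notMem (hSM hv) hvr (hD.symm ▸ h)⟩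

/-- Gluing and cutting are inverse bijections; here `S` and `v` are fixed. -/
lemma sum_trees_fringe {n : ℕ} {M S : Finset (Fin n)} {r v : Fin n} (hSM : S ⊆ M) (hr : r ∉ S)
    (hv : v ∈ S) (H : (Fin n → Fin n) → ℝ) :
    ∑ p ∈ (trees M r).filter (fun p => Dset p v = S), H p =
      ∑ q ∈ trees S v, ∑ p' ∈ trees (M \ S) r, ∑ u ∈ M \ S, H (glue S v q p' u) := by
  simp only [← Finset.sum_product']
  symm
  refine Finset.sum_nbij' (fun a => glue S v a.1 a.2.1 a.2.2)
    (fun p => ((fun x => if x ∈ S ∧ x ≠ v then p x else x),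
      (fun x => if x ∈ M \ S then p x else x), p v)) ?_ ?_ ?_ ?_ ?_
  · rintro ⟨q, p', u⟩ h
    simp only [Finset.mem_product, mem_trees] at h
    have := glue_spec hSM hr hv h.1 h.2.1 h.2.2
    exact Finset.mem_filter.2 ⟨mem_trees.2 this.1, this.2⟩
  · intro p h
    rw [Finset.mem_filter, mem_trees] at h
    simp only [Finset.mem_product, mem_trees]
    exact cut_spec hSM hr hv h.1 h.2
  · rintro ⟨q, p', u⟩ h
    simp only [Finset.mem_product, mem_trees] at h
    obtain ⟨hq, hp, hu⟩ := h
    refine Prod.ext ?_ (Prod.ext ?_ ?_)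
    · funext x
      by_cases hx : x ∈ S ∧ x ≠ v
      · simp only [hx.1, hx.2, ne_eq, not_false_eq_true, and_self, if_true]
        exact glue_in q p' u hx.1 hx.2
      · simp only [hx, if_false]
        by_cases hxS : x ∈ S
        · have : x = v := by by_contra h; exact hx ⟨hxS, h⟩
          rw [this, hq.root]
        · exact (hq.out x hxS).symm
    · funext x
      change (if x ∈ M \ S then glue S v q p' u x else x) = p' x
      by_cases hx : x ∈ M \ S
      · rw [if_pos hx]; exact glue_out q p' u hv (Finset.mem_sdiff.1 hx).2
      · rw [if_neg hx]; exact (hp.out x hx).symm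
    · exact glue_self _ _ _ _ _
  · intro p h
    rw [Finset.mem_filter, mem_trees] at h
    funext x
    by_cases hxS : x ∈ S
    · by_cases hxv : x = v
      · rw [hxv]; exact glue_self _ _ _ _ _
      · rw [glue_in _ _ _ hxS hxv]; exact if_pos ⟨hxS, hxv⟩
    · rw [glue_out _ _ _ hv hxS]
      by_cases hxM : x ∈ M
      · exact if_pos (Finset.mem_sdiff.2 ⟨hxM, hxS⟩)
      · rw [h.1.out x hxM]
        exact if_neg (fun h => hxM (Finset.mem_sdiff.1 h).1)
  · intro a _; rfl

/-- Fringe decomposition: summing over all trees on `M` and all non-root vertices `v` with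
fringe subtree of size `k` is the same as summing over the fringe subtree, the remaining
tree and the point of attachment. -/
lemma sum_fringe {n : ℕ} {M : Finset (Fin n)} {r : Fin n} (k : ℕ)
    (H : (Fin n → Fin n) → Fin n → ℝ) :
    ∑ p ∈ trees M r, ∑ v ∈ (M.erase r).filter (fun v => (Dset p v).card = k), H p v =
      ∑ S ∈ (M.erase r).powersetCard k, ∑ v ∈ S, ∑ q ∈ trees S v, ∑ p' ∈ trees (M \ S) r,
        ∑ u ∈ M \ S, H (glue S v q p' u) v := by
  have h1 : ∀ S ∈ (M.erase r).powersetCard k, ∀ v ∈ S,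
      (∑ q ∈ trees S v, ∑ p' ∈ trees (M \ S) r, ∑ u ∈ M \ S, H (glue S v q p' u) v) =
        ∑ p ∈ trees M r, if Dset p v = S then H p v else 0 := by
    intro S hS v hv
    have hS' := (Finset.mem_powersetCard.1 hS).1
    rw [← Finset.sum_filter]
    exact (sum_trees_fringe (hS'.trans (Finset.erase_subset _ _))
      (fun h => (Finset.mem_erase.1 (hS' h)).1 rfl) hv (fun p => H p v)).symm
  rw [Finset.sum_congr rfl fun S hS => Finset.sum_congr rfl fun v hv => h1 S hS v hv]
  have h2 : ∀ S ∈ (M.erase r).powersetCard k,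
      (∑ v ∈ S, ∑ p ∈ trees M r, if Dset p v = S then H p v else 0) =
      ∑ p ∈ trees M r, ∑ v ∈ M.erase r, if Dset p v = S then H p v else 0 := by
    intro S hS
    rw [Finset.sum_comm]
    refine Finset.sum_congr rfl fun p hp => ?_
    refine Finset.sum_subset (Finset.mem_powersetCard.1 hS).1 fun v _ hv => ?_
    rw [if_neg]
    intro h
    exact hv (h ▸ self_mem_Dset p v)
  rw [Finset.sum_congr rfl h2, Finset.sum_comm]
  refine Finset.sum_congr rfl fun p hp => ?_
  rw [Finset.sum_comm, Finset.sum_filter]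
  refine Finset.sum_congr rfl fun v hv => ?_
  have hp := mem_trees.1 hp
  have hv' := Finset.mem_erase.1 hv
  rw [Finset.sum_ite_eq]
  refine if_congr ?_ rfl rfl
  rw [Finset.mem_powersetCard]
  refine ⟨fun h => ⟨fun w hw => Finset.mem_erase.2 ⟨?_, hp.Dset_subset hv'.2 hw⟩, h⟩,
    fun h => h.2⟩
  rintro rfl
  exact hp.root_notMem hv'.1 hw

/-! ### First moments of fringe statistics -/

lemma IsRT.Dset_root {n : ℕ} {M : Finset (Fin n)} {r : Fin n} {p : Fin n → Fin n}
    (hp : IsRT M r p) (hr : r ∈ M) : Dset p r = M :=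
  Finset.Subset.antisymm (hp.Dset_subset hr) hp.lead

/-- The parent map `q` carried to the range of the embedding `e`, with fixed points elsewhere. -/
noncomputable def push {k n : ℕ} (e : Fin k ↪ Fin n) (q : Fin k → Fin k) : Fin n → Fin n :=
  Function.extend e (fun x => e (q x)) id

lemma push_apply {k n : ℕ} (e : Fin k ↪ Fin n) (q : Fin k → Fin k) (x : Fin k) :
    push e q (e x) = e (q x) := e.injective.extend_apply _ _ _

lemma push_out {k n : ℕ} (e : Fin k ↪ Fin n) (q : Fin k → Fin k) (y : Fin n)
    (hy : y ∉ Finset.univ.map e) : push e q y = y := by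
  rw [push, Function.extend_apply']
  · rfl
  · rintro ⟨x, rfl⟩; simp at hy

lemma push_iterate {k n : ℕ} (e : Fin k ↪ Fin n) (q : Fin k → Fin k) (i : ℕ) :
    ∀ x : Fin k, (push e q)^[i] (e x) = e (q^[i] x) := by
  induction i with
  | zero => intro x; rfl
  | succ i ih => intro x; rw [Function.iterate_succ_apply, push_apply, ih]; rfl

lemma Dset_push {k n : ℕ} (e : Fin k ↪ Fin n) (q : Fin k → Fin k) (v : Fin k) :
    Dset (push e q) (e v) = (Dset q v).map e := by
  ext y
  by_cases hy : y ∈ Finset.univ.map e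
  · obtain ⟨x, -, rfl⟩ := Finset.mem_map.1 hy
    simp [mem_Dset, push_iterate]
  · constructor
    · intro h
      obtain ⟨i, hi⟩ := mem_Dset.1 h
      rw [Function.iterate_fixed (push_out e q y hy)] at hi
      simp [hi] at hy
    · intro h
      exact absurd (Finset.map_subset_map.2 (Finset.subset_univ _) h) hy

/-- Relabelling along `e` is a bijection between the trees on `Fin k` and those on the range
of `e`. -/
lemma sum_transport {k n : ℕ} (e : Fin k ↪ Fin n) (a : Fin k) (G : (Fin n → Fin n) → ℝ) :
    ∑ p ∈ trees (Finset.univ.map e) (e a), G p = ∑ q ∈ trees Finset.univ a, G (push e q) := by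
  symm
  refine Finset.sum_nbij (push e) ?_ ?_ ?_ (fun _ _ => rfl)
  · intro q hq
    have hq := mem_trees.1 hq
    refine mem_trees.2 ⟨push_out e q, ?_, ?_, ?_⟩
    · intro y hy
      obtain ⟨x, -, rfl⟩ := Finset.mem_map.1 hy
      rw [push_apply]; simp
    · rw [push_apply, hq.root]
    · intro y hy
      obtain ⟨x, -, rfl⟩ := Finset.mem_map.1 hy
      rw [Dset_push]
      exact Finset.mem_map_of_mem e (hq.lead x (Finset.mem_univ _))
  · intro q _ q' _ h
    funext x
    have := congrFun h (e x)
    rw [push_apply, push_apply] at this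
    exact e.injective this
  · intro p hp
    have hp := mem_trees.1 (Finset.mem_coe.1 hp)
    have : ∀ x : Fin k, ∃ y : Fin k, e y = p (e x) := by
      intro x
      obtain ⟨y, -, hy⟩ := Finset.mem_map.1 (hp.maps (e x) (by simp))
      exact ⟨y, hy⟩
    choose q hq using this
    have hpq : push e q = p := by
      funext y
      by_cases hy : y ∈ Finset.univ.map e
      · obtain ⟨x, -, rfl⟩ := Finset.mem_map.1 hy
        rw [push_apply, hq]
      · rw [push_out e q y hy, hp.out y hy]
    refine ⟨q, Finset.mem_coe.2 (mem_trees.2 ⟨fun x hx => absurd (Finset.mem_univ x) hx,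
      fun _ _ => Finset.mem_univ _, ?_, ?_⟩), hpq⟩
    · apply e.injective
      rw [hq, hp.root]
    · intro x _
      have := hp.lead (e x) (by simp)
      rw [← hpq, Dset_push] at this
      simpa using this

/-- `F` assigns a real number to a vertex of a parent map in a way that depends only on the
isomorphism class of the fringe subtree at this vertex. -/
def FringeInv (F : (n : ℕ) → (Fin n → Fin n) → Fin n → ℝ) : Prop :=
  ∀ (k n : ℕ) (e : Fin k ↪ Fin n) (q : Fin k → Fin k) (p : Fin n → Fin n) (v : Fin k),
    (∀ x ∈ Dset q v, x ≠ v → p (e x) = e (q x)) → Dset p (e v) = (Dset q v).map e →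
      F n p (e v) = F k q v

/-- The sum of `F` over the roots of all rooted labelled trees on `k` vertices. -/
noncomputable def treeSum (F : (n : ℕ) → (Fin n → Fin n) → Fin n → ℝ) (k : ℕ) : ℝ :=
  ∑ v : Fin k, ∑ q ∈ trees Finset.univ v, F k q v

lemma exists_emb {n : ℕ} (S : Finset (Fin n)) :
    ∃ e : Fin S.card ↪ Fin n, Finset.univ.map e = S :=
  ⟨(S.orderEmbOfFin rfl).toEmbedding, by simp⟩

lemma sum_trees_eq_treeSum {F : (n : ℕ) → (Fin n → Fin n) → Fin n → ℝ} (hF : FringeInv F)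
    {n : ℕ} (S : Finset (Fin n)) :
    ∑ v ∈ S, ∑ q ∈ trees S v, F n q v = treeSum F S.card := by
  obtain ⟨e, he⟩ := exists_emb S
  have : ∑ v ∈ S, ∑ q ∈ trees S v, F n q v =
      ∑ v ∈ Finset.univ.map e, ∑ q ∈ trees (Finset.univ.map e) v, F n q v := by rw [he]
  rw [this, Finset.sum_map, treeSum]
  refine Finset.sum_congr rfl fun v _ => ?_
  rw [sum_transport]
  refine Finset.sum_congr rfl fun q _ => ?_
  exact hF _ _ e q _ v (fun x _ _ => push_apply e q x) (Dset_push e q v)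

/-- Cayley's formula. -/
lemma card_trees {n : ℕ} {S : Finset (Fin n)} {r : Fin n} (hr : r ∈ S) :
    (trees S r).card = S.card ^ (S.card - 2) := by
  obtain ⟨e, he⟩ := exists_emb S
  obtain ⟨a, -, ha⟩ := Finset.mem_map.1 (he.symm ▸ hr : r ∈ Finset.univ.map e)
  have h1 : (trees S r).card = (trees (Finset.univ : Finset (Fin S.card)) a).card := by
    have := sum_transport e a (fun _ => (1 : ℝ))
    rw [he, ha] at this
    simpa using this
  have h2 : trees (Finset.univ : Finset (Fin S.card)) a = forests {a} := by
    ext p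
    rw [mem_trees, mem_forests]
    constructor
    · intro h
      refine ⟨fun x hx => ?_, fun x => ?_⟩
      · rw [Finset.mem_singleton.1 hx]; exact h.root
      · obtain ⟨i, hi⟩ := mem_Dset.1 (h.lead x (Finset.mem_univ _))
        exact ⟨i, by simp [hi]⟩
    · intro h
      refine ⟨fun x hx => absurd (Finset.mem_univ x) hx, fun _ _ => Finset.mem_univ _,
        h.1 a (by simp), fun x _ => ?_⟩
      obtain ⟨i, hi⟩ := h.2 x
      exact mem_Dset.2 ⟨i, by simpa using hi⟩
  have hpos : 0 < S.card := Finset.card_pos.2 ⟨r, hr⟩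
  have h3 := card_forests (n := S.card) (S.card - 1) {a} (by simp)
    (by rw [Finset.card_singleton]; omega)
  rw [h1, h2]
  rw [Finset.card_singleton, one_mul] at h3
  apply Nat.eq_of_mul_eq_mul_right hpos
  rw [h3]
  rcases Nat.lt_or_ge S.card 2 with h | h
  · have : S.card = 1 := by omega
    simp [this]
  · rw [← pow_succ]; congr 1; omega

/-- Hanging a tree below another one does not change an invariant functional at its root. -/
lemma glue_inv {F : (n : ℕ) → (Fin n → Fin n) → Fin n → ℝ} (hF : FringeInv F)
    {n : ℕ} {M S : Finset (Fin n)} {r v : Fin n} (hSM : S ⊆ M) (hr : r ∉ S)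
    (hv : v ∈ S) {q p' : Fin n → Fin n} {u : Fin n} (hq : IsRT S v q)
    (hp : IsRT (M \ S) r p') (hu : u ∈ M \ S) :
    F n (glue S v q p' u) v = F n q v := by
  have hD := hq.Dset_root hv
  refine hF n n (Function.Embedding.refl _) q _ v ?_ ?_
  · intro x hx hxv
    rw [hD] at hx
    exact glue_in q p' u hx hxv
  · change Dset (glue S v q p' u) v = _
    rw [(glue_spec hSM hr hv hq hp hu).2, hD, Finset.map_refl]

/-- Evaluation of a sum over fringe decompositions whose summand is `F` of the fringe tree
times a weight `c` that depends on the rest of the data. -/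
lemma sum_fringe_eval {F : (n : ℕ) → (Fin n → Fin n) → Fin n → ℝ} (hF : FringeInv F)
    {n : ℕ} {M : Finset (Fin n)} {r : Fin n} (hr : r ∈ M) (k : ℕ)
    (c : ℝ) :
    ∑ S ∈ (M.erase r).powersetCard k, ∑ v ∈ S, ∑ q ∈ trees S v, F n q v * c =
      ((M.card - 1).choose k : ℝ) * treeSum F k * c := by
  have : ∀ S ∈ (M.erase r).powersetCard k,
      ∑ v ∈ S, ∑ q ∈ trees S v, F n q v * c = treeSum F k * c := by
    intro S hS
    simp only [← Finset.sum_mul]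
    rw [sum_trees_eq_treeSum hF, (Finset.mem_powersetCard.1 hS).2]
  rw [Finset.sum_congr rfl this, Finset.sum_const, Finset.card_powersetCard,
    Finset.card_erase_of_mem hr, nsmul_eq_mul, mul_assoc]

/-- The total of `F` over the non-root vertices of `p` with fringe subtree of size `k`. -/
noncomputable def fringeSum (F : (n : ℕ) → (Fin n → Fin n) → Fin n → ℝ) (k : ℕ) {n : ℕ}
    (M : Finset (Fin n)) (r : Fin n) (p : Fin n → Fin n) : ℝ :=
  ∑ v ∈ (M.erase r).filter (fun v => (Dset p v).card = k), F n p v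

lemma fringe_data {n : ℕ} {M S : Finset (Fin n)} {r : Fin n} {k : ℕ} (hr : r ∈ M)
    (hS : S ∈ (M.erase r).powersetCard k) :
    S ⊆ M ∧ r ∉ S ∧ r ∈ M \ S ∧ (M \ S).card = M.card - k := by
  rw [Finset.mem_powersetCard] at hS
  have h1 : S ⊆ M := hS.1.trans (Finset.erase_subset _ _)
  have h2 : r ∉ S := fun h => (Finset.mem_erase.1 (hS.1 h)).1 rfl
  exact ⟨h1, h2, Finset.mem_sdiff.2 ⟨hr, h2⟩, by
    rw [Finset.card_sdiff_of_subset h1, hS.2]⟩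

/-- The total of `fringeSum` over all trees on `M` with root `r`: choose the vertex set of the
fringe subtree, the fringe subtree itself, the remaining tree and the point of attachment. -/
lemma first_moment {F : (n : ℕ) → (Fin n → Fin n) → Fin n → ℝ} (hF : FringeInv F)
    {n : ℕ} {M : Finset (Fin n)} {r : Fin n} (hr : r ∈ M) (k : ℕ) :
    ∑ p ∈ trees M r, fringeSum F k M r p =
      ((M.card - 1).choose k : ℝ) * treeSum F k *
        (((M.card - k : ℕ) : ℝ) ^ (M.card - k - 2) * ((M.card - k : ℕ) : ℝ)) := by
  unfold fringeSum
  rw [sum_fringe, ← sum_fringe_eval hF hr]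
  refine Finset.sum_congr rfl fun S hS => Finset.sum_congr rfl fun v hv =>
    Finset.sum_congr rfl fun q hq => ?_
  obtain ⟨h1, h2, h3, h4⟩ := fringe_data hr hS
  have : ∀ p' ∈ trees (M \ S) r, ∀ u ∈ M \ S, F n (glue S v q p' u) v = F n q v :=
    fun p' hp' u hu => glue_inv hF h1 h2 hv (mem_trees.1 hq) (mem_trees.1 hp') hu
  rw [Finset.sum_congr rfl fun p' hp' => Finset.sum_congr rfl (this p' hp')]
  simp only [Finset.sum_const, card_trees h3, h4, nsmul_eq_mul]
  push_cast
  ring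

/-- The same sum restricted to the children of the root. -/
lemma first_moment_children {F : (n : ℕ) → (Fin n → Fin n) → Fin n → ℝ} (hF : FringeInv F)
    {n : ℕ} {M : Finset (Fin n)} {r : Fin n} (hr : r ∈ M) (k : ℕ) :
    ∑ p ∈ trees M r, ∑ v ∈ (M.erase r).filter (fun v => (Dset p v).card = k),
        (if p v = r then F n p v else 0) =
      ((M.card - 1).choose k : ℝ) * treeSum F k * ((M.card - k : ℕ) : ℝ) ^ (M.card - k - 2) := by
  rw [sum_fringe, ← sum_fringe_eval hF hr]
  refine Finset.sum_congr rfl fun S hS => Finset.sum_congr rfl fun v hv =>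
    Finset.sum_congr rfl fun q hq => ?_
  obtain ⟨h1, h2, h3, h4⟩ := fringe_data hr hS
  have : ∀ p' ∈ trees (M \ S) r, ∀ u ∈ M \ S,
      (if glue S v q p' u v = r then F n (glue S v q p' u) v else 0) =
        if u = r then F n q v else 0 := by
    intro p' hp' u hu
    rw [glue_self, glue_inv hF h1 h2 hv (mem_trees.1 hq) (mem_trees.1 hp') hu]
  rw [Finset.sum_congr rfl fun p' hp' => Finset.sum_congr rfl (this p' hp')]
  simp only [Finset.sum_ite_eq', h3, if_true, Finset.sum_const, card_trees h3, h4, nsmul_eq_mul]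
  push_cast
  ring

/-! ### Second moments of fringe statistics -/

lemma IsRT.antisymm {n : ℕ} {M : Finset (Fin n)} {r v w : Fin n} {p : Fin n → Fin n}
    (hp : IsRT M r p) (hv : v ∈ M) (hvr : v ≠ r) (h1 : v ∈ Dset p w) (h2 : w ∈ Dset p v) :
    v = w := by
  by_contra hne
  have h3 : p v ∈ Dset p w := (mem_Dset_iff.1 h1).resolve_left hne
  exact hp.parent_notMem hv hvr (Dset_trans h3 h2)

lemma Dset_subset_Dset {n : ℕ} {p : Fin n → Fin n} {v w : Fin n} (h : v ∈ Dset p w) :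
    Dset p v ⊆ Dset p w := fun _ hx => Dset_trans hx h

/-- Distinct fringe subtrees of equal size are disjoint, so each one of size `k` in a glued tree
is either the one that was attached or a fringe subtree of the remaining tree. -/
lemma fringeSum_glue_le {F : (n : ℕ) → (Fin n → Fin n) → Fin n → ℝ} (hF : FringeInv F)
    (hF0 : ∀ n p v, 0 ≤ F n p v) {n k : ℕ} {M S : Finset (Fin n)} {r v : Fin n} (hr : r ∈ M)
    (hS : S ∈ (M.erase r).powersetCard k) (hv : v ∈ S) {q p' : Fin n → Fin n} {u : Fin n}
    (hq : IsRT S v q) (hp : IsRT (M \ S) r p') (hu : u ∈ M \ S) :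
    fringeSum F k M r (glue S v q p' u) ≤ F n q v + fringeSum F k (M \ S) r p' := by
  obtain ⟨h1, h2, h3, h4⟩ := fringe_data hr hS
  have hSk := (Finset.mem_powersetCard.1 hS).2
  obtain ⟨hg, hgD⟩ := glue_spec h1 h2 hv hq hp hu
  set g := glue S v q p' u with hgdef
  have hvr : v ≠ r := fun h => h2 (h ▸ hv)
  have key : ∀ w ∈ (M.erase r).filter (fun w => (Dset g w).card = k), w ≠ v →
      w ∈ ((M \ S).erase r).filter (fun w => (Dset p' w).card = k) ∧ F n g w = F n p' w := by
    intro w hw hwv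
    obtain ⟨hw1, hw2⟩ := Finset.mem_filter.1 hw
    obtain ⟨hwr, hwM⟩ := Finset.mem_erase.1 hw1
    have hdisj : ∀ x ∈ Dset g w, x ∉ S := by
      intro x hx hxS
      rw [← hgD] at hxS
      have hcard : (Dset g v).card = (Dset g w).card := by rw [hgD, hw2, hSk]
      have heq : Dset g v = Dset g w := by
        rcases Dset_chain hxS hx with h | h
        · exact Finset.eq_of_subset_of_card_le (Dset_subset_Dset h) hcard.ge
        · exact (Finset.eq_of_subset_of_card_le (Dset_subset_Dset h) hcard.le).symm
      exact hwv (hg.antisymm (h1 hv) hvr (heq ▸ self_mem_Dset g v)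
        (heq ▸ self_mem_Dset g w)).symm
    have hwS : w ∈ M \ S := Finset.mem_sdiff.2 ⟨hwM, hdisj w (self_mem_Dset g w)⟩
    have hag : ∀ x, x ∉ S → g x = p' x := fun x hx => glue_out q p' u hv hx
    have hD : Dset g w = Dset p' w := by
      apply Finset.Subset.antisymm
      · intro x hx
        obtain ⟨i, hi⟩ := mem_Dset.1 hx
        exact reach_congr (A := Dset g w) (fun y hy _ => hag y (hdisj y hy))
          (fun y hy hyw => (mem_Dset_iff.1 hy).resolve_left hyw) i x hx hi
      · intro x hx
        have hxM := hp.Dset_subset hwS hx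
        obtain ⟨i, hi⟩ := mem_Dset.1 hx
        exact reach_congr (A := M \ S)
          (fun y hy _ => (hag y (Finset.mem_sdiff.1 hy).2).symm)
          (fun y hy _ => hp.maps y hy) i x hxM hi
    refine ⟨Finset.mem_filter.2 ⟨Finset.mem_erase.2 ⟨hwr, hwS⟩, by rw [← hD]; exact hw2⟩, ?_⟩
    refine hF n n (Function.Embedding.refl _) p' g w ?_ ?_
    · intro x hx _
      rw [← hD] at hx
      exact hag x (hdisj x hx)
    · rw [Finset.map_refl]; exact hD
  unfold fringeSum
  have hvmem : v ∈ (M.erase r).filter (fun w => (Dset g w).card = k) := by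
    refine Finset.mem_filter.2 ⟨Finset.mem_erase.2 ⟨hvr, h1 hv⟩, by rw [hgD, hSk]⟩
  rw [← Finset.add_sum_erase _ _ hvmem]
  have e1 : F n g v = F n q v := glue_inv hF h1 h2 hv hq hp hu
  rw [e1]
  gcongr
  calc _ = ∑ w ∈ ((M.erase r).filter (fun w => (Dset g w).card = k)).erase v, F n p' w :=
        Finset.sum_congr rfl fun w hw =>
          (key w (Finset.mem_of_mem_erase hw) (Finset.ne_of_mem_erase hw)).2
    _ ≤ _ := Finset.sum_le_sum_of_subset_of_nonneg
        (fun w hw => (key w (Finset.mem_of_mem_erase hw) (Finset.ne_of_mem_erase hw)).1)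
        (fun _ _ _ => hF0 _ _ _)

lemma fringeSum_nonneg {F : (n : ℕ) → (Fin n → Fin n) → Fin n → ℝ}
    (hF0 : ∀ n p v, 0 ≤ F n p v) {n : ℕ} (k : ℕ) (M : Finset (Fin n)) (r : Fin n)
    (p : Fin n → Fin n) : 0 ≤ fringeSum F k M r p :=
  Finset.sum_nonneg fun _ _ => hF0 _ _ _

/-- One factor of the square is expanded over its fringe subtrees. Once such a subtree is cut
off, the other factor is at most `B` plus the fringe sum of the remaining tree, which the first
moment evaluates. -/
lemma second_moment {F : (n : ℕ) → (Fin n → Fin n) → Fin n → ℝ} (hF : FringeInv F)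
    (hF0 : ∀ n p v, 0 ≤ F n p v) {B : ℝ} (hB : ∀ n p v, F n p v ≤ B)
    {n : ℕ} {M : Finset (Fin n)} {r : Fin n} (hr : r ∈ M) (k : ℕ) :
    ∑ p ∈ trees M r, fringeSum F k M r p ^ 2 ≤
      ((M.card - 1).choose k : ℝ) * treeSum F k *
        ((M.card - k : ℕ) : ℝ) * (B * ((M.card - k : ℕ) : ℝ) ^ (M.card - k - 2) +
         ((M.card - k - 1).choose k : ℝ) * treeSum F k *
          (((M.card - k - k : ℕ) : ℝ) ^ (M.card - k - k - 2) * ((M.card - k - k : ℕ) : ℝ))) := by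
  have h0 : ∀ p ∈ trees M r, fringeSum F k M r p ^ 2 =
      ∑ v ∈ (M.erase r).filter (fun v => (Dset p v).card = k),
        F n p v * fringeSum F k M r p := by
    intro p _
    rw [← Finset.sum_mul, sq]; rfl
  rw [Finset.sum_congr rfl h0, sum_fringe, mul_assoc, ← sum_fringe_eval hF hr]
  refine Finset.sum_le_sum fun S hS => Finset.sum_le_sum fun v hv =>
    Finset.sum_le_sum fun q hq => ?_
  obtain ⟨h1, h2, h3, h4⟩ := fringe_data hr hS
  have hq := mem_trees.1 hq
  calc ∑ p' ∈ trees (M \ S) r, ∑ u ∈ M \ S,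
        F n (glue S v q p' u) v * fringeSum F k M r (glue S v q p' u)
      ≤ ∑ p' ∈ trees (M \ S) r, ∑ u ∈ M \ S, F n q v * (B + fringeSum F k (M \ S) r p') := by
        refine Finset.sum_le_sum fun p' hp' => Finset.sum_le_sum fun u hu => ?_
        have hp' := mem_trees.1 hp'
        rw [glue_inv hF h1 h2 hv hq hp' hu]
        refine mul_le_mul_of_nonneg_left ?_ (hF0 _ _ _)
        exact (fringeSum_glue_le hF hF0 hr hS hv hq hp' hu).trans
          (by gcongr; exact hB _ _ _)
    _ = _ := by
        simp only [Finset.sum_const, nsmul_eq_mul, ← Finset.mul_sum, Finset.sum_add_distrib,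
          first_moment hF h3, card_trees h3, h4]
        push_cast
        ring

/-! ### Concentration of fringe statistics -/

/-- The coefficient of `treeSum F k` in the first moment of the fringe sums of size `k`, divided
by `n ^ (n - 2) * n`: in a uniformly random tree on `n` vertices with given root, `fringeSum F k`
has mean `fringeRatio k n * treeSum F k * n`. -/
noncomputable def fringeRatio (k n : ℕ) : ℝ :=
  ((n - 1).choose k : ℝ) * (((n - k : ℕ) : ℝ) ^ (n - k - 2) * ((n - k : ℕ) : ℝ)) /
    ((n : ℝ) ^ (n - 2) * n)

lemma tendsto_choose_div_pow (k : ℕ) :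
    Tendsto (fun n : ℕ => ((n - 1).choose k : ℝ) / (n : ℝ) ^ k) atTop
      (𝓝 (1 / (k.factorial : ℝ))) := by
  have h1 : Tendsto (fun n : ℕ => (n.choose k : ℝ) / ((n : ℝ) ^ k / (k.factorial : ℝ))) atTop
      (𝓝 1) := by
    have := (isEquivalent_choose k)
    rw [Asymptotics.isEquivalent_iff_tendsto_one] at this
    · exact this
    · filter_upwards [eventually_gt_atTop 0] with n hn
      positivity
  have h2 := h1.comp (tendsto_sub_atTop_nat 1)
  have h3 : Tendsto (fun n : ℕ => (((n - 1 : ℕ) : ℝ) / (n : ℝ)) ^ k) atTop (𝓝 1) := by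
    have : Tendsto (fun n : ℕ => ((n - 1 : ℕ) : ℝ) / (n : ℝ)) atTop (𝓝 1) := by
      have h := tendsto_one_div_atTop_nhds_zero_nat (𝕜 := ℝ)
      have h' := h.const_sub 1
      rw [sub_zero] at h'
      refine h'.congr' ?_
      filter_upwards [eventually_gt_atTop 0] with n hn
      rw [Nat.cast_sub hn]
      field_simp
      simp
    simpa using this.pow k
  have h4 := (h2.mul h3).div_const (k.factorial : ℝ)
  rw [mul_one] at h4
  refine h4.congr' ?_
  filter_upwards [eventually_gt_atTop 1] with n hn
  have : ((n - 1 : ℕ) : ℝ) ≠ 0 := by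
    have : n - 1 ≠ 0 := by omega
    exact_mod_cast this
  have hn0 : (n : ℝ) ≠ 0 := by
    have : n ≠ 0 := by omega
    exact_mod_cast this
  simp only [Function.comp, div_pow]
  field_simp

lemma tendsto_fringeRatio (k : ℕ) :
    Tendsto (fringeRatio k) atTop (𝓝 (Real.exp (-(k : ℝ)) / (k.factorial : ℝ))) := by
  have h1 := tendsto_choose_div_pow k
  have h2 : Tendsto (fun n : ℕ => (1 + (-(k : ℝ)) / n) ^ n) atTop (𝓝 (Real.exp (-(k : ℝ)))) :=
    Real.tendsto_one_add_div_pow_exp _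
  have h3 : Tendsto (fun n : ℕ => (1 + (-(k : ℝ)) / n) ^ (k + 1)) atTop (𝓝 1) := by
    have h := (tendsto_const_div_atTop_nhds_zero_nat (-(k : ℝ))).const_add 1
    simpa using h.pow (k + 1)
  have h4 := h1.mul (h2.div h3 one_ne_zero)
  rw [div_one, one_div_mul_eq_div] at h4
  refine h4.congr' ?_
  filter_upwards [eventually_gt_atTop (k + 2)] with n hn
  obtain ⟨m, rfl⟩ : ∃ m, n = m + k + 2 := ⟨n - k - 2, by omega⟩
  have e1 : m + k + 2 - k = m + 2 := by omega
  have e2 : m + k + 2 - 2 = m + k := by omega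
  have e3 : m + 2 - 2 = m := by omega
  simp only [fringeRatio, Pi.div_apply, e1, e2, e3]
  have hn0 : ((m + k + 2 : ℕ) : ℝ) ≠ 0 := by positivity
  have e4 : (1 + -(k : ℝ) / ((m + k + 2 : ℕ) : ℝ)) = ((m + 2 : ℕ) : ℝ) / ((m + k + 2 : ℕ) : ℝ) := by
    field_simp; push_cast; ring
  have hm0 : ((m + 2 : ℕ) : ℝ) ≠ 0 := by positivity
  rw [e4]
  generalize ((m + 2 : ℕ) : ℝ) = a at *
  generalize ((m + k + 2 : ℕ) : ℝ) = b at *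
  rw [div_pow, div_pow]
  field_simp
  ring

/-- Concentration of fringe subtree statistics: by Chebyshev, all but a proportion `η` of the
trees with root `r` have `fringeSum F k` within `δ n` of `e^{-k} / k! * treeSum F k * n`. -/
lemma concentration {F : (n : ℕ) → (Fin n → Fin n) → Fin n → ℝ} (hF : FringeInv F)
    (hF0 : ∀ n p v, 0 ≤ F n p v) {B : ℝ} (hB : ∀ n p v, F n p v ≤ B) (k : ℕ)
    {δ η : ℝ} (hδ : 0 < δ) (hη : 0 < η) :
    ∀ᶠ n : ℕ in atTop, ∀ r : Fin n,
      (((trees Finset.univ r).filter (fun p => δ * n ≤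
        |fringeSum F k Finset.univ r p -
          Real.exp (-(k : ℝ)) / (k.factorial : ℝ) * treeSum F k * n|)).card : ℝ) ≤
        η * (n : ℝ) ^ (n - 2) := by
  set a := Real.exp (-(k : ℝ)) / (k.factorial : ℝ) with ha
  set Φ := treeSum F k with hΦ
  -- `V n` bounds the mean square deviation from the centre `a * Φ * n`, divided by `n ^ 2`
  let V : ℕ → ℝ := fun n => fringeRatio k n * Φ * (B / n) +
    fringeRatio k n * Φ * (fringeRatio k (n - k) * Φ) * (((n - k : ℕ) : ℝ) / n)
      - 2 * (a * Φ) * (fringeRatio k n * Φ) + (a * Φ) ^ 2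
  have hA := tendsto_fringeRatio k
  have hV : Tendsto V atTop (𝓝 0) := by
    have hA' : Tendsto (fun n => fringeRatio k (n - k)) atTop (𝓝 a) :=
      hA.comp (tendsto_sub_atTop_nat k)
    have hr : Tendsto (fun n : ℕ => ((n - k : ℕ) : ℝ) / (n : ℝ)) atTop (𝓝 1) := by
      have h' := (tendsto_const_div_atTop_nhds_zero_nat (k : ℝ)).const_sub 1
      rw [sub_zero] at h'
      refine h'.congr' ?_
      filter_upwards [eventually_gt_atTop k] with n hn
      rw [Nat.cast_sub hn.le]
      have : (n : ℝ) ≠ 0 := by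
        have : n ≠ 0 := by omega
        exact_mod_cast this
      field_simp
    have hb := tendsto_const_div_atTop_nhds_zero_nat B
    have := ((((hA.mul_const Φ).mul hb).add (((hA.mul_const Φ).mul (hA'.mul_const Φ)).mul hr)).sub
      ((hA.mul_const Φ).const_mul (2 * (a * Φ)))).add_const ((a * Φ) ^ 2)
    convert this using 2
    rw [← ha]
    ring
  have hev : ∀ᶠ n in atTop, V n < η * δ ^ 2 := hV.eventually_lt_const (by positivity)
  filter_upwards [hev, eventually_gt_atTop k] with n hn hnk r
  have hn0 : (0 : ℝ) < n := by
    have : 0 < n := by omega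
    exact_mod_cast this
  have hnk0 : (0 : ℝ) < ((n - k : ℕ) : ℝ) := by
    have : 0 < n - k := by omega
    exact_mod_cast this
  set N : ℝ := (n : ℝ) ^ (n - 2) with hN
  have hN0 : 0 < N := by positivity
  have hr : r ∈ (Finset.univ : Finset (Fin n)) := Finset.mem_univ r
  have hc : (Finset.univ : Finset (Fin n)).card = n := by simp
  have hct : ((trees Finset.univ r).card : ℝ) = N := by
    rw [card_trees hr, hc]; push_cast; rfl
  have hm1 := first_moment hF hr k
  have hm2 := second_moment hF hF0 hB hr k
  rw [hc] at hm1 hm2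
  have hfr : ∀ m : ℕ, 0 < m → ((m - 1).choose k : ℝ) *
      (((m - k : ℕ) : ℝ) ^ (m - k - 2) * ((m - k : ℕ) : ℝ)) =
      fringeRatio k m * ((m : ℝ) ^ (m - 2) * m) := by
    intro m hm
    have : (0 : ℝ) < m := by exact_mod_cast hm
    rw [fringeRatio, div_mul_cancel₀]
    positivity
  have e1 : ∑ p ∈ trees Finset.univ r, fringeSum F k Finset.univ r p =
      fringeRatio k n * Φ * (N * n) := by
    rw [hm1, ← hΦ]
    linear_combination Φ * hfr n (by omega)
  have e2 : ∑ p ∈ trees Finset.univ r, fringeSum F k Finset.univ r p ^ 2 ≤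
      fringeRatio k n * Φ * (N * n) * (B + fringeRatio k (n - k) * Φ * ((n - k : ℕ) : ℝ)) := by
    refine hm2.trans (le_of_eq ?_)
    have h1 := hfr n (by omega)
    have h2 := hfr (n - k) (by omega)
    rw [← hΦ]
    linear_combination Φ * (B + fringeRatio k (n - k) * Φ * ((n - k : ℕ) : ℝ)) * h1 +
      ((n - 1).choose k : ℝ) * Φ * ((n - k : ℕ) : ℝ) * Φ * h2
  have e3 : ∑ p ∈ trees Finset.univ r, (fringeSum F k Finset.univ r p - a * Φ * n) ^ 2 ≤
      N * n ^ 2 * V n := by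
    have : ∀ p, (fringeSum F k Finset.univ r p - a * Φ * n) ^ 2 =
        fringeSum F k Finset.univ r p ^ 2 - 2 * (a * Φ * n) * fringeSum F k Finset.univ r p
          + (a * Φ * n) ^ 2 := fun p => by ring
    simp only [this, Finset.sum_add_distrib, Finset.sum_sub_distrib, ← Finset.mul_sum, e1,
      Finset.sum_const, nsmul_eq_mul, hct]
    have : N * n ^ 2 * V n = fringeRatio k n * Φ * (N * n) *
        (B + fringeRatio k (n - k) * Φ * ((n - k : ℕ) : ℝ)) -
        2 * (a * Φ * n) * (fringeRatio k n * Φ * (N * n)) + N * (a * Φ * n) ^ 2 := by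
      simp only [V]
      field_simp
    rw [this]
    linarith
  set bad := (trees Finset.univ r).filter (fun p => δ * n ≤
        |fringeSum F k Finset.univ r p - a * Φ * n|) with hbad
  have e4 : (bad.card : ℝ) * (δ * n) ^ 2 ≤
      ∑ p ∈ trees Finset.univ r, (fringeSum F k Finset.univ r p - a * Φ * n) ^ 2 := by
    calc (bad.card : ℝ) * (δ * n) ^ 2 = ∑ p ∈ bad, (δ * n) ^ 2 := by simp
      _ ≤ ∑ p ∈ bad, (fringeSum F k Finset.univ r p - a * Φ * n) ^ 2 := by
        refine Finset.sum_le_sum fun p hp => ?_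
        rw [← sq_abs (_ - _)]
        have := (Finset.mem_filter.1 hp).2
        gcongr
      _ ≤ _ := Finset.sum_le_sum_of_subset_of_nonneg (Finset.filter_subset _ _)
        fun _ _ _ => sq_nonneg _
  have e5 : (bad.card : ℝ) * (δ * n) ^ 2 ≤ (η * N) * (δ * n) ^ 2 := by
    calc _ ≤ N * n ^ 2 * V n := e4.trans e3
      _ ≤ N * n ^ 2 * (η * δ ^ 2) := by gcongr
      _ = _ := by ring
  exact le_of_mul_le_mul_right e5 (by positivity)

/-! ### Counting subtrees by their topmost vertex -/

/-- The subtrees of `p` with topmost vertex `v`. -/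
noncomputable def subAt {n : ℕ} (p : Fin n → Fin n) (v : Fin n) : Finset (Finset (Fin n)) :=
  Finset.univ.filter fun A => v ∈ A ∧ A ⊆ Dset p v ∧ ∀ w ∈ A, w ≠ v → p w ∈ A

lemma mem_subAt {n : ℕ} {p : Fin n → Fin n} {v : Fin n} {A : Finset (Fin n)} :
    A ∈ subAt p v ↔ v ∈ A ∧ A ⊆ Dset p v ∧ ∀ w ∈ A, w ≠ v → p w ∈ A := by simp [subAt]

/-- The number of subtrees of `p` with topmost vertex `v`. -/
noncomputable def scount {n : ℕ} (p : Fin n → Fin n) (v : Fin n) : ℕ := (subAt p v).card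

/-- The children of `v`. The condition `w ≠ v` excludes the root as a child of itself, the root
being a fixed point of the parent map. -/
noncomputable def children {n : ℕ} (p : Fin n → Fin n) (v : Fin n) : Finset (Fin n) :=
  Finset.univ.filter fun w => w ≠ v ∧ p w = v

lemma mem_children {n : ℕ} {p : Fin n → Fin n} {v w : Fin n} :
    w ∈ children p v ↔ w ≠ v ∧ p w = v := by simp [children]

lemma scount_pos {n : ℕ} (p : Fin n → Fin n) (v : Fin n) : 1 ≤ scount p v := by
  apply Finset.card_pos.2
  refine ⟨{v}, mem_subAt.2 ⟨by simp, ?_, ?_⟩⟩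
  · simpa using self_mem_Dset p v
  · intro w hw hwv; exact absurd (Finset.mem_singleton.1 hw) hwv

/-- `scount` depends only on the isomorphism class of the fringe subtree. -/
lemma scount_inv {k n : ℕ} (e : Fin k ↪ Fin n) (q : Fin k → Fin k) (p : Fin n → Fin n)
    (v : Fin k) (h1 : ∀ x ∈ Dset q v, x ≠ v → p (e x) = e (q x))
    (h2 : Dset p (e v) = (Dset q v).map e) : scount p (e v) = scount q v := by
  have : subAt p (e v) = (subAt q v).map (Finset.mapEmbedding e).toEmbedding := by
    ext B
    rw [mem_subAt, Finset.mem_map, h2]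
    have hcl : ∀ A ⊆ Dset q v, ((∀ w ∈ A.map e, w ≠ e v → p w ∈ A.map e) ↔
        ∀ w ∈ A, w ≠ v → q w ∈ A) := by
      intro A hA
      constructor
      · intro h w hw hwv
        have := h (e w) (Finset.mem_map_of_mem e hw) (fun h => hwv (e.injective h))
        rw [h1 w (hA hw) hwv] at this
        simpa using this
      · intro h w hw hwv
        obtain ⟨x, hx, rfl⟩ := Finset.mem_map.1 hw
        have hxv : x ≠ v := fun h => hwv (by rw [h])
        rw [h1 x (hA hx) hxv]
        exact Finset.mem_map_of_mem e (h x hx hxv)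
    constructor
    · rintro ⟨hv, hsub, hc⟩
      obtain ⟨A, hA, rfl⟩ := Finset.subset_map_iff.1 hsub
      exact ⟨A, mem_subAt.2 ⟨by simpa using hv, hA, (hcl A hA).1 hc⟩, rfl⟩
    · rintro ⟨A, hA, rfl⟩
      obtain ⟨hv, hsub, hc⟩ := mem_subAt.1 hA
      exact ⟨Finset.mem_map_of_mem e hv, Finset.map_subset_map.2 hsub, (hcl A hsub).2 hc⟩
  rw [scount, this, Finset.card_map, scount]

/-- The number of children depends only on the isomorphism class of the fringe subtree. -/
lemma card_children_inv {k n : ℕ} (e : Fin k ↪ Fin n) (q : Fin k → Fin k) (p : Fin n → Fin n)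
    (v : Fin k) (h1 : ∀ x ∈ Dset q v, x ≠ v → p (e x) = e (q x))
    (h2 : Dset p (e v) = (Dset q v).map e) :
    (children p (e v)).card = (children q v).card := by
  have : children p (e v) = (children q v).map e := by
    ext y
    rw [mem_children, Finset.mem_map]
    constructor
    · rintro ⟨hy, hpy⟩
      have hyD : y ∈ Dset p (e v) := by
        rw [mem_Dset_iff, hpy]; exact Or.inr (self_mem_Dset _ _)
      rw [h2] at hyD
      obtain ⟨x, hx, rfl⟩ := Finset.mem_map.1 hyD
      have hxv : x ≠ v := fun h => hy (by rw [h])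
      rw [h1 x hx hxv] at hpy
      exact ⟨x, mem_children.2 ⟨hxv, e.injective hpy⟩, rfl⟩
    · rintro ⟨x, hx, rfl⟩
      obtain ⟨hxv, hq⟩ := mem_children.1 hx
      have hxD : x ∈ Dset q v := by
        rw [mem_Dset_iff, hq]; exact Or.inr (self_mem_Dset _ _)
      exact ⟨fun h => hxv (e.injective h), by rw [h1 x hxD hxv, hq]⟩
  rw [this, Finset.card_map]

section
variable {n : ℕ} {M : Finset (Fin n)} {r : Fin n} {p : Fin n → Fin n}

lemma IsRT.child_mem (hp : IsRT M r p) {v w : Fin n} (hw : w ∈ children p v) :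
    w ∈ M ∧ w ≠ r := by
  obtain ⟨h1, h2⟩ := mem_children.1 hw
  constructor
  · by_contra h
    rw [hp.out w h] at h2
    exact h1 h2
  · rintro rfl
    rw [hp.root] at h2
    exact h1 h2

lemma IsRT.notMem_child (hp : IsRT M r p) {v w : Fin n} (hw : w ∈ children p v) :
    v ∉ Dset p w := by
  have := hp.parent_notMem (hp.child_mem hw).1 (hp.child_mem hw).2
  rwa [(mem_children.1 hw).2] at this

lemma IsRT.disj_children (hp : IsRT M r p) {v w w' x : Fin n} (hw : w ∈ children p v)
    (hw' : w' ∈ children p v) (h : x ∈ Dset p w) (h' : x ∈ Dset p w') : w = w' := by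
  by_contra hne
  rcases Dset_chain h h' with h1 | h1
  · have := (mem_Dset_iff.1 h1).resolve_left hne
    rw [(mem_children.1 hw).2] at this
    exact hp.notMem_child hw' this
  · have := (mem_Dset_iff.1 h1).resolve_left (Ne.symm hne)
    rw [(mem_children.1 hw').2] at this
    exact hp.notMem_child hw this

lemma child_Dset_subset {v w : Fin n} (hw : w ∈ children p v) : Dset p w ⊆ Dset p v := by
  apply Dset_subset_Dset
  rw [mem_Dset_iff, (mem_children.1 hw).2]
  exact Or.inr (self_mem_Dset _ _)

lemma exists_child {v : Fin n} (i : ℕ) : ∀ x, p^[i] x = v → x ≠ v →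
    ∃ w ∈ children p v, x ∈ Dset p w := by
  induction i with
  | zero => intro x h1 h2; exact absurd h1 h2
  | succ i ih =>
    intro x h1 h2
    by_cases h : p x = v
    · exact ⟨x, mem_children.2 ⟨h2, h⟩, self_mem_Dset _ _⟩
    · obtain ⟨w, hw, hx⟩ := ih (p x) (by simpa using h1) h
      exact ⟨w, hw, mem_Dset_iff.2 (Or.inr hx)⟩

lemma IsRT.card_Dset (hp : IsRT M r p) (v : Fin n) :
    (Dset p v).card = 1 + ∑ w ∈ children p v, (Dset p w).card := by
  have h : Dset p v = insert v ((children p v).biUnion (Dset p)) := by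
    ext x
    rw [Finset.mem_insert, Finset.mem_biUnion]
    constructor
    · intro hx
      by_cases hxv : x = v
      · exact Or.inl hxv
      · obtain ⟨i, hi⟩ := mem_Dset.1 hx
        exact Or.inr (exists_child i x hi hxv)
    · rintro (rfl | ⟨w, hw, hx⟩)
      · exact self_mem_Dset _ _
      · exact child_Dset_subset hw hx
  rw [h, Finset.card_insert_of_notMem, Finset.card_biUnion, add_comm]
  · intro w hw w' hw' hne
    rw [Function.onFun, Finset.disjoint_left]
    exact fun x h1 h2 => hne (hp.disj_children hw hw' h1 h2)
  · intro hv
    obtain ⟨w, hw, hx⟩ := Finset.mem_biUnion.1 hv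
    exact hp.notMem_child hw hx

/-- A subtree with topmost vertex `v` is determined by its (possibly empty) intersections with
the fringe subtrees at the children of `v`. -/
lemma IsRT.scount_eq (hp : IsRT M r p) (v : Fin n) :
    scount p v = ∏ w ∈ children p v, (1 + scount p w) := by
  let C : Fin n → Finset (Finset (Fin n)) := fun w =>
    if w ∈ children p v then insert ∅ (subAt p w) else {∅}
  have hC : (Fintype.piFinset C).card = ∏ w ∈ children p v, (1 + scount p w) := by
    rw [Fintype.card_piFinset, ← Finset.prod_subset (Finset.subset_univ (children p v))]
    · refine Finset.prod_congr rfl fun w hw => ?_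
      simp only [C, hw, if_true]
      rw [Finset.card_insert_of_notMem, add_comm, scount]
      intro h
      simpa using (mem_subAt.1 h).1
    · intro w _ hw
      simp [C, hw]
  have hmemC : ∀ f ∈ Fintype.piFinset C, ∀ w, ∀ x ∈ f w,
      w ∈ children p v ∧ f w ∈ subAt p w := by
    intro f hf w x hx
    have hfw := Fintype.mem_piFinset.1 hf w
    by_cases hw : w ∈ children p v
    · simp only [C, hw, if_true, Finset.mem_insert] at hfw
      rcases hfw with h | h
      · rw [h] at hx; simp at hx
      · exact ⟨hw, h⟩
    · simp only [C, hw, if_false, Finset.mem_singleton] at hfw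
      rw [hfw] at hx; simp at hx
  rw [← hC, scount]
  refine Finset.card_nbij' (fun A => fun w => if w ∈ children p v then A ∩ Dset p w else ∅)
    (fun f => insert v (Finset.univ.biUnion f)) ?_ ?_ ?_ ?_
  · intro A hA
    obtain ⟨hv, hsub, hcl⟩ := mem_subAt.1 (Finset.mem_coe.1 hA)
    refine Finset.mem_coe.2 (Fintype.mem_piFinset.2 fun w => ?_)
    by_cases hw : w ∈ children p v
    · simp only [C, hw, if_true, Finset.mem_insert]
      by_cases hne : A ∩ Dset p w = ∅
      · exact Or.inl hne
      · right
        obtain ⟨x, hx⟩ := Finset.nonempty_iff_ne_empty.2 hne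
        have hne_v : ∀ y ∈ Dset p w, y ≠ v := fun y hy h => hp.notMem_child hw (h ▸ hy)
        have climb : ∀ i : ℕ, ∀ y ∈ A, p^[i] y = w → w ∈ A := by
          intro i
          induction i with
          | zero => intro y hy h; rw [← h]; exact hy
          | succ i ih =>
            intro y hy h
            have hyD : y ∈ Dset p w := mem_Dset.2 ⟨_, h⟩
            exact ih (p y) (hcl y hy (hne_v y hyD)) (by simpa using h)
        rw [Finset.mem_inter] at hx
        obtain ⟨i, hi⟩ := mem_Dset.1 hx.2
        refine mem_subAt.2 ⟨Finset.mem_inter.2 ⟨climb i x hx.1 hi, self_mem_Dset _ _⟩,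
          Finset.inter_subset_right, fun y hy hyw => ?_⟩
        rw [Finset.mem_inter] at hy ⊢
        exact ⟨hcl y hy.1 (hne_v y hy.2), (mem_Dset_iff.1 hy.2).resolve_left hyw⟩
    · simp [C, hw]
  · intro f hf
    have hf := Finset.mem_coe.1 hf
    refine Finset.mem_coe.2 (mem_subAt.2 ⟨Finset.mem_insert_self _ _, ?_, ?_⟩)
    · intro x hx
      rcases Finset.mem_insert.1 hx with rfl | hx
      · exact self_mem_Dset _ _
      · obtain ⟨w, -, hxw⟩ := Finset.mem_biUnion.1 hx
        obtain ⟨hw, hfw⟩ := hmemC f hf w x hxw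
        exact child_Dset_subset hw ((mem_subAt.1 hfw).2.1 hxw)
    · intro x hx hxv
      rcases Finset.mem_insert.1 hx with rfl | hx
      · exact absurd rfl hxv
      · obtain ⟨w, -, hxw⟩ := Finset.mem_biUnion.1 hx
        obtain ⟨hw, hfw⟩ := hmemC f hf w x hxw
        by_cases hxw' : x = w
        · rw [hxw', (mem_children.1 hw).2]; exact Finset.mem_insert_self _ _
        · exact Finset.mem_insert_of_mem (Finset.mem_biUnion.2
            ⟨w, Finset.mem_univ _, (mem_subAt.1 hfw).2.2 x hxw hxw'⟩)
  · intro A hA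
    obtain ⟨hv, hsub, hcl⟩ := mem_subAt.1 (Finset.mem_coe.1 hA)
    ext x
    simp only [Finset.mem_insert, Finset.mem_biUnion, Finset.mem_univ, true_and]
    constructor
    · rintro (rfl | ⟨w, hw⟩)
      · exact hv
      · by_cases h : w ∈ children p v
        · simp only [h, if_true] at hw
          exact Finset.mem_of_mem_inter_left hw
        · simp [h] at hw
    · intro hx
      by_cases hxv : x = v
      · exact Or.inl hxv
      · right
        obtain ⟨i, hi⟩ := mem_Dset.1 (hsub hx)
        obtain ⟨w, hw, hxw⟩ := exists_child i x hi hxv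
        exact ⟨w, by simp [hw, hx, hxw]⟩
  · intro f hf
    have hf := Finset.mem_coe.1 hf
    funext w
    by_cases hw : w ∈ children p v
    · simp only [hw, if_true]
      ext x
      rw [Finset.mem_inter, Finset.mem_insert, Finset.mem_biUnion]
      constructor
      · rintro ⟨rfl | ⟨w', -, hx⟩, hxw⟩
        · exact absurd hxw (hp.notMem_child hw)
        · obtain ⟨hw', hfw'⟩ := hmemC f hf w' x hx
          have := hp.disj_children hw' hw ((mem_subAt.1 hfw').2.1 hx) hxw
          rwa [← this]
      · intro hx
        exact ⟨Or.inr ⟨w, Finset.mem_univ _, hx⟩,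
          (mem_subAt.1 (hmemC f hf w x hx).2).2.1 hx⟩
    · simp only [hw, if_false]
      by_contra hne
      obtain ⟨x, hx⟩ := Finset.nonempty_iff_ne_empty.2 (Ne.symm hne)
      exact hw (hmemC f hf w x hx).1

lemma one_add_sum_le_prod {ι : Type*} (s : Finset ι) (f : ι → ℕ) :
    1 + ∑ i ∈ s, f i ≤ ∏ i ∈ s, (1 + f i) := by
  induction s using Finset.induction_on with
  | empty => simp
  | insert a s ha ih =>
    rw [Finset.sum_insert ha, Finset.prod_insert ha]
    nlinarith [Nat.zero_le (f a * ∑ i ∈ s, f i), Nat.mul_le_mul_left (f a) ih]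

/-- Induction on the recursion `IsRT.scount_eq`, using `1 + ∑ a ≤ ∏ (1 + a)`. -/
lemma IsRT.card_le_scount (hp : IsRT M r p) (v : Fin n) : (Dset p v).card ≤ scount p v := by
  induction hm : (Dset p v).card using Nat.strong_induction_on generalizing v with
  | _ m ih =>
    subst hm
    rw [hp.card_Dset v, hp.scount_eq v]
    refine le_trans ?_ (one_add_sum_le_prod _ _)
    gcongr with w hw
    refine ih _ ?_ w rfl
    rw [hp.card_Dset v]
    have := Finset.single_le_sum (f := fun w => (Dset p w).card) (fun _ _ => Nat.zero_le _) hw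
    omega

/-- With at least two children the product in `IsRT.scount_eq` is at least `(1 + a) * (1 + b)`
with `a, b ≥ 1` and `a + b` one less than the fringe size, hence at least `2 * (a + b)`. -/
lemma IsRT.card_le_scount_two (hp : IsRT M r p) (v : Fin n) (h1 : (children p v).card ≠ 1)
    (h2 : 2 ≤ (Dset p v).card) : 2 * ((Dset p v).card - 1) ≤ scount p v := by
  have hpos : ∀ w, 1 ≤ (Dset p w).card := fun w =>
    Finset.card_pos.2 ⟨w, self_mem_Dset _ _⟩
  have hne : (children p v).Nonempty := by
    by_contra h
    rw [Finset.not_nonempty_iff_eq_empty] at h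
    have := hp.card_Dset v
    rw [h] at this
    simp at this
    omega
  obtain ⟨w, hw⟩ := hne
  have hcard : ((children p v).erase w).Nonempty := by
    rw [← Finset.card_pos, Finset.card_erase_of_mem hw]
    have : 0 < (children p v).card := Finset.card_pos.2 ⟨w, hw⟩
    omega
  obtain ⟨w', hw'⟩ := hcard
  rw [hp.card_Dset v, hp.scount_eq v, Nat.add_sub_cancel_left]
  have h3 : ∏ w ∈ children p v, (1 + (Dset p w).card) ≤ ∏ w ∈ children p v, (1 + scount p w) := by
    gcongr with w hw
    exact hp.card_le_scount w
  refine le_trans ?_ h3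
  rw [← Finset.add_sum_erase _ _ hw, ← Finset.mul_prod_erase _ _ hw]
  have h4 := one_add_sum_le_prod ((children p v).erase w) (fun w => (Dset p w).card)
  have h5 := Finset.single_le_sum (f := fun w => (Dset p w).card) (fun _ _ => Nat.zero_le _) hw'
  have h6 := hpos w'
  have h7 := hpos w
  refine le_trans ?_ (Nat.mul_le_mul_left _ h4)
  obtain ⟨a, ha⟩ := Nat.exists_eq_add_of_le h7
  obtain ⟨b, hb⟩ := Nat.exists_eq_add_of_le (h6.trans h5)
  rw [ha, hb]
  nlinarith [Nat.zero_le (a * b)]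

end

section
variable {n : ℕ} {r : Fin n} {p : Fin n → Fin n}

lemma IsRT.scount_le_root (hp : IsRT Finset.univ r p) (v : Fin n) :
    scount p v ≤ scount p r := by
  obtain ⟨i, hi⟩ := mem_Dset.1 (hp.lead v (Finset.mem_univ _))
  induction i generalizing v with
  | zero => rw [show v = r from hi]
  | succ i ih =>
    by_cases hv : v = r
    · rw [hv]
    · refine le_trans ?_ (ih (p v) (by simpa using hi))
      have hc : v ∈ children p (p v) := by
        refine mem_children.2 ⟨fun h => ?_, rfl⟩
        exact hp.parent_notMem (Finset.mem_univ v) hv (h ▸ self_mem_Dset p v)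
      rw [hp.scount_eq (p v)]
      refine le_trans (Nat.le_add_left _ 1) ?_
      exact Finset.single_le_prod' (f := fun w => 1 + scount p w)
        (fun _ _ => Nat.le_add_right _ _) hc

/-- The telescoped recursion: the number of subtrees containing the root is the product of
`1 + 1 / s(v)` over the other vertices. -/
lemma IsRT.log_scount_root (hp : IsRT Finset.univ r p) :
    Real.log (scount p r) =
      ∑ v ∈ Finset.univ.erase r, (Real.log (1 + scount p v) - Real.log (scount p v)) := by
  have h1 : ∀ v, Real.log (scount p v) = ∑ w ∈ children p v, Real.log (1 + scount p w) := by
    intro v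
    rw [hp.scount_eq v]
    push_cast
    rw [Real.log_prod]
    intro w _
    positivity
  have h2 : ∑ v, Real.log (scount p v) =
      ∑ w ∈ Finset.univ.erase r, Real.log (1 + scount p w) := by
    simp only [h1]
    have hmap : ∀ w ∈ Finset.univ.erase r, p w ∈ (Finset.univ : Finset (Fin n)) :=
      fun _ _ => Finset.mem_univ _
    rw [← Finset.sum_fiberwise_of_maps_to hmap]
    refine Finset.sum_congr rfl fun v _ => Finset.sum_congr ?_ fun _ _ => rfl
    ext w
    rw [Finset.mem_filter, Finset.mem_erase, mem_children]
    constructor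
    · rintro ⟨h1, h2⟩
      refine ⟨⟨?_, Finset.mem_univ _⟩, h2⟩
      rintro rfl
      rw [hp.root] at h2; exact h1 h2
    · rintro ⟨⟨h1, -⟩, h2⟩
      refine ⟨fun h => ?_, h2⟩
      have := hp.parent_notMem (Finset.mem_univ w) h1
      rw [h2, ← h] at this
      exact this (self_mem_Dset _ _)
  rw [Finset.sum_sub_distrib, ← h2, ← Finset.add_sum_erase _ _ (Finset.mem_univ r)]
  ring

end

/-! ### Parent maps and trees as graphs -/

/-- The graph of a parent map: every vertex is joined to its parent. -/
def parentGraph {n : ℕ} (p : Fin n → Fin n) : SimpleGraph (Fin n) where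
  Adj x y := x ≠ y ∧ (p x = y ∨ p y = x)
  symm := ⟨fun _ _ h => ⟨h.1.symm, h.2.symm⟩⟩
  loopless := ⟨fun _ h => h.1 rfl⟩

lemma parentGraph_adj {n : ℕ} {p : Fin n → Fin n} {x y : Fin n} :
    (parentGraph p).Adj x y ↔ x ≠ y ∧ (p x = y ∨ p y = x) := Iff.rfl

section
variable {n : ℕ} {r : Fin n} {p : Fin n → Fin n}

lemma subAt_connected {v : Fin n} {A : Finset (Fin n)} (hA : A ∈ subAt p v) :
    ((parentGraph p).induce (A : Set (Fin n))).Connected := by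
  obtain ⟨hv, hsub, hcl⟩ := mem_subAt.1 hA
  have key : ∀ i : ℕ, ∀ x (hx : x ∈ A), p^[i] x = v →
      ((parentGraph p).induce (A : Set (Fin n))).Reachable ⟨x, hx⟩ ⟨v, hv⟩ := by
    intro i
    induction i with
    | zero =>
      intro x hx h
      have : x = v := h
      subst this
      exact SimpleGraph.Reachable.refl _
    | succ i ih =>
      intro x hx h
      by_cases hxv : x = v
      · subst hxv
        exact SimpleGraph.Reachable.refl _
      · have hpx := hcl x hx hxv
        have h1 := ih (p x) hpx (by simpa using h)
        by_cases hfix : x = p x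
        · have h2 : (⟨x, hx⟩ : {x // x ∈ (A : Set (Fin n))}) = ⟨p x, hpx⟩ := Subtype.ext hfix
          exact h2 ▸ h1
        · refine SimpleGraph.Reachable.trans (SimpleGraph.Adj.reachable ?_) h1
          rw [SimpleGraph.comap_adj]
          exact ⟨hfix, Or.inl rfl⟩
  rw [SimpleGraph.connected_iff_exists_forall_reachable]
  refine ⟨⟨v, hv⟩, fun x => ?_⟩
  obtain ⟨i, hi⟩ := mem_Dset.1 (hsub x.2)
  exact (key i x x.2 hi).symm

lemma univ_mem_subAt (hp : IsRT Finset.univ r p) : Finset.univ ∈ subAt p r :=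
  mem_subAt.2 ⟨Finset.mem_univ _, fun x _ => hp.lead x (Finset.mem_univ _),
    fun _ _ _ => Finset.mem_univ _⟩

lemma parentGraph_connected (hp : IsRT Finset.univ r p) : (parentGraph p).Connected := by
  have h := subAt_connected (univ_mem_subAt hp)
  rw [Finset.coe_univ] at h
  exact (SimpleGraph.induceUnivIso (parentGraph p)).connected_iff.1 h

lemma parentGraph_isTree (hp : IsRT Finset.univ r p) : (parentGraph p).IsTree := by
  have hc := parentGraph_connected hp
  rw [SimpleGraph.isTree_iff_connected_and_card]
  refine ⟨hc, le_antisymm ?_ hc.card_vert_le_card_edgeSet_add_one⟩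
  have hsub : (parentGraph p).edgeSet ⊆
      (((Finset.univ.erase r).image fun x => s(x, p x) : Finset (Sym2 (Fin n))) :
        Set (Sym2 (Fin n))) := by
    intro e
    induction e using Sym2.ind with
    | _ x y =>
      intro h
      rw [SimpleGraph.mem_edgeSet, parentGraph_adj] at h
      rw [Finset.mem_coe, Finset.mem_image]
      obtain ⟨hne, h | h⟩ := h
      · refine ⟨x, Finset.mem_erase.2 ⟨?_, Finset.mem_univ _⟩, by rw [h]⟩
        rintro rfl
        exact hne (hp.root.symm.trans h)
      · refine ⟨y, Finset.mem_erase.2 ⟨?_, Finset.mem_univ _⟩, by rw [h, Sym2.eq_swap]⟩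
        rintro rfl
        exact hne (h.symm.trans hp.root)
  have h1 : Nat.card (parentGraph p).edgeSet ≤ n - 1 := by
    rw [Nat.card_coe_set_eq]
    refine (Set.ncard_le_ncard hsub (Finset.finite_toSet _)).trans ?_
    rw [Set.ncard_coe_finset]
    refine Finset.card_image_le.trans ?_
    rw [Finset.card_erase_of_mem (Finset.mem_univ r), Finset.card_univ, Fintype.card_fin]
  have : 0 < n := r.pos
  rw [Nat.card_eq_fintype_card (α := Fin n), Fintype.card_fin]
  omega

/-- For a fixed root, a tree determines its parent map. -/
lemma parentGraph_inj {q : Fin n → Fin n} (hp : IsRT Finset.univ r p)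
    (hq : IsRT Finset.univ r q) (h : parentGraph p = parentGraph q) : p = q := by
  have key : ∀ i : ℕ, ∀ x, p^[i] x = r → q x = p x := by
    intro i
    induction i with
    | zero =>
      intro x hx
      have : x = r := hx
      rw [this, hp.root, hq.root]
    | succ i ih =>
      intro x hx
      by_cases hxr : x = r
      · rw [hxr, hp.root, hq.root]
      · have hnot := hp.parent_notMem (Finset.mem_univ x) hxr
        have hne : x ≠ p x := fun h => hnot (h ▸ self_mem_Dset p x)
        have hadj : (parentGraph q).Adj x (p x) := by
          rw [← h]; exact ⟨hne, Or.inl rfl⟩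
        rcases hadj.2 with h1 | h1
        · exact h1
        · rw [ih (p x) (by simpa using hx)] at h1
          exact absurd (mem_Dset.2 ⟨1, h1⟩) hnot
  funext x
  obtain ⟨i, hi⟩ := mem_Dset.1 (hp.lead x (Finset.mem_univ _))
  exact (key i x hi).symm

/-- Every tree arises from a parent map with prescribed root `r`: send each vertex to a
neighbour closer to `r`. -/
lemma exists_parentGraph {G : SimpleGraph (Fin n)} (hG : G.IsTree) (r : Fin n) :
    ∃ p, IsRT Finset.univ r p ∧ parentGraph p = G := by
  have hex : ∀ x, ∃ y, x ≠ r → G.Adj x y ∧ G.dist y r < G.dist x r := by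
    intro x
    by_cases hx : x = r
    · exact ⟨x, fun h => absurd hx h⟩
    · obtain ⟨w, hw⟩ := hG.connected.exists_walk_length_eq_dist x r
      cases w with
      | nil => exact absurd rfl hx
      | cons hadj w' =>
        rename_i y
        refine ⟨y, fun _ => ⟨hadj, ?_⟩⟩
        rw [← hw, SimpleGraph.Walk.length_cons]
        exact Nat.lt_succ_of_le (SimpleGraph.dist_le w')
  choose f hf using hex
  let p : Fin n → Fin n := fun x => if x = r then r else f x
  have hpf : ∀ x, x ≠ r → p x = f x := fun x hx => if_neg hx
  have hpr : p r = r := if_pos rfl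
  have hp : IsRT Finset.univ r p := by
    refine ⟨fun x hx => absurd (Finset.mem_univ x) hx, fun _ _ => Finset.mem_univ _, hpr, ?_⟩
    intro x _
    induction hd : G.dist x r using Nat.strong_induction_on generalizing x with
    | _ m ih =>
      subst hd
      by_cases hx : x = r
      · rw [hx]; exact self_mem_Dset _ _
      · refine mem_Dset_iff.2 (Or.inr ?_)
        rw [hpf x hx]
        exact ih _ (hf x hx).2 (f x) (Finset.mem_univ _) rfl
  have hadj : ∀ x y, x ≠ y → p x = y → G.Adj x y := by
    intro x y hne h
    have hx : x ≠ r := by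
      rintro rfl
      exact hne (hpr.symm.trans h)
    rw [← h, hpf x hx]
    exact (hf x hx).1
  have hle : parentGraph p ≤ G := by
    rintro x y ⟨hne, h | h⟩
    · exact hadj x y hne h
    · exact (hadj y x hne.symm h).symm
  exact ⟨p, hp, le_antisymm hle
    ((SimpleGraph.isTree_iff_minimal_connected.1 hG).2 (parentGraph_connected hp) hle)⟩

/-- Sums over labelled trees are sums over parent maps with a fixed root. -/
lemma sum_isTree (r : Fin n) (f : SimpleGraph (Fin n) → ℝ) :
    ∑ G ∈ Finset.univ.filter (fun G : SimpleGraph (Fin n) => G.IsTree), f G =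
      ∑ p ∈ trees Finset.univ r, f (parentGraph p) := by
  symm
  refine Finset.sum_bij (fun p _ => parentGraph p) ?_ ?_ ?_ (fun _ _ => rfl)
  · intro p hp
    simpa using parentGraph_isTree (mem_trees.1 hp)
  · intro p hp q hq h
    exact parentGraph_inj (mem_trees.1 hp) (mem_trees.1 hq) h
  · intro G hG
    obtain ⟨p, hp, h⟩ := exists_parentGraph (Finset.mem_filter.1 hG).2 r
    exact ⟨p, mem_trees.2 hp, h⟩

/-- The only edge leaving the fringe subtree at `w` joins `w` to its parent. -/
lemma parent_mem_of_connected {S : Set (Fin n)}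
    (hS : ((parentGraph p).induce S).Connected) {w u : Fin n} (hw : w ∈ S) (hu : u ∈ S)
    (huw : u ∉ Dset p w) : p w ∈ S := by
  obtain ⟨walk⟩ := hS.preconnected ⟨w, hw⟩ ⟨u, hu⟩
  obtain ⟨d, -, h1, h2⟩ := walk.exists_boundary_dart {x | x.1 ∈ Dset p w}
    (self_mem_Dset p w) huw
  have hadj := d.adj
  rw [SimpleGraph.comap_adj] at hadj
  obtain ⟨hne, h | h⟩ := hadj
  · rcases mem_Dset_iff.1 h1 with h3 | h3
    · have h4 : p w = d.snd.1 := by rw [← h3]; exact h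
      rw [h4]; exact d.snd.2
    · have h4 : p d.fst.1 = d.snd.1 := h
      rw [h4] at h3
      exact absurd h3 h2
  · have h4 : p d.snd.1 = d.fst.1 := h
    exact absurd (mem_Dset_iff.2 (Or.inr (h4 ▸ h1))) h2

lemma mem_subAt_of_connected (hp : IsRT Finset.univ r p) {v : Fin n} {A : Finset (Fin n)}
    (hA : ((parentGraph p).induce (A : Set (Fin n))).Connected) (hv : v ∈ A)
    (hsub : A ⊆ Dset p v) : A ∈ subAt p v := by
  refine mem_subAt.2 ⟨hv, hsub, fun w hw hwv => ?_⟩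
  refine parent_mem_of_connected hA (Finset.mem_coe.2 hw) (Finset.mem_coe.2 hv) fun h => ?_
  by_cases hvr : v = r
  · subst hvr
    exact hp.root_notMem hwv h
  · exact hwv (hp.antisymm (Finset.mem_univ v) hvr h (hsub hw)).symm

/-- A subtree has a topmost vertex. -/
lemma exists_top (hp : IsRT Finset.univ r p) {A : Finset (Fin n)}
    (hA : ((parentGraph p).induce (A : Set (Fin n))).Connected) : ∃ v, A ∈ subAt p v := by
  have hne : A.Nonempty := by
    obtain ⟨x⟩ := hA.nonempty
    exact ⟨x.1, x.2⟩
  obtain ⟨v, hv, hmax⟩ := A.exists_max_image (fun v => (Dset p v).card) hne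
  refine ⟨v, mem_subAt_of_connected hp hA hv fun u hu => ?_⟩
  by_contra h
  have hvr : v ≠ r := by
    rintro rfl
    exact h (hp.lead u (Finset.mem_univ _))
  have h1 := hmax _ (Finset.mem_coe.1
    (parent_mem_of_connected hA (Finset.mem_coe.2 hv) (Finset.mem_coe.2 hu) h))
  have hnot := hp.parent_notMem (Finset.mem_univ v) hvr
  have hss : Dset p v ⊆ Dset p (p v) := Dset_subset_Dset (mem_Dset.2 ⟨1, rfl⟩)
  rw [Finset.eq_of_subset_of_card_le hss h1] at hnot
  exact hnot (self_mem_Dset _ _)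

/-- Counting sets of vertices amounts to counting finsets of vertices. -/
lemma natCard_set (P : Set (Fin n) → Prop) [DecidablePred fun A : Finset (Fin n) => P A] :
    Nat.card {S : Set (Fin n) // P S} =
      (Finset.univ.filter fun A : Finset (Fin n) => P A).card := by
  rw [← Fintype.card_subtype, ← Nat.card_eq_fintype_card]
  exact (Nat.card_congr (Fintype.finsetEquivSet.subtypeEquiv fun A => Iff.rfl)).symm

lemma gval_parentGraph (hp : IsRT Finset.univ r p) :
    gval (parentGraph p) r = 1 + scount p r := by
  rw [gval, natCard_set, scount]
  congr 2
  ext A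
  rw [Finset.mem_filter]
  constructor
  · rintro ⟨-, h1, h2⟩
    exact mem_subAt_of_connected hp h2 h1 fun x _ => hp.lead x (Finset.mem_univ _)
  · intro h
    exact ⟨Finset.mem_univ _, (mem_subAt.1 h).1, subAt_connected h⟩

/-- Every subtree has a topmost vertex `v`, and `s(v)` is largest at the root. -/
lemma subtreeCount_le (hp : IsRT Finset.univ r p) :
    subtreeCount (parentGraph p) ≤ n * scount p r := by
  rw [subtreeCount, natCard_set]
  calc _ ≤ (Finset.univ.biUnion (subAt p)).card := by
        refine Finset.card_le_card fun A hA => ?_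
        obtain ⟨v, hv⟩ := exists_top hp (Finset.mem_filter.1 hA).2
        exact Finset.mem_biUnion.2 ⟨v, Finset.mem_univ _, hv⟩
    _ ≤ ∑ v : Fin n, scount p v := Finset.card_biUnion_le
    _ ≤ ∑ _v : Fin n, scount p r := Finset.sum_le_sum fun v _ => hp.scount_le_root v
    _ = n * scount p r := by simp

end

/-! ### The constants -/

/-- The constant functional `1`. -/
def oneF : (n : ℕ) → (Fin n → Fin n) → Fin n → ℝ := fun _ _ _ => 1

/-- `log s(v)`, with `s(v)` the number of subtrees with topmost vertex `v`. -/
noncomputable def sF : (n : ℕ) → (Fin n → Fin n) → Fin n → ℝ :=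
  fun _ p v => Real.log (scount p v)

/-- `log (1 + s(v))`. -/
noncomputable def gF : (n : ℕ) → (Fin n → Fin n) → Fin n → ℝ :=
  fun _ p v => Real.log (1 + scount p v)

/-- The indicator of vertices with exactly one child. -/
noncomputable def singleF : (n : ℕ) → (Fin n → Fin n) → Fin n → ℝ :=
  fun _ p v => if (children p v).card = 1 then 1 else 0

/-- An upper bound for `log (1 + 1 / s(v))` at a vertex `v` with fringe subtree of size `k`:
exact for `k ≤ K`, and otherwise depending only on whether `v` has exactly one child. -/
noncomputable def phiF (K k : ℕ) : (n : ℕ) → (Fin n → Fin n) → Fin n → ℝ :=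
  fun _ p v => if k ≤ K then Real.log (1 + scount p v) - Real.log (scount p v)
    else if (children p v).card = 1 then Real.log (((k : ℝ) + 1) / k)
    else Real.log ((2 * (k : ℝ) - 1) / (2 * k - 2))

lemma oneF_inv : FringeInv oneF := fun _ _ _ _ _ _ _ _ => rfl

lemma gF_inv : FringeInv gF := by
  intro k n e q p v h1 h2
  simp only [gF, scount_inv e q p v h1 h2]

lemma phiF_inv (K m : ℕ) : FringeInv (phiF K m) := by
  intro k n e q p v h1 h2
  simp only [phiF, scount_inv e q p v h1 h2, card_children_inv e q p v h1 h2]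

lemma log_sub_le {x y : ℝ} (hx : 0 < x) (hxy : x ≤ y) :
    Real.log (1 + y) - Real.log y ≤ Real.log ((x + 1) / x) := by
  have hy : 0 < y := hx.trans_le hxy
  rw [← Real.log_div (by positivity) hy.ne']
  apply Real.log_le_log (by positivity)
  rw [div_le_div_iff₀ hy hx]
  nlinarith

lemma phiF_nonneg {K k : ℕ} (hk : 1 ≤ k) (hK : 1 ≤ K) (n : ℕ) (p : Fin n → Fin n) (v : Fin n) :
    0 ≤ phiF K k n p v := by
  have hs : (1 : ℝ) ≤ scount p v := by exact_mod_cast scount_pos p v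
  have hk' : (1 : ℝ) ≤ k := by exact_mod_cast hk
  unfold phiF
  split_ifs with h1 h2
  · rw [sub_nonneg]
    exact Real.log_le_log (by linarith) (by linarith)
  · apply Real.log_nonneg
    rw [le_div_iff₀ (by linarith)]; linarith
  · have hk2 : (2 : ℝ) ≤ k := by
      have : 2 ≤ k := by omega
      exact_mod_cast this
    apply Real.log_nonneg
    rw [le_div_iff₀ (by linarith)]; linarith

lemma phiF_le {K k : ℕ} (hk : 1 ≤ k) (hK : 1 ≤ K) (n : ℕ) (p : Fin n → Fin n) (v : Fin n) :
    phiF K k n p v ≤ Real.log 2 := by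
  have hs : (1 : ℝ) ≤ scount p v := by exact_mod_cast scount_pos p v
  have hk' : (1 : ℝ) ≤ k := by exact_mod_cast hk
  unfold phiF
  split_ifs with h1 h2
  · have := log_sub_le one_pos hs
    norm_num at this
    linarith
  · apply Real.log_le_log (by positivity)
    rw [div_le_iff₀ (by linarith)]; linarith
  · have hk2 : (2 : ℝ) ≤ k := by
      have : 2 ≤ k := by omega
      exact_mod_cast this
    apply Real.log_le_log (div_pos (by linarith) (by linarith))
    rw [div_le_iff₀ (by linarith)]; linarith

/-- `phiF` does bound the increment `log (1 + 1 / s(v))`. -/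
lemma le_phiF {K k n : ℕ} {r v : Fin n} {p : Fin n → Fin n} (hp : IsRT Finset.univ r p)
    (hK : 1 ≤ K) (hk : (Dset p v).card = k) :
    Real.log (1 + scount p v) - Real.log (scount p v) ≤ phiF K k n p v := by
  have hk1 : 1 ≤ k := hk ▸ Finset.card_pos.2 ⟨v, self_mem_Dset _ _⟩
  unfold phiF
  split_ifs with h1 h2
  · exact le_rfl
  · apply log_sub_le (by exact_mod_cast hk1)
    rw [← hk]; exact_mod_cast hp.card_le_scount v
  · have hk2 : (2 : ℝ) ≤ k := by
      have : 2 ≤ k := by omega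
      exact_mod_cast this
    have h3 := hp.card_le_scount_two v h2 (by omega)
    rw [hk] at h3
    have h4 : 2 * (k : ℝ) - 2 ≤ scount p v := by
      have : ((2 * (k - 1) : ℕ) : ℝ) ≤ scount p v := by exact_mod_cast h3
      rw [Nat.cast_mul, Nat.cast_sub hk1] at this
      push_cast at this
      linarith
    have := log_sub_le (by linarith) h4
    convert this using 3
    ring

lemma treeSum_oneF {k : ℕ} (hk : 1 ≤ k) : treeSum oneF k = (k : ℝ) ^ (k - 1) := by
  have : ∀ v : Fin k, ∑ q ∈ trees Finset.univ v, oneF k q v = (k : ℝ) ^ (k - 2) := by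
    intro v
    simp only [oneF, Finset.sum_const, card_trees (Finset.mem_univ v)]
    simp
  rw [treeSum, Finset.sum_congr rfl fun v _ => this v]
  simp only [Finset.sum_const, Finset.card_univ, Fintype.card_fin, nsmul_eq_mul]
  rcases Nat.lt_or_ge k 2 with h | h
  · have : k = 1 := by omega
    simp [this]
  · rw [← pow_succ']; congr 1; omega

lemma sum_ite_children {n : ℕ} {r : Fin n} {p : Fin n → Fin n} (k : ℕ) (f : Fin n → ℝ) :
    ∑ v ∈ (Finset.univ.erase r).filter (fun v => (Dset p v).card = k),
        (if p v = r then f v else 0) =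
      ∑ v ∈ (children p r).filter (fun v => (Dset p v).card = k), f v := by
  rw [← Finset.sum_filter]
  refine Finset.sum_congr ?_ fun _ _ => rfl
  ext v
  simp only [Finset.mem_filter, Finset.mem_erase, Finset.mem_univ, mem_children, and_true]
  tauto

/-- Among the rooted trees on `k` vertices, `k (k - 1)^{k - 2}` have a root with exactly one
child: this happens precisely when some child of the root has a fringe subtree of size `k - 1`. -/
lemma treeSum_singleF {k : ℕ} (hk : 2 ≤ k) :
    treeSum singleF k = (k : ℝ) * ((k - 1 : ℕ) : ℝ) ^ (k - 2) := by
  have hpt : ∀ v : Fin k, ∀ p ∈ trees Finset.univ v, singleF k p v =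
      ∑ w ∈ (Finset.univ.erase v).filter (fun w => (Dset p w).card = k - 1),
        (if p w = v then oneF k p w else 0) := by
    intro v p hp
    have hp := mem_trees.1 hp
    rw [sum_ite_children]
    simp only [oneF, singleF, Finset.sum_const, nsmul_eq_mul, mul_one]
    have hD := hp.card_Dset v
    rw [hp.Dset_root (Finset.mem_univ v), Finset.card_univ, Fintype.card_fin] at hD
    split_ifs with h
    · obtain ⟨w, hw⟩ := Finset.card_eq_one.1 h
      rw [hw, Finset.sum_singleton] at hD
      rw [hw, Finset.filter_singleton, if_pos (by omega)]
      simp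
    · have : (children p v).filter (fun w => (Dset p w).card = k - 1) = ∅ := by
        rw [Finset.filter_eq_empty_iff]
        intro w hw hwk
        rw [← Finset.add_sum_erase _ _ hw] at hD
        have h0 : ∑ x ∈ (children p v).erase w, (Dset p x).card = 0 := by omega
        have hE : (children p v).erase w = ∅ := by
          rw [Finset.eq_empty_iff_forall_notMem]
          intro x hx
          have := Finset.sum_eq_zero_iff.1 h0 x hx
          rw [Finset.card_eq_zero] at this
          exact absurd (self_mem_Dset p x) (by simp [this])
        apply h
        rw [← Finset.card_erase_add_one hw, hE, Finset.card_empty]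
      rw [this]; simp
  have hv : ∀ v : Fin k, ∑ p ∈ trees Finset.univ v, singleF k p v =
      ((k - 1 : ℕ) : ℝ) ^ (k - 2) := by
    intro v
    rw [Finset.sum_congr rfl (hpt v), first_moment_children oneF_inv (Finset.mem_univ v),
      treeSum_oneF (by omega), Finset.card_univ, Fintype.card_fin, Nat.choose_self,
      show k - (k - 1) = 1 by omega, show k - 1 - 1 = k - 2 by omega]
    simp
  rw [treeSum, Finset.sum_congr rfl fun v _ => hv v]
  simp

/-- Summing the recursion `s(v) = ∏ (1 + s(w))` over all rooted trees on `l` vertices. -/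
lemma treeSum_sF {l : ℕ} : treeSum sF l =
    ∑ k ∈ Finset.Icc 1 (l - 1),
      ((l - k : ℕ) : ℝ) ^ (l - k - 1) * (l.choose (l - k)) * treeSum gF k := by
  have hpt : ∀ v : Fin l, ∀ p ∈ trees Finset.univ v, sF l p v =
      ∑ k ∈ Finset.Icc 1 (l - 1),
        ∑ w ∈ (Finset.univ.erase v).filter (fun w => (Dset p w).card = k),
          (if p w = v then gF l p w else 0) := by
    intro v p hp
    have hp := mem_trees.1 hp
    simp only [sum_ite_children]
    rw [Finset.sum_fiberwise_of_maps_to]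
    · simp only [sF, gF]
      rw [hp.scount_eq v]
      push_cast
      rw [Real.log_prod]
      intro w _
      positivity
    · intro w hw
      have hD := hp.card_Dset v
      rw [hp.Dset_root (Finset.mem_univ v), Finset.card_univ, Fintype.card_fin,
        ← Finset.add_sum_erase _ _ hw] at hD
      have : 0 < (Dset p w).card := Finset.card_pos.2 ⟨w, self_mem_Dset _ _⟩
      rw [Finset.mem_Icc]; omega
  have hv : ∀ v : Fin l, ∑ p ∈ trees Finset.univ v, sF l p v =
      ∑ k ∈ Finset.Icc 1 (l - 1),
        ((l - 1).choose k : ℝ) * treeSum gF k * ((l - k : ℕ) : ℝ) ^ (l - k - 2) := by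
    intro v
    rw [Finset.sum_congr rfl (hpt v), Finset.sum_comm]
    refine Finset.sum_congr rfl fun k _ => ?_
    rw [first_moment_children gF_inv (Finset.mem_univ v), Finset.card_univ, Fintype.card_fin]
  rw [treeSum, Finset.sum_congr rfl fun v _ => hv v]
  simp only [Finset.sum_const, Finset.card_univ, Fintype.card_fin, nsmul_eq_mul]
  rw [Finset.mul_sum]
  refine Finset.sum_congr rfl fun k hk => ?_
  rw [Finset.mem_Icc] at hk
  have hch : l * (l - 1).choose k = (l - k) * l.choose (l - k) := by
    rw [Nat.choose_symm (by omega)]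
    obtain ⟨m, rfl⟩ : ∃ m, l = m + 1 := ⟨l - 1, by omega⟩
    have h1 := Nat.add_one_mul_choose_eq m k
    have h2 := Nat.choose_succ_right_eq (m + 1) k
    rw [Nat.add_sub_cancel]
    rw [h1, h2, mul_comm]
  have hch' : (l : ℝ) * (l - 1).choose k = ((l - k : ℕ) : ℝ) * l.choose (l - k) := by
    exact_mod_cast hch
  have hpow : ((l - k : ℕ) : ℝ) ^ (l - k - 1) =
      ((l - k : ℕ) : ℝ) * ((l - k : ℕ) : ℝ) ^ (l - k - 2) := by
    rcases Nat.lt_or_ge (l - k) 2 with h | h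
    · have : l - k = 1 := by omega
      simp [this]
    · rw [← pow_succ']; congr 1; omega
  rw [hpow, ← mul_assoc, ← mul_assoc, hch']
  ring

/-- `e^{-k} / k!`: the asymptotic density of fringe subtrees equal to a given rooted tree on
`k` vertices. -/
noncomputable def dens (k : ℕ) : ℝ := Real.exp (-(k : ℝ)) / (Nat.factorial k)

/-- Substituting `treeSum_sF` and exchanging the order of summation collects the coefficient
`fK K k` of `treeSum gF k`. -/
lemma sum_dens_eq_fK (K : ℕ) :
    ∑ k ∈ Finset.Icc 1 K, dens k * (treeSum gF k - treeSum sF k) =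
      ∑ k ∈ Finset.Icc 1 K, fK K k * treeSum gF k := by
  simp only [mul_sub, Finset.sum_sub_distrib, treeSum_sF, fK, sub_mul, Finset.mul_sum,
    Finset.sum_mul]
  congr 1
  rw [Finset.sum_comm' (t' := Finset.Icc 1 K) (s' := fun k => Finset.Icc (k + 1) K)]
  · refine Finset.sum_congr rfl fun k _ => Finset.sum_congr rfl fun l _ => ?_
    rw [dens]; ring
  · intro l k
    simp only [Finset.mem_Icc]
    omega

lemma gval_pos {k : ℕ} (T : SimpleGraph (Fin k)) (v : Fin k) : (0 : ℝ) < gval T v := by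
  unfold gval; positivity

lemma xi4_pos (K : ℕ) : 0 < xi4 K := by
  unfold xi4
  refine Finset.prod_pos fun k _ => Finset.prod_pos fun T _ => Finset.prod_pos fun v _ => ?_
  split_ifs
  · exact Real.rpow_pos_of_pos (gval_pos T v) _
  · exact one_pos

lemma log_xi4 (K : ℕ) :
    Real.log (xi4 K) = ∑ k ∈ Finset.Icc 1 K, dens k * (treeSum gF k - treeSum sF k) := by
  rw [sum_dens_eq_fK, xi4]
  have hpos : ∀ k, ∀ T : SimpleGraph (Fin k), ∀ v : Fin k,
      0 < (if T.IsTree then ((gval T v : ℝ)) ^ (fK K k) else 1) := by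
    intro k T v
    split_ifs
    · exact Real.rpow_pos_of_pos (gval_pos T v) _
    · exact one_pos
  rw [Real.log_prod fun k _ => (Finset.prod_pos fun T _ => Finset.prod_pos fun v _ =>
    hpos k T v).ne']
  refine Finset.sum_congr rfl fun k _ => ?_
  rw [Real.log_prod fun T _ => (Finset.prod_pos fun v _ => hpos k T v).ne']
  rw [Finset.sum_congr rfl fun T _ => Real.log_prod fun v _ => (hpos k T v).ne',
    Finset.sum_comm, treeSum, Finset.mul_sum]
  refine Finset.sum_congr rfl fun v _ => ?_
  rw [Finset.mul_sum]
  have h1 : ∀ T : SimpleGraph (Fin k),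
      Real.log (if T.IsTree then ((gval T v : ℝ)) ^ (fK K k) else 1) =
        if T.IsTree then fK K k * Real.log (gval T v) else 0 := by
    intro T
    split_ifs
    · exact Real.log_rpow (gval_pos T v) _
    · exact Real.log_one
  rw [Finset.sum_congr rfl fun T _ => h1 T, ← Finset.sum_filter,
    sum_isTree v fun T => fK K k * Real.log (gval T v)]
  refine Finset.sum_congr rfl fun p hp => ?_
  rw [gval_parentGraph (mem_trees.1 hp), gF]
  push_cast
  rfl

lemma treeSum_phiF_small {K k : ℕ} (h : k ≤ K) :
    treeSum (phiF K k) k = treeSum gF k - treeSum sF k := by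
  simp only [treeSum, phiF, if_pos h, gF, sF, Finset.sum_sub_distrib]

lemma treeSum_phiF_large {K k : ℕ} (h : K < k) (hk : 2 ≤ k) :
    treeSum (phiF K k) k =
      ((k * (k - 1) ^ (k - 2) : ℕ) : ℝ) * Real.log (((k : ℝ) + 1) / k) +
      ((k ^ (k - 1) - k * (k - 1) ^ (k - 2) : ℕ) : ℝ) *
        Real.log ((2 * (k : ℝ) - 1) / (2 * k - 2)) := by
  have h1 : treeSum (phiF K k) k =
      treeSum singleF k * Real.log (((k : ℝ) + 1) / k) +
      (treeSum oneF k - treeSum singleF k) * Real.log ((2 * (k : ℝ) - 1) / (2 * k - 2)) := by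
    simp only [treeSum, ← Finset.sum_sub_distrib, Finset.sum_mul, ← Finset.sum_add_distrib]
    refine Finset.sum_congr rfl fun v _ => Finset.sum_congr rfl fun q _ => ?_
    simp only [phiF, singleF, oneF, if_neg (not_le.2 h)]
    split_ifs <;> ring
  have hle : treeSum singleF k ≤ treeSum oneF k := by
    refine Finset.sum_le_sum fun v _ => Finset.sum_le_sum fun q _ => ?_
    simp only [singleF, oneF]
    split_ifs <;> norm_num
  rw [h1]
  rw [treeSum_singleF hk, treeSum_oneF (by omega)] at *
  have hle' : k * (k - 1) ^ (k - 2) ≤ k ^ (k - 1) := by exact_mod_cast hle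
  rw [Nat.cast_sub hle']
  push_cast
  rfl

/-- The logarithm of the claimed constant is the asymptotic density of `phiF` over fringe
subtrees of size at most `Khat`, plus the contribution of the remaining vertices. -/
lemma log_xi {K Khat : ℕ} (hK : 1 ≤ K) (hKhat : K < Khat) :
    0 < xi1 Khat * xi2 K Khat * xi3 K Khat * xi4 K ∧
    Real.log (xi1 Khat * xi2 K Khat * xi3 K Khat * xi4 K) =
      Real.log (((Khat : ℝ) + 1) / Khat) + ∑ k ∈ Finset.Icc 1 Khat,
        (dens k * treeSum (phiF K k) k -
          Real.log (((Khat : ℝ) + 1) / Khat) * (dens k * treeSum oneF k)) := by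
  have hb1 : (0 : ℝ) < ((Khat : ℝ) + 1) / Khat := by
    have : (0 : ℝ) < Khat := by exact_mod_cast (by omega : 0 < Khat)
    positivity
  have hk2 : ∀ k ∈ Finset.Icc (K + 1) Khat, (2 : ℝ) ≤ k := by
    intro k hk
    rw [Finset.mem_Icc] at hk
    exact_mod_cast (by omega : 2 ≤ k)
  have hb2 : ∀ k ∈ Finset.Icc (K + 1) Khat, (0 : ℝ) < ((k : ℝ) + 1) / k := by
    intro k hk
    have := hk2 k hk
    positivity
  have hb3 : ∀ k ∈ Finset.Icc (K + 1) Khat, (0 : ℝ) < (2 * (k : ℝ) - 1) / (2 * (k : ℝ) - 2) := by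
    intro k hk
    have := hk2 k hk
    exact div_pos (by linarith) (by linarith)
  have h1 : 0 < xi1 Khat := Real.rpow_pos_of_pos hb1 _
  have h2 : 0 < xi2 K Khat :=
    Finset.prod_pos fun k hk => Real.rpow_pos_of_pos (hb2 k hk) _
  have h3 : 0 < xi3 K Khat :=
    Finset.prod_pos fun k hk => Real.rpow_pos_of_pos (hb3 k hk) _
  have h4 := xi4_pos K
  refine ⟨by positivity, ?_⟩
  rw [Real.log_mul (by positivity) h4.ne', Real.log_mul (by positivity) h3.ne',
    Real.log_mul h1.ne' h2.ne', log_xi4]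
  have e1 : Real.log (xi1 Khat) = Real.log (((Khat : ℝ) + 1) / Khat) -
      ∑ k ∈ Finset.Icc 1 Khat,
        Real.log (((Khat : ℝ) + 1) / Khat) * (dens k * treeSum oneF k) := by
    rw [xi1, Real.log_rpow hb1, hfun, ← Finset.mul_sum, sub_mul, one_mul,
      mul_comm (Finset.sum _ _)]
    congr 2
    refine Finset.sum_congr rfl fun k hk => ?_
    rw [treeSum_oneF (Finset.mem_Icc.1 hk).1, dens]
    ring
  have e23 : Real.log (xi2 K Khat) + Real.log (xi3 K Khat) =
      ∑ k ∈ Finset.Icc (K + 1) Khat, dens k * treeSum (phiF K k) k := by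
    rw [xi2, xi3, Real.log_prod fun k hk => (Real.rpow_pos_of_pos (hb2 k hk) _).ne',
      Real.log_prod fun k hk => (Real.rpow_pos_of_pos (hb3 k hk) _).ne',
      ← Finset.sum_add_distrib]
    refine Finset.sum_congr rfl fun k hk => ?_
    rw [Real.log_rpow (hb2 k hk), Real.log_rpow (hb3 k hk)]
    rw [Finset.mem_Icc] at hk
    rw [treeSum_phiF_large (by omega) (by omega), dens]
    ring
  have e4 : ∑ k ∈ Finset.Icc 1 K, dens k * (treeSum gF k - treeSum sF k) =
      ∑ k ∈ Finset.Icc 1 K, dens k * treeSum (phiF K k) k :=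
    Finset.sum_congr rfl fun k hk => by rw [treeSum_phiF_small (Finset.mem_Icc.1 hk).2]
  have hsplit : ∑ k ∈ Finset.Icc 1 K, dens k * treeSum (phiF K k) k +
      ∑ k ∈ Finset.Icc (K + 1) Khat, dens k * treeSum (phiF K k) k =
      ∑ k ∈ Finset.Icc 1 Khat, dens k * treeSum (phiF K k) k := by
    rw [← Finset.sum_union]
    · refine Finset.sum_congr ?_ fun _ _ => rfl
      ext k
      simp only [Finset.mem_union, Finset.mem_Icc]
      omega
    · rw [Finset.disjoint_left]
      intro k
      simp only [Finset.mem_Icc]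
      omega
  rw [Finset.sum_sub_distrib, ← hsplit, e1, e4]
  linarith

/-! ### The upper bound -/

/-- The deterministic bound: vertices with fringe subtree of size more than `Khat` contribute at
most `log ((Khat + 1) / Khat)` each, the others at most `phiF`. -/
lemma log_scount_le {K Khat n : ℕ} {r : Fin n} {p : Fin n → Fin n} (hp : IsRT Finset.univ r p)
    (hK : 1 ≤ K) (hKhat : K < Khat) :
    Real.log (scount p r) ≤ Real.log (((Khat : ℝ) + 1) / Khat) * n +
      ∑ k ∈ Finset.Icc 1 Khat, (fringeSum (phiF K k) k Finset.univ r p -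
        Real.log (((Khat : ℝ) + 1) / Khat) * fringeSum oneF k Finset.univ r p) := by
  have hKh : (0 : ℝ) < Khat := by exact_mod_cast (by omega : 0 < Khat)
  set C := Real.log (((Khat : ℝ) + 1) / Khat) with hC
  have hC0 : 0 ≤ C := by
    apply Real.log_nonneg
    rw [le_div_iff₀ hKh]; linarith
  rw [hp.log_scount_root]
  have hv : ∀ v ∈ (Finset.univ : Finset (Fin n)).erase r,
      Real.log (1 + scount p v) - Real.log (scount p v) ≤
        C + ∑ k ∈ Finset.Icc 1 Khat,
          if (Dset p v).card = k then phiF K k n p v - C else 0 := by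
    intro v _
    rw [Finset.sum_ite_eq]
    have h1 : 1 ≤ (Dset p v).card := Finset.card_pos.2 ⟨v, self_mem_Dset _ _⟩
    split_ifs with h
    · have := le_phiF (v := v) hp hK rfl
      linarith
    · rw [add_zero]
      apply log_sub_le hKh
      have h2 : Khat < (Dset p v).card := by
        rw [Finset.mem_Icc] at h; omega
      exact_mod_cast h2.le.trans (hp.card_le_scount v)
  refine (Finset.sum_le_sum hv).trans ?_
  rw [Finset.sum_add_distrib, Finset.sum_comm]
  refine add_le_add ?_ (le_of_eq ?_)
  · rw [Finset.sum_const, nsmul_eq_mul, mul_comm]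
    refine mul_le_mul_of_nonneg_left ?_ hC0
    have := Finset.card_le_univ ((Finset.univ : Finset (Fin n)).erase r)
    rw [Fintype.card_fin] at this
    exact_mod_cast this
  · refine Finset.sum_congr rfl fun k _ => ?_
    rw [← Finset.sum_filter, Finset.sum_sub_distrib, fringeSum, fringeSum, Finset.mul_sum]
    simp only [oneF, mul_one]

/-- The event that some fringe statistic of size at most `Khat` is at least `δ n` away
from its asymptotic mean. -/
def Deviates (K Khat : ℕ) (δ : ℝ) {n : ℕ} (r : Fin n) (p : Fin n → Fin n) : Prop :=
  ∃ k ∈ Finset.Icc 1 Khat,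
    δ * n ≤ |fringeSum (phiF K k) k Finset.univ r p - dens k * treeSum (phiF K k) k * n| ∨
    δ * n ≤ |fringeSum oneF k Finset.univ r p - dens k * treeSum oneF k * n|

/-- Union bound over the finitely many statistics involved. -/
lemma card_deviates_le {K Khat : ℕ} (hK : 1 ≤ K) {δ η : ℝ} (hδ : 0 < δ) (hη : 0 < η) :
    ∀ᶠ n : ℕ in atTop, ∀ r : Fin n,
      (((trees Finset.univ r).filter (Deviates K Khat δ r)).card : ℝ) ≤
        2 * Khat * η * (n : ℝ) ^ (n - 2) := by
  have h1 : ∀ᶠ n : ℕ in atTop, ∀ k ∈ Finset.Icc 1 Khat, ∀ r : Fin n,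
      (((trees Finset.univ r).filter fun p => δ * n ≤ |fringeSum (phiF K k) k Finset.univ r p -
        dens k * treeSum (phiF K k) k * n|).card : ℝ) ≤ η * (n : ℝ) ^ (n - 2) := by
    rw [Filter.eventually_all_finset]
    intro k hk
    have hk := (Finset.mem_Icc.1 hk).1
    exact concentration (phiF_inv K k) (phiF_nonneg hk hK) (phiF_le hk hK) k hδ hη
  have h2 : ∀ᶠ n : ℕ in atTop, ∀ k ∈ Finset.Icc 1 Khat, ∀ r : Fin n,
      (((trees Finset.univ r).filter fun p => δ * n ≤ |fringeSum oneF k Finset.univ r p -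
        dens k * treeSum oneF k * n|).card : ℝ) ≤ η * (n : ℝ) ^ (n - 2) := by
    rw [Filter.eventually_all_finset]
    intro k hk
    exact concentration oneF_inv (fun _ _ _ => zero_le_one) (fun _ _ _ => le_refl (1 : ℝ)) k hδ hη
  filter_upwards [h1, h2] with n h1 h2 r
  have hsub : (trees Finset.univ r).filter (Deviates K Khat δ r) ⊆
      (Finset.Icc 1 Khat).biUnion fun k =>
        ((trees Finset.univ r).filter fun p => δ * n ≤
          |fringeSum (phiF K k) k Finset.univ r p - dens k * treeSum (phiF K k) k * n|) ∪
        ((trees Finset.univ r).filter fun p => δ * n ≤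
          |fringeSum oneF k Finset.univ r p - dens k * treeSum oneF k * n|) := by
    intro p hp
    obtain ⟨hp1, k, hk, h⟩ := Finset.mem_filter.1 hp
    refine Finset.mem_biUnion.2 ⟨k, hk, ?_⟩
    rw [Finset.mem_union, Finset.mem_filter, Finset.mem_filter]
    exact h.imp (fun h => ⟨hp1, h⟩) (fun h => ⟨hp1, h⟩)
  have hle := (Finset.card_le_card hsub).trans Finset.card_biUnion_le
  calc (((trees Finset.univ r).filter (Deviates K Khat δ r)).card : ℝ)
      ≤ ∑ k ∈ Finset.Icc 1 Khat, ((
        ((trees Finset.univ r).filter fun p => δ * n ≤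
          |fringeSum (phiF K k) k Finset.univ r p - dens k * treeSum (phiF K k) k * n|) ∪
        ((trees Finset.univ r).filter fun p => δ * n ≤
          |fringeSum oneF k Finset.univ r p - dens k * treeSum oneF k * n|)).card : ℝ) := by
        exact_mod_cast hle
    _ ≤ ∑ k ∈ Finset.Icc 1 Khat, (η * (n : ℝ) ^ (n - 2) + η * (n : ℝ) ^ (n - 2)) := by
        refine Finset.sum_le_sum fun k hk => ?_
        refine le_trans ?_ (add_le_add (h1 k hk r) (h2 k hk r))
        exact_mod_cast Finset.card_union_le _ _
    _ = 2 * Khat * η * (n : ℝ) ^ (n - 2) := by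
        rw [Finset.sum_const, Nat.card_Icc, nsmul_eq_mul, Nat.add_sub_cancel]
        ring

lemma log_scount_le_of_not_deviates {K Khat n : ℕ} {r : Fin n} {p : Fin n → Fin n}
    (hp : IsRT Finset.univ r p) (hK : 1 ≤ K) (hKhat : K < Khat) {δ : ℝ}
    (hdev : ¬ Deviates K Khat δ r p) :
    Real.log (scount p r) ≤ n * Real.log (xi1 Khat * xi2 K Khat * xi3 K Khat * xi4 K) +
      Khat * (1 + Real.log (((Khat : ℝ) + 1) / Khat)) * δ * n := by
  have hKh : (0 : ℝ) < Khat := by exact_mod_cast (by omega : 0 < Khat)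
  refine (log_scount_le hp hK hKhat).trans ?_
  rw [(log_xi hK hKhat).2]
  set C := Real.log (((Khat : ℝ) + 1) / Khat) with hC
  have hC0 : 0 ≤ C := by
    apply Real.log_nonneg
    rw [le_div_iff₀ hKh]; linarith
  have hk : ∀ k ∈ Finset.Icc 1 Khat,
      fringeSum (phiF K k) k Finset.univ r p - C * fringeSum oneF k Finset.univ r p ≤
      n * (dens k * treeSum (phiF K k) k - C * (dens k * treeSum oneF k)) +
        (1 + C) * δ * n := by
    intro k hk
    rw [Deviates] at hdev
    push Not at hdev
    obtain ⟨h1, h2⟩ := hdev k hk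
    have h3 := (abs_lt.1 h1).2
    have h4 := (abs_lt.1 h2).1
    have h5 := mul_le_mul_of_nonneg_left h4.le hC0
    linarith
  refine (add_le_add le_rfl (Finset.sum_le_sum hk)).trans (le_of_eq ?_)
  rw [Finset.sum_add_distrib, Finset.sum_const, Nat.card_Icc, nsmul_eq_mul, Nat.add_sub_cancel,
    ← Finset.mul_sum]
  ring

/-- Rooting at a fixed vertex `r` turns a uniformly random labelled tree into a uniformly random
element of `trees Finset.univ r`. -/
lemma treeProb_eq {n : ℕ} (r : Fin n) (P : SimpleGraph (Fin n) → Prop) :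
    treeProb n P = (((trees Finset.univ r).filter fun p => P (parentGraph p)).card : ℝ) /
      (n : ℝ) ^ (n - 2) := by
  have h1 : (Nat.card {G : SimpleGraph (Fin n) // G.IsTree ∧ P G} : ℝ) =
      ((trees Finset.univ r).filter fun p => P (parentGraph p)).card := by
    have := sum_isTree r fun G => if P G then (1 : ℝ) else 0
    rw [← Finset.sum_filter, ← Finset.sum_filter, Finset.filter_filter] at this
    simp only [Finset.sum_const, nsmul_eq_mul, mul_one] at this
    rw [← this, Nat.card_eq_fintype_card, Fintype.card_subtype]
  have h2 : (Nat.card {G : SimpleGraph (Fin n) // G.IsTree} : ℝ) = (n : ℝ) ^ (n - 2) := by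
    have := sum_isTree r fun _ => (1 : ℝ)
    simp only [Finset.sum_const, nsmul_eq_mul, mul_one, card_trees (Finset.mem_univ r),
      Finset.card_univ, Fintype.card_fin] at this
    rw [Nat.card_eq_fintype_card, Fintype.card_subtype, this]
    push_cast
    rfl
  rw [treeProb, h1, h2]

/-- For fixed `1 ≤ K < K̂` and every `ε > 0`, a.a.s. `c(𝒯_n) ≤ (ξ₁ξ₂ξ₃ξ₄ + ε)^n`. -/
theorem aas_subtree_upper_bound_xi (K Khat : ℕ) (hK : 1 ≤ K) (hKhat : K < Khat) :
    ∀ ε : ℝ, 0 < ε →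
      Tendsto (fun n : ℕ =>
        treeProb n (fun G =>
          (subtreeCount G : ℝ) ≤ (xi1 Khat * xi2 K Khat * xi3 K Khat * xi4 K + ε) ^ n))
        atTop (𝓝 1) := by
  intro ε hε
  obtain ⟨hξ, -⟩ := log_xi hK hKhat
  have hlogle := fun {n : ℕ} {r : Fin n} {p : Fin n → Fin n} (hp : IsRT Finset.univ r p) {δ : ℝ}
    => log_scount_le_of_not_deviates hp hK hKhat (δ := δ)
  set ξ := xi1 Khat * xi2 K Khat * xi3 K Khat * xi4 K with hξdef
  have hKh : (0 : ℝ) < Khat := by exact_mod_cast (by omega : 0 < Khat)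
  set C := Real.log (((Khat : ℝ) + 1) / Khat) with hC
  have hC0 : 0 ≤ C := by
    apply Real.log_nonneg
    rw [le_div_iff₀ hKh]; linarith
  set γ := Real.log (ξ + ε) - Real.log ξ with hγ
  have hγ0 : 0 < γ := sub_pos.2 (Real.log_lt_log hξ (by linarith))
  -- this `δ` makes the total deviation `γ / 2` per vertex; the other half absorbs `log n`
  set δ := γ / (2 * (Khat * (1 + C))) with hδ
  have hδ0 : 0 < δ := by positivity
  have hδC : Khat * (1 + C) * δ = γ / 2 := by
    rw [hδ]; field_simp
  have hlogn : ∀ᶠ n : ℕ in atTop, Real.log n ≤ γ / 2 * n := by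
    have h := (Real.isLittleO_log_id_atTop.comp_tendsto tendsto_natCast_atTop_atTop).bound
      (half_pos hγ0)
    filter_upwards [h] with n hn
    simpa using (le_abs_self _).trans hn
  rw [Metric.tendsto_nhds]
  intro η hη
  set η' := η / (4 * Khat) with hη'
  have hη0 : 0 < η' := by positivity
  filter_upwards [hlogn, card_deviates_le (Khat := Khat) hK hδ0 hη0, eventually_ge_atTop 1]
    with n hn hdev hn1
  let r : Fin n := ⟨0, hn1⟩
  have hnpos : (0 : ℝ) < n := by exact_mod_cast hn1
  set N : ℝ := (n : ℝ) ^ (n - 2) with hN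
  have hN0 : 0 < N := by positivity
  have hNcard : ((trees (Finset.univ : Finset (Fin n)) r).card : ℝ) = N := by
    rw [card_trees (Finset.mem_univ r), Finset.card_univ, Fintype.card_fin]
    push_cast
    rfl
  have hgood : ∀ p ∈ trees Finset.univ r, ¬ Deviates K Khat δ r p →
      (subtreeCount (parentGraph p) : ℝ) ≤ (ξ + ε) ^ n := by
    intro p hp hd
    have hp := mem_trees.1 hp
    have hs : (0 : ℝ) < scount p r := by exact_mod_cast scount_pos p r
    have h1 : (subtreeCount (parentGraph p) : ℝ) ≤ n * scount p r := by
      exact_mod_cast subtreeCount_le hp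
    refine h1.trans ?_
    rw [← Real.log_le_log_iff (by positivity) (by positivity), Real.log_pow,
      Real.log_mul hnpos.ne' hs.ne']
    have h2 := hlogle hp hd
    rw [hδC] at h2
    have h3 : Real.log (ξ + ε) = Real.log ξ + γ := by rw [hγ]; ring
    rw [h3]
    linarith
  rw [treeProb_eq r, Real.dist_eq]
  set P := fun p : Fin n → Fin n => (subtreeCount (parentGraph p) : ℝ) ≤ (ξ + ε) ^ n with hP
  have hsplit : (((trees Finset.univ r).filter P).card : ℝ) +
      ((trees Finset.univ r).filter fun p => ¬ P p).card = N := by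
    rw [← hNcard]
    exact_mod_cast Finset.card_filter_add_card_filter_not (s := trees Finset.univ r) P
  have hbad : (((trees Finset.univ r).filter fun p => ¬ P p).card : ℝ) ≤ η / 2 * N := by
    have h1 : ((trees Finset.univ r).filter fun p => ¬ P p).card ≤
        ((trees Finset.univ r).filter (Deviates K Khat δ r)).card := by
      refine Finset.card_le_card fun p hp => ?_
      rw [Finset.mem_filter] at hp ⊢
      exact ⟨hp.1, by_contra fun h => hp.2 (hgood p hp.1 h)⟩
    have h2 : 2 * Khat * η' = η / 2 := by rw [hη']; field_simp; ring
    have h3 := hdev r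
    rw [h2] at h3
    exact le_trans (by exact_mod_cast h1) h3
  rw [show (((trees Finset.univ r).filter P).card : ℝ) / N - 1 =
    -((((trees Finset.univ r).filter fun p => ¬ P p).card : ℝ) / N) by
      rw [eq_comm, neg_eq_iff_eq_neg, ← hsplit]; field_simp [hsplit.symm ▸ hN0.ne']; ring,
    abs_neg, abs_of_nonneg (by positivity)]
  calc _ ≤ η / 2 := (div_le_iff₀ hN0).2 hbad
    _ < η := half_lt_self hη
end

section
/- Fix an integer k ≥ 2, and let X_k be the number of k-element subsets S ⊆ {1,…,n} such that the subgraph of 𝒯_n induced by S is a star K_{1,k−1} and exactly one edge of 𝒯_n joins S to its complement, with that edge incident to the centre of the star. Then for every ε > 0, the probability that (1−ε)·n·e^{−k}/(k−1)! ≤ X_k ≤ (1+ε)·n·e^{−k}/(k−1)! tends to 1 as n → ∞. -/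
/-!
The proof is the second moment method, with exact counts of trees as input.

Deleting a set `L` of leaves with prescribed neighbours outside `L` is a bijection onto the trees
on the remaining vertices (`card_leavesAt`). Hence, for at least three vertices,
`(n - |L|) ^ |L| * T (n - |L|)` trees have all of `L` among their leaves (`card_leaves`), where
`T m` is the number of labelled trees on `m` vertices. As every tree has a leaf,
inclusion–exclusion over `L` gives a recurrence for `T`, and since the `n`-th finite difference of
`x ^ (n - 2)` vanishes, it is solved by Cayley's formula `T n = n ^ (n - 2)` (`numTrees_eq`).

A pendant star of size `k = j + 1` is a centre `c` together with a set `L` of `j` leaves attached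
to `c`, such that `c` becomes a leaf once `L` is deleted. So a given pair `(c, L)` is a pendant star
in `(n - k) * T (n - k)` trees (`card_isStarAt`), and two disjoint pairs are both pendant stars in
at most `(n - 2k) ^ 2 * T (n - 2k)` trees (`card_isStarAt_pair_le`). Distinct pendant stars in a
large tree are disjoint (`isStarAt_eq_or_disjoint`). With `N = n * (n - 1).choose j ~ n ^ k / j!`
the number of pairs `(c, L)` and `a = e ^ (-k) / j!`, Cayley's formula gives `E X ~ a n` and
`E X² ≤ E X + N² (n - 2k) ^ (n - 2k) / n ^ (n - 2)`, the last term being asymptotic to `(a n)²`.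
Chebyshev's inequality around `a n` finishes the proof.
-/

open Filter Topology

/-- `S` is a pendant star of size `k` in `G`: `S` has `k` elements, induces a star
`K_{1,k-1}` in `G` with centre `c`, and exactly one edge of `G` joins `S` to its
complement, with that edge incident to `c`. -/
def IsPendantStar {n : ℕ} (G : SimpleGraph (Fin n)) (k : ℕ) (S : Finset (Fin n)) : Prop :=
  S.card = k ∧ ∃ c ∈ S,
    (∀ x ∈ S, x ≠ c → G.Adj c x) ∧
    (∀ x ∈ S, ∀ y ∈ S, G.Adj x y → x = c ∨ y = c) ∧
    (∀ a ∈ S, ∀ b : Fin n, b ∉ S → G.Adj a b → a = c) ∧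
    (∃! b : Fin n, b ∉ S ∧ G.Adj c b)

namespace PendantStar

open Finset SimpleGraph

/-- The number of labelled trees on `n` vertices. -/
noncomputable def numTrees (n : ℕ) : ℕ := Nat.card {G : SimpleGraph (Fin n) // G.IsTree}

/-! ### Gluing leaves onto a tree -/

section Leaves

variable {V : Type*}

lemma reachable_map {W : Type*} {G : SimpleGraph V} {H : SimpleGraph W} (r : V → W)
    (h : ∀ x y, G.Adj x y → r x = r y ∨ H.Adj (r x) (r y)) {x y : V} (hxy : G.Reachable x y) :
    H.Reachable (r x) (r y) := by
  obtain ⟨p⟩ := hxy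
  induction p with
  | nil => exact Reachable.refl _
  | cons hadj _ ih =>
    rcases h _ _ hadj with h1 | h1
    · rw [h1]; exact ih
    · exact h1.reachable.trans ih

/-- The graph left after deleting the vertices in `L`. -/
abbrev del (G : SimpleGraph V) (L : Finset V) : SimpleGraph {x // x ∉ L} :=
  G.comap Subtype.val

/-- Every vertex `x ∈ L` is a leaf of `G` whose only neighbour is `f x`. -/
def LeavesAt (G : SimpleGraph V) (L : Finset V) (f : V → V) : Prop :=
  ∀ x ∈ L, ∀ y, G.Adj x y ↔ y = f x

/-- The graph on `V` obtained from a graph `H` on the complement of `L` by joining every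
`x ∈ L` to `f x`. -/
def attach (L : Finset V) (f : V → V) (hf : ∀ x ∈ L, f x ∉ L) (H : SimpleGraph {x // x ∉ L}) :
    SimpleGraph V where
  Adj x y := (∃ hx hy, H.Adj ⟨x, hx⟩ ⟨y, hy⟩) ∨ (x ∈ L ∧ y = f x) ∨ (y ∈ L ∧ x = f y)
  symm := ⟨by
    rintro x y (⟨hx, hy, h⟩ | h | h)
    · exact Or.inl ⟨hy, hx, h.symm⟩
    · exact Or.inr (Or.inr h)
    · exact Or.inr (Or.inl h)⟩
  loopless := ⟨by
    rintro x (⟨hx, hy, h⟩ | ⟨h, h'⟩ | ⟨h, h'⟩)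
    · exact H.irrefl h
    · exact hf x h (h' ▸ h)
    · exact hf x h (h' ▸ h)⟩

variable {L : Finset V} {f : V → V}

lemma del_attach (hf : ∀ x ∈ L, f x ∉ L) (H : SimpleGraph {x // x ∉ L}) :
    del (attach L f hf H) L = H := by
  ext ⟨x, hx⟩ ⟨y, hy⟩
  simp [attach, hx, hy]

lemma leavesAt_attach (hf : ∀ x ∈ L, f x ∉ L) (H : SimpleGraph {x // x ∉ L}) :
    LeavesAt (attach L f hf H) L f := by
  intro x hx y
  simp only [attach, hx, true_and, not_true_eq_false, IsEmpty.exists_iff, false_or]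
  constructor
  · rintro (h | ⟨h, h'⟩)
    · exact h
    · exact absurd hx (h' ▸ hf y h)
  · exact Or.inl

lemma attach_del (hf : ∀ x ∈ L, f x ∉ L) {G : SimpleGraph V} (hG : LeavesAt G L f) :
    attach L f hf (del G L) = G := by
  ext x y
  simp only [attach, comap_adj, exists_prop]
  constructor
  · rintro (⟨_, _, h⟩ | ⟨h, h'⟩ | ⟨h, h'⟩)
    · exact h
    · exact (hG x h y).2 h'
    · exact ((hG y h x).2 h').symm
  · intro h
    by_cases hx : x ∈ L
    · exact Or.inr (Or.inl ⟨hx, (hG x hx y).1 h⟩)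
    by_cases hy : y ∈ L
    · exact Or.inr (Or.inr ⟨hy, (hG y hy x).1 h.symm⟩)
    exact Or.inl ⟨hx, hy, h⟩

/-- Sends a leaf in `L` to its neighbour and fixes the remaining vertices. -/
noncomputable def retract (L : Finset V) (f : V → V) (hf : ∀ x ∈ L, f x ∉ L) (x : V) :
    {x // x ∉ L} :=
  open scoped Classical in if h : x ∈ L then ⟨f x, hf x h⟩ else ⟨x, h⟩

/-- An edge of `G` is either collapsed by `retract` or joins two vertices outside `L`. -/
lemma retract_adj (hf : ∀ x ∈ L, f x ∉ L) {G : SimpleGraph V} (hG : LeavesAt G L f) {x y : V}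
    (h : G.Adj x y) : retract L f hf x = retract L f hf y ∨ (x ∉ L ∧ y ∉ L) := by
  by_cases hx : x ∈ L
  · left
    have := (hG x hx y).1 h
    subst this
    simp [retract, hx, hf x hx]
  by_cases hy : y ∈ L
  · left
    have := (hG y hy x).1 h.symm
    subst this
    simp [retract, hy, hf y hy]
  exact Or.inr ⟨hx, hy⟩

lemma retract_of_notMem (hf : ∀ x ∈ L, f x ∉ L) {x : V} (hx : x ∉ L) :
    retract L f hf x = ⟨x, hx⟩ := by simp [retract, hx]

lemma isTree_del_iff (hf : ∀ x ∈ L, f x ∉ L) {G : SimpleGraph V} (hG : LeavesAt G L f) :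
    (del G L).IsTree ↔ G.IsTree := by
  constructor
  · intro h
    have hne := h.connected.nonempty
    have key : ∀ x, G.Reachable x (retract L f hf x) := by
      intro x
      by_cases hx : x ∈ L
      · have : G.Adj x (f x) := (hG x hx _).2 rfl
        simpa [retract, hx] using this.reachable
      · simp [retract, hx]
    refine ⟨?_, ?_⟩
    · have : Nonempty V := hne.map Subtype.val
      refine Connected.mk fun x y => ?_
      have h1 := reachable_map (G := del G L) (H := G) Subtype.val (fun _ _ h => Or.inr h)
        (h.connected.preconnected (retract L f hf x) (retract L f hf y))
      exact (key x).trans (h1.trans (key y).symm)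
    · rw [isAcyclic_iff_forall_adj_isBridge]
      intro v w hvw
      rw [isBridge_iff]
      intro hreach
      -- A leaf becomes isolated once its only edge is deleted.
      have leaf : ∀ v w, v ∈ L → G.Adj v w → ¬ (G.deleteEdges {s(v, w)}).Reachable v w := by
        intro v w hv hvw hr
        obtain ⟨p⟩ := hr
        cases p with
        | nil => exact G.irrefl hvw
        | cons h _ =>
          rw [deleteEdges_adj] at h
          have h1 := (hG v hv _).1 h.1
          have h2 := (hG v hv _).1 hvw
          exact h.2 (by simp [h1, h2])
      by_cases hv : v ∈ L
      · exact leaf v w hv hvw hreach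
      by_cases hw : w ∈ L
      · refine leaf w v hw hvw.symm ?_
        rw [Sym2.eq_swap]
        exact hreach.symm
      have hb := isAcyclic_iff_forall_adj_isBridge.1 h.isAcyclic
        (v := ⟨v, hv⟩) (w := ⟨w, hw⟩) hvw
      rw [isBridge_iff] at hb
      apply hb
      have := reachable_map (H := (del G L).deleteEdges {s(⟨v, hv⟩, ⟨w, hw⟩)})
        (retract L f hf) ?_ hreach
      · rwa [retract_of_notMem hf hv, retract_of_notMem hf hw] at this
      · intro x y hxy
        rw [deleteEdges_adj] at hxy
        rcases retract_adj hf hG hxy.1 with h1 | ⟨h1, h2⟩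
        · exact Or.inl h1
        · right
          rw [retract_of_notMem hf h1, retract_of_notMem hf h2, deleteEdges_adj]
          refine ⟨hxy.1, ?_⟩
          have := hxy.2
          simpa using this
  · intro h
    obtain ⟨x0⟩ := h.connected.nonempty
    have : Nonempty {x // x ∉ L} := ⟨retract L f hf x0⟩
    refine ⟨Connected.mk fun x y => ?_, h.isAcyclic.of_comap (Function.Embedding.subtype _)⟩
    have := reachable_map (H := del G L) (retract L f hf) ?_
      (h.connected.preconnected x.1 y.1)
    · rwa [retract_of_notMem hf x.2, retract_of_notMem hf y.2] at this
    · intro x y hxy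
      rcases retract_adj hf hG hxy with h1 | ⟨h1, h2⟩
      · exact Or.inl h1
      · right
        rw [retract_of_notMem hf h1, retract_of_notMem hf h2]
        exact hxy

/-- Deleting prescribed leaves is a bijection onto the trees on the remaining vertices; it
carries any event `p` about the remaining graph along. -/
lemma card_leavesAt (hf : ∀ x ∈ L, f x ∉ L) (p : SimpleGraph {x // x ∉ L} → Prop) :
    Nat.card {G : SimpleGraph V // G.IsTree ∧ LeavesAt G L f ∧ p (del G L)} =
      Nat.card {H : SimpleGraph {x // x ∉ L} // H.IsTree ∧ p H} :=
  Nat.card_congr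
    { toFun := fun G => ⟨del G.1 L, (isTree_del_iff hf G.2.2.1).2 G.2.1, G.2.2.2⟩
      invFun := fun H => ⟨attach L f hf H.1,
        (isTree_del_iff hf (leavesAt_attach hf H.1)).1 (by rw [del_attach]; exact H.2.1),
        leavesAt_attach hf H.1, by rw [del_attach]; exact H.2.2⟩
      left_inv := fun G => Subtype.ext (attach_del hf G.2.2.1)
      right_inv := fun H => Subtype.ext (del_attach hf H.1) }

lemma card_isTree [Fintype V] :
    Nat.card {G : SimpleGraph V // G.IsTree} = numTrees (Fintype.card V) := by
  refine Nat.card_congr ((Fintype.equivFin V).simpleGraph.subtypeEquiv fun G => ?_)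
  exact (Iso.comap (Fintype.equivFin V).symm G).isTree_iff.symm

/-- `x` has exactly one neighbour. -/
def IsLeaf (G : SimpleGraph V) (x : V) : Prop := ∃! y, G.Adj x y

/-- A nonempty set closed under adjacency in a connected graph contains every vertex. -/
lemma card_le_of_closed [Fintype V] {G : SimpleGraph V} (hG : G.Connected) (A : Finset V) {x : V}
    (hx : x ∈ A) (hA : ∀ a b, a ∈ A → G.Adj a b → b ∈ A) : Fintype.card V ≤ A.card := by
  have hall : ∀ a b : V, G.Walk a b → a ∈ A → b ∈ A := by
    intro a b p
    induction p with
    | nil => exact id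
    | cons h _ ih => exact fun ha => ih (hA _ _ ha h)
  rw [← Finset.card_univ]
  refine Finset.card_le_card fun z _ => ?_
  obtain ⟨p⟩ := hG.preconnected x z
  exact hall x z p hx

/-- In a tree on at least three vertices no two leaves are adjacent. -/
lemma not_isLeaf_of_adj [Fintype V] (hV : 3 ≤ Fintype.card V) {G : SimpleGraph V}
    (hG : G.IsTree) {x y : V} (hxy : G.Adj x y) (hx : IsLeaf G x) : ¬ IsLeaf G y := by
  classical
  intro hy
  have hx' : ∀ z, G.Adj x z → z = y := fun z hz => hx.unique hz hxy
  have hy' : ∀ z, G.Adj y z → z = x := fun z hz => hy.unique hz hxy.symm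
  have h1 := card_le_of_closed hG.connected ({x, y} : Finset V) (x := x) (by simp) ?_
  · have := Finset.card_le_two (a := x) (b := y)
    omega
  · intro a b ha hab
    simp only [Finset.mem_insert, Finset.mem_singleton] at ha ⊢
    rcases ha with rfl | rfl
    · exact Or.inr (hx' _ hab)
    · exact Or.inl (hy' _ hab)

/-- The number of trees in which all vertices of `L` are leaves. -/
lemma card_leaves [Fintype V] (hV : 3 ≤ Fintype.card V) (L : Finset V) :
    Nat.card {G : SimpleGraph V // G.IsTree ∧ ∀ x ∈ L, IsLeaf G x} =
      (Fintype.card V - L.card) ^ L.card * numTrees (Fintype.card V - L.card) := by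
  classical
  have hcard : Fintype.card {x // x ∉ L} = Fintype.card V - L.card := by
    rw [Fintype.card_subtype_compl]; simp
  have key : ∀ g : L → {x // x ∉ L},
      Nat.card {G : SimpleGraph V // G.IsTree ∧ ∀ x : L, ∀ y, G.Adj x y ↔ y = g x} =
        numTrees (Fintype.card V - L.card) := by
    intro g
    rw [← hcard, ← card_isTree]
    have hf : ∀ x ∈ L, (fun x => if h : x ∈ L then (g ⟨x, h⟩ : V) else x) x ∉ L := by
      intro x hx
      simp only [hx, dite_true]
      exact (g ⟨x, hx⟩).2
    have := card_leavesAt hf (fun _ => True)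
    simp only [and_true] at this
    rw [← this]
    refine Nat.card_congr (Equiv.subtypeEquivRight fun G => and_congr_right fun _ => ?_)
    simp only [LeavesAt, Subtype.forall]
    refine forall_congr' fun x => forall_congr' fun hx => ?_
    simp [hx]
  have e : {G : SimpleGraph V // G.IsTree ∧ ∀ x ∈ L, IsLeaf G x} ≃
      Σ g : L → {x // x ∉ L},
        {G : SimpleGraph V // G.IsTree ∧ ∀ x : L, ∀ y, G.Adj x y ↔ y = g x} :=
    { toFun := fun G => ⟨fun x => ⟨(G.2.2 x x.2).choose, fun hmem =>
          not_isLeaf_of_adj hV G.2.1 (G.2.2 x x.2).choose_spec.1 (G.2.2 x x.2)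
            (G.2.2 _ hmem)⟩,
        ⟨G.1, G.2.1, fun x y => ⟨fun h => (G.2.2 x x.2).choose_spec.2 y h,
          fun h => h ▸ (G.2.2 x x.2).choose_spec.1⟩⟩⟩
      invFun := fun G => ⟨G.2.1, G.2.2.1, fun x hx => ⟨(G.1 ⟨x, hx⟩ : V),
        (G.2.2.2 ⟨x, hx⟩ _).2 rfl, fun y hy => (G.2.2.2 ⟨x, hx⟩ _).1 hy⟩⟩
      left_inv := fun G => rfl
      right_inv := by
        rintro ⟨g, G, hG, h⟩
        have : ∀ g', (∀ x : L, ∀ y, G.Adj x y ↔ y = ((g' : L → {x // x ∉ L}) x : V)) →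
            g' = g := fun g' hg' => funext fun x => Subtype.ext
              ((h x _).1 ((hg' x _).2 rfl))
        refine Sigma.subtype_ext (this _ fun x y => ?_) rfl
        have hl : IsLeaf G x := ⟨_, (h x _).2 rfl, fun y hy => (h x _).1 hy⟩
        exact ⟨fun h' => hl.choose_spec.2 y h', fun h' => h' ▸ hl.choose_spec.1⟩ }
  rw [Nat.card_congr e, Nat.card_sigma]
  rw [Finset.sum_congr rfl fun g _ => key g]
  simp [hcard]

end Leaves

/-! ### Cayley's formula -/

lemma exists_isLeaf {n : ℕ} (hn : 2 ≤ n) {G : SimpleGraph (Fin n)} (hG : G.IsTree) :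
    ∃ x, IsLeaf G x := by
  classical
  have : Nontrivial (Fin n) := Fin.nontrivial_iff_two_le.2 hn
  obtain ⟨v, hv⟩ := hG.exists_vert_degree_one_of_nontrivial
  exact ⟨v, degree_eq_one_iff_existsUnique_adj.1 hv⟩

lemma numTrees_zero : numTrees 0 = 0 := by
  have : IsEmpty {G : SimpleGraph (Fin 0) // G.IsTree} :=
    ⟨fun G => (G.2.connected.nonempty).elim fun x => x.elim0⟩
  simp [numTrees]

lemma numTrees_one : numTrees 1 = 1 := by
  rw [numTrees, Nat.card_eq_one_iff_unique]
  refine ⟨⟨fun a b => Subtype.ext ?_⟩, ⟨⟨⊥, IsTree.of_subsingleton⟩⟩⟩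
  ext x y
  simp [Subsingleton.elim x y]

lemma numTrees_two : numTrees 2 = 1 := by
  have htop : (⊤ : SimpleGraph (Fin 2)).IsTree :=
    ⟨connected_top, IsAcyclic.of_card_le_two (by simp)⟩
  rw [numTrees, Nat.card_eq_one_iff_unique]
  refine ⟨⟨?_⟩, ⟨⟨⊤, htop⟩⟩⟩
  have key : ∀ G : SimpleGraph (Fin 2), G.IsTree → G = ⊤ := by
    intro G hG
    obtain ⟨x, y, hxy, -⟩ := exists_isLeaf le_rfl hG
    have h01 : G.Adj 0 1 := by
      have hne := hxy.ne
      fin_cases x <;> fin_cases y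
      · exact absurd rfl hne
      · exact hxy
      · exact hxy.symm
      · exact absurd rfl hne
    ext a b
    fin_cases a <;> fin_cases b <;> simp [h01, h01.symm]
  rintro ⟨a, ha⟩ ⟨b, hb⟩
  exact Subtype.ext ((key a ha).trans (key b hb).symm)

/-- Inclusion–exclusion over sets of leaves: every tree on `n ≥ 3` vertices has a leaf. -/
lemma numTrees_recurrence {n : ℕ} (hn : 3 ≤ n) :
    ∑ i ∈ range (n + 1), (-1 : ℤ) ^ i * (n.choose i : ℤ) *
      ((n - i) ^ i * numTrees (n - i) : ℕ) = 0 := by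
  classical
  set T : Finset (SimpleGraph (Fin n)) := univ.filter fun G => G.IsTree with hT
  have h1 : ∀ L : Finset (Fin n), (T.filter fun G => ∀ x ∈ L, IsLeaf G x).card =
      (n - L.card) ^ L.card * numTrees (n - L.card) := by
    intro L
    have := card_leaves (V := Fin n) (by simpa using hn) L
    rw [Fintype.card_fin] at this
    rw [← this, Nat.card_eq_fintype_card, Fintype.card_subtype, hT, filter_filter]
  have h2 : ∑ L ∈ (univ : Finset (Fin n)).powerset, (-1 : ℤ) ^ L.card *
      ((T.filter fun G => ∀ x ∈ L, IsLeaf G x).card : ℤ) = 0 := by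
    have : ∀ L : Finset (Fin n), (-1 : ℤ) ^ L.card *
        ((T.filter fun G => ∀ x ∈ L, IsLeaf G x).card : ℤ) =
        ∑ G ∈ T, if L ⊆ univ.filter (IsLeaf G) then (-1 : ℤ) ^ L.card else 0 := by
      intro L
      rw [← sum_filter, sum_const, nsmul_eq_mul, mul_comm]
      congr 3
      ext G
      simp [subset_iff]
    simp_rw [this]
    rw [sum_comm]
    refine sum_eq_zero fun G hG => ?_
    rw [← sum_filter]
    have hp : (univ : Finset (Fin n)).powerset.filter (· ⊆ univ.filter (IsLeaf G)) =
        (univ.filter (IsLeaf G)).powerset := by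
      ext L; simp
    rw [hp, sum_powerset_neg_one_pow_card, if_neg]
    obtain ⟨x, hx⟩ := exists_isLeaf (by omega) (mem_filter.1 hG).2
    exact ne_empty_of_mem (mem_filter.2 ⟨mem_univ x, hx⟩)
  rw [← h2]
  simp_rw [h1]
  rw [sum_powerset_apply_card
    (fun i => (-1 : ℤ) ^ i * (((n - i) ^ i * numTrees (n - i) : ℕ) : ℤ))]
  simp only [card_univ, Fintype.card_fin, nsmul_eq_mul]
  exact sum_congr rfl fun i _ => by ring

lemma alternating_pow_sum {n : ℕ} (hn : 2 ≤ n) :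
    ∑ i ∈ range (n + 1), (-1 : ℤ) ^ i * (n.choose i : ℤ) * ((n - i : ℕ) : ℤ) ^ (n - 2) = 0 := by
  have h := congrFun (fwdDiff_iter_pow_eq_zero_of_lt (R := ℤ) (show n - 2 < n by omega)) 0
  rw [fwdDiff_iter_eq_sum_shift] at h
  rw [← sum_range_reflect, Pi.zero_apply] at h
  rw [← h]
  refine sum_congr rfl fun i hi => ?_
  have hile : i ≤ n := by simpa [Nat.lt_succ_iff] using hi
  have e2 : n - (n - i) = i := by omega
  simp [e2, Nat.choose_symm hile]

/-- Cayley's formula. -/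
theorem numTrees_eq {n : ℕ} (hn : 1 ≤ n) : numTrees n = n ^ (n - 2) := by
  induction n using Nat.strong_induction_on with
  | _ n ih =>
  rcases (by omega : n = 1 ∨ n = 2 ∨ 3 ≤ n) with rfl | rfl | h3
  · simp [numTrees_one]
  · simp [numTrees_two]
  have h1 := numTrees_recurrence h3
  have h2 := alternating_pow_sum (show 2 ≤ n by omega)
  rw [sum_range_succ'] at h1 h2
  have : ∀ i ∈ range n, (-1 : ℤ) ^ (i + 1) * (n.choose (i + 1) : ℤ) *
      ((n - (i + 1)) ^ (i + 1) * numTrees (n - (i + 1)) : ℕ) =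
      (-1 : ℤ) ^ (i + 1) * (n.choose (i + 1) : ℤ) * ((n - (i + 1) : ℕ) : ℤ) ^ (n - 2) := by
    intro i hi
    have hi := mem_range.1 hi
    congr 1
    rcases (by omega : i + 1 = n ∨ i + 2 = n ∨ i + 3 ≤ n) with h | h | h
    · have : n - 2 ≠ 0 := by omega
      simp [h, numTrees_zero, this]
    · have : n - (i + 1) = 1 := by omega
      simp [this, numTrees_one]
    · rw [ih _ (by omega) (by omega), ← pow_add]
      rw [show i + 1 + (n - (i + 1) - 2) = n - 2 by omega]
      push_cast
      rfl
  rw [sum_congr rfl this] at h1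
  simp at h1 h2
  have : (numTrees n : ℤ) = (n : ℤ) ^ (n - 2) := by linarith
  exact_mod_cast this

/-! ### Pendant stars with prescribed vertices -/

/-- The vertices in `L` are leaves attached to `c`, and `c` has exactly one neighbour
outside `L`; that is, `insert c L` is a pendant star with centre `c` (when `c ∉ L`). -/
def IsStarAt {V : Type*} (G : SimpleGraph V) (c : V) (L : Finset V) : Prop :=
  LeavesAt G L (fun _ => c) ∧ ∃! b, b ∉ L ∧ G.Adj c b

section Stars

variable {V : Type*} {G : SimpleGraph V} {c c' : V} {L L' : Finset V}

lemma isLeaf_del_iff (hc : c ∉ L) :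
    IsLeaf (del G L) ⟨c, hc⟩ ↔ ∃! b, b ∉ L ∧ G.Adj c b := by
  constructor
  · rintro ⟨⟨b, hb⟩, h1, h2⟩
    exact ⟨b, ⟨hb, h1⟩, fun y hy => congrArg Subtype.val (h2 ⟨y, hy.1⟩ hy.2)⟩
  · rintro ⟨b, ⟨hb, h1⟩, h2⟩
    exact ⟨⟨b, hb⟩, h1, fun y hy => Subtype.ext (h2 y ⟨y.2, hy⟩)⟩

lemma card_isStarAt [Fintype V] {j : ℕ} (hc : c ∉ L) (hL : L.card = j)
    (hj : 3 ≤ Fintype.card V - j) :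
    Nat.card {G : SimpleGraph V // G.IsTree ∧ IsStarAt G c L} =
      (Fintype.card V - (j + 1)) * numTrees (Fintype.card V - (j + 1)) := by
  classical
  have hcard : Fintype.card {x // x ∉ L} = Fintype.card V - j := by
    rw [Fintype.card_subtype_compl]; simp [hL]
  have h1 := card_leavesAt (L := L) (f := fun _ => c) (fun _ _ => hc)
    (fun H => IsLeaf H ⟨c, hc⟩)
  simp only [isLeaf_del_iff hc] at h1
  have h2 := card_leaves (V := {x // x ∉ L}) (by rw [hcard]; exact hj) {⟨c, hc⟩}
  simp only [mem_singleton, forall_eq, card_singleton, hcard, pow_one] at h2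
  rw [show Fintype.card V - (j + 1) = Fintype.card V - j - 1 by omega, ← h2, ← h1]
  rfl

/-- For two disjoint prescribed stars only the upper bound on the count is needed. -/
lemma card_isStarAt_pair_le [Fintype V] {j : ℕ} (hc : c ∉ L) (hL : L.card = j) (hc' : c' ∉ L')
    (hL' : L'.card = j) (hcL' : c ∉ L') (hcL : c' ∉ L) (hcc : c ≠ c') (hdisj : Disjoint L L')
    (hj : 3 ≤ Fintype.card V - 2 * j) :
    Nat.card {G : SimpleGraph V // G.IsTree ∧ IsStarAt G c L ∧ IsStarAt G c' L'} ≤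
      (Fintype.card V - 2 * (j + 1)) ^ 2 * numTrees (Fintype.card V - 2 * (j + 1)) := by
  classical
  have hcard : Fintype.card {x // x ∉ L ∪ L'} = Fintype.card V - 2 * j := by
    rw [Fintype.card_subtype_compl]
    simp only [Fintype.card_coe, card_union_of_disjoint hdisj, hL, hL']
    omega
  have hcu : c ∉ L ∪ L' := by simp [hc, hcL']
  have hcu' : c' ∉ L ∪ L' := by simp [hc', hcL]
  have hf : ∀ x ∈ L ∪ L', (fun x => if x ∈ L then c else c') x ∉ L ∪ L' := by
    intro x _
    dsimp only
    split_ifs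
    exacts [hcu, hcu']
  have h1 := card_leavesAt hf (fun H => ∀ x ∈ ({⟨c, hcu⟩, ⟨c', hcu'⟩} : Finset _), IsLeaf H x)
  have h2 := card_leaves (V := {x // x ∉ L ∪ L'}) (by rw [hcard]; exact hj)
    {⟨c, hcu⟩, ⟨c', hcu'⟩}
  rw [card_pair (by simpa using hcc), hcard] at h2
  rw [show Fintype.card V - 2 * (j + 1) = Fintype.card V - 2 * j - 2 by omega, ← h2, ← h1]
  -- The outside neighbour of one centre is not a leaf of the other star.
  have leaf : ∀ {G : SimpleGraph V} {c c' : V} {L L' : Finset V} (hcu : c ∉ L ∪ L'), c ≠ c' →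
      IsStarAt G c L → IsStarAt G c' L' → IsLeaf (del G (L ∪ L')) ⟨c, hcu⟩ := by
    intro G c c' L L' hcu hcc h h'
    rw [isLeaf_del_iff]
    obtain ⟨b, ⟨hb, hcb⟩, hu⟩ := h.2
    refine ⟨b, ⟨?_, hcb⟩, fun y hy => hu y ⟨fun hm => hy.1 (mem_union_left _ hm), hy.2⟩⟩
    simp only [mem_union, hb, false_or]
    intro hbL'
    exact hcc ((h'.1 b hbL' c).1 hcb.symm)
  refine Nat.card_le_card_of_injective
    (fun G => ⟨G.1, G.2.1, ?_, ?_⟩) (fun G G' h => Subtype.ext (congrArg Subtype.val h :))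
  · intro x hx y
    by_cases hxL : x ∈ L
    · simpa [hxL] using G.2.2.1.1 x hxL y
    · simpa [hxL] using G.2.2.2.1 x ((mem_union.1 hx).resolve_left hxL) y
  · intro x hx
    simp only [mem_insert, mem_singleton] at hx
    rcases hx with rfl | rfl
    · exact leaf hcu hcc G.2.2.1 G.2.2.2
    · have h3 : c' ∉ L' ∪ L := by rwa [union_comm]
      have h4 := leaf h3 hcc.symm G.2.2.2 G.2.2.1
      rw [isLeaf_del_iff] at h4 ⊢
      simpa only [union_comm] using h4

/-- Two pendant stars of the same size in a large tree coincide or are disjoint. -/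
lemma isStarAt_eq_or_disjoint [Fintype V] {j : ℕ} (hj : 1 ≤ j) (hV : j + 3 ≤ Fintype.card V)
    (hG : G.IsTree) (hL : L.card = j) (hL' : L'.card = j)
    (h : IsStarAt G c L) (h' : IsStarAt G c' L') :
    (c = c' ∧ L = L') ∨ (c ∉ L' ∧ c' ∉ L ∧ c ≠ c' ∧ Disjoint L L') := by
  classical
  -- A centre has at least two neighbours, so it is not a leaf.
  have centre : ∀ {c c' : V} {L L' : Finset V}, L.card = j → IsStarAt G c L →
      IsStarAt G c' L' → c ∉ L' := by
    intro c c' L L' hL h h' hm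
    obtain ⟨x, hx⟩ := card_pos.1 (by omega : 0 < L.card)
    obtain ⟨b, ⟨hb, hcb⟩, -⟩ := h.2
    have h1 : G.Adj c x := ((h.1 x hx c).2 rfl).symm
    have h2 := (h'.1 c hm x).1 h1
    have h3 := (h'.1 c hm b).1 hcb
    exact hb (h3.trans h2.symm ▸ hx)
  by_cases hcc : c = c'
  · left
    subst hcc
    refine ⟨rfl, ?_⟩
    by_contra hne
    have : ¬ L' ⊆ L := fun hs => hne (eq_of_subset_of_card_le hs (by omega)).symm
    obtain ⟨y, hyL', hyL⟩ := not_subset.1 this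
    have hcy : G.Adj c y := ((h'.1 y hyL' c).2 rfl).symm
    have hcl := card_le_of_closed hG.connected (insert c (insert y L)) (x := c) (by simp) ?_
    · have h1 := card_insert_le c (insert y L)
      have h2 := card_insert_le y L
      omega
    · intro a b ha hab
      simp only [mem_insert] at ha ⊢
      rcases ha with rfl | rfl | ha
      · by_cases hbL : b ∈ L
        · exact Or.inr (Or.inr hbL)
        · exact Or.inr (Or.inl (h.2.unique ⟨hbL, hab⟩ ⟨hyL, hcy⟩))
      · exact Or.inl ((h'.1 _ hyL' b).1 hab)
      · exact Or.inl ((h.1 a ha b).1 hab)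
  · right
    refine ⟨centre hL h h', centre hL' h' h, hcc, ?_⟩
    rw [Finset.disjoint_left]
    intro x hx hx'
    exact hcc ((h'.1 x hx' c).1 ((h.1 x hx c).2 rfl))

end Stars

/-- The possible (centre, leaf set) pairs of stars with `j` leaves. -/
def stars (n j : ℕ) : Finset (Σ _ : Fin n, Finset (Fin n)) :=
  univ.sigma fun c => powersetCard j (univ.erase c)

lemma mem_stars {n j : ℕ} {p : Σ _ : Fin n, Finset (Fin n)} :
    p ∈ stars n j ↔ p.1 ∉ p.2 ∧ p.2.card = j := by
  simp [stars, mem_powersetCard, subset_erase]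

lemma card_stars (n j : ℕ) : (stars n j).card = n * (n - 1).choose j := by
  simp [stars, card_sigma, card_powersetCard]

open scoped Classical in
/-- The number of (centre, leaf set) pairs of pendant stars of `G` with `j` leaves. -/
noncomputable def starCount {n : ℕ} (j : ℕ) (G : SimpleGraph (Fin n)) : ℕ :=
  ((stars n j).filter fun p => IsStarAt G p.1 p.2).card

/-- A pendant star determines its centre, as the only vertex with a neighbour outside. -/
lemma card_isPendantStar {n : ℕ} (j : ℕ) (G : SimpleGraph (Fin n)) :
    Nat.card {S : Finset (Fin n) // IsPendantStar G (j + 1) S} = starCount j G := by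
  classical
  rw [Nat.card_eq_fintype_card, Fintype.card_subtype, starCount]
  symm
  have hnot : ∀ {c : Fin n} {L : Finset (Fin n)}, IsStarAt G c L → ∀ a ∈ insert c L,
      ∀ b, b ∉ insert c L → G.Adj a b → a = c := by
    intro c L h a ha b hb hab
    rcases mem_insert.1 ha with rfl | ha
    · rfl
    · exact absurd ((h.1 a ha b).1 hab) (fun he => hb (he ▸ mem_insert_self _ _))
  have hout : ∀ {c : Fin n} {L : Finset (Fin n)}, IsStarAt G c L →
      ∃! b, b ∉ insert c L ∧ G.Adj c b := by
    intro c L h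
    obtain ⟨b, ⟨hb, hcb⟩, hu⟩ := h.2
    refine ⟨b, ⟨?_, hcb⟩, fun y hy => hu y ⟨fun hm => hy.1 (mem_insert_of_mem hm), hy.2⟩⟩
    simp [hb, hcb.ne.symm]
  refine card_bij (fun p _ => insert p.1 p.2) ?_ ?_ ?_
  · rintro ⟨c, L⟩ hp
    obtain ⟨hp, h⟩ := mem_filter.1 hp
    obtain ⟨hc, hL⟩ := mem_stars.1 hp
    dsimp only at hc hL h ⊢
    refine mem_filter.2 ⟨mem_univ _, by rw [card_insert_of_notMem hc, hL], c,
      mem_insert_self _ _, ?_, ?_, hnot h, hout h⟩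
    · intro x hx hxc
      exact ((h.1 x ((mem_insert.1 hx).resolve_left hxc) c).2 rfl).symm
    · intro x hx y _ hxy
      rcases mem_insert.1 hx with rfl | hx
      · exact Or.inl rfl
      · exact Or.inr ((h.1 x hx y).1 hxy)
  · rintro ⟨c, L⟩ hp ⟨c', L'⟩ hp' heq
    obtain ⟨hp, h⟩ := mem_filter.1 hp
    obtain ⟨hc, hL⟩ := mem_stars.1 hp
    obtain ⟨hp', h'⟩ := mem_filter.1 hp'
    obtain ⟨hc', hL'⟩ := mem_stars.1 hp'
    dsimp only at hc hL h hc' hL' h' heq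
    obtain ⟨b, ⟨hb, hcb⟩, -⟩ := hout h
    have hcc : c = c' := hnot h' c (heq ▸ mem_insert_self _ _) b (heq ▸ hb) hcb
    subst hcc
    have : L = L' := by
      rw [← erase_insert hc, ← erase_insert hc', heq]
    rw [this]
  · intro S hS
    obtain ⟨-, hcard, c, hcS, h1, h2, h3, h4⟩ := mem_filter.1 hS
    refine ⟨⟨c, S.erase c⟩, mem_filter.2 ⟨mem_stars.2 ⟨notMem_erase _ _, ?_⟩, ?_, ?_⟩,
      insert_erase hcS⟩
    · simp [card_erase_of_mem hcS, hcard]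
    · intro x hx y
      obtain ⟨hxc, hxS⟩ := mem_erase.1 hx
      constructor
      · intro hxy
        by_cases hy : y ∈ S
        · exact (h2 x hxS y hy hxy).resolve_left hxc
        · exact absurd (h3 x hxS y hy hxy) hxc
      · rintro rfl
        exact (h1 x hxS hxc).symm
    · obtain ⟨b, ⟨hb, hcb⟩, hu⟩ := h4
      refine ⟨b, ⟨fun hm => hb (mem_of_mem_erase hm), hcb⟩, fun y hy => hu y ⟨?_, hy.2⟩⟩
      intro hm
      exact hy.1 (mem_erase.2 ⟨hy.2.ne.symm, hm⟩)

/-! ### First and second moments -/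

open scoped Classical in
/-- The finite set of labelled trees on `n` vertices. -/
noncomputable def trees (n : ℕ) : Finset (SimpleGraph (Fin n)) := univ.filter fun G => G.IsTree

lemma card_trees_filter (n : ℕ) (p : SimpleGraph (Fin n) → Prop) [DecidablePred p] :
    ((trees n).filter p).card = Nat.card {G : SimpleGraph (Fin n) // G.IsTree ∧ p G} := by
  classical
  rw [Nat.card_eq_fintype_card, Fintype.card_subtype, trees, filter_filter]

lemma card_trees (n : ℕ) : (trees n).card = numTrees n := by
  classical
  rw [numTrees, Nat.card_eq_fintype_card, Fintype.card_subtype, trees]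

lemma sum_starCount {n j : ℕ} (hn : j + 3 ≤ n) :
    ∑ G ∈ trees n, starCount j G =
      (stars n j).card * ((n - (j + 1)) * numTrees (n - (j + 1))) := by
  classical
  simp_rw [starCount, card_filter]
  rw [sum_comm]
  simp_rw [← card_filter]
  rw [← smul_eq_mul]
  refine sum_eq_card_nsmul fun p hp => ?_
  obtain ⟨hc, hL⟩ := mem_stars.1 hp
  rw [card_trees_filter, card_isStarAt hc hL (by rw [Fintype.card_fin]; omega), Fintype.card_fin]

lemma sum_starCount_sq_le {n j : ℕ} (hj : 1 ≤ j) (hn : 2 * j + 3 ≤ n) :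
    ∑ G ∈ trees n, starCount j G ^ 2 ≤ ∑ G ∈ trees n, starCount j G +
      (stars n j).card ^ 2 * ((n - 2 * (j + 1)) ^ 2 * numTrees (n - 2 * (j + 1))) := by
  classical
  set B := (n - 2 * (j + 1)) ^ 2 * numTrees (n - 2 * (j + 1)) with hB
  have hsq : ∀ G : SimpleGraph (Fin n), starCount j G ^ 2 = ∑ p ∈ stars n j, ∑ q ∈ stars n j,
      if IsStarAt G p.1 p.2 ∧ IsStarAt G q.1 q.2 then 1 else 0 := by
    intro G
    rw [starCount, card_filter, sq, sum_mul_sum]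
    refine sum_congr rfl fun p _ => sum_congr rfl fun q _ => ?_
    by_cases h1 : IsStarAt G p.1 p.2 <;> by_cases h2 : IsStarAt G q.1 q.2 <;> simp [h1, h2]
  have hpair : ∀ p ∈ stars n j, ∀ q ∈ stars n j,
      ((trees n).filter fun G => IsStarAt G p.1 p.2 ∧ IsStarAt G q.1 q.2).card ≤
        (if p = q then ((trees n).filter fun G => IsStarAt G p.1 p.2).card else 0) + B := by
    rintro ⟨c, L⟩ hp ⟨c', L'⟩ hq
    obtain ⟨hc, hL⟩ := mem_stars.1 hp
    obtain ⟨hc', hL'⟩ := mem_stars.1 hq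
    dsimp only at hc hL hc' hL' ⊢
    split_ifs with heq
    · refine le_trans (card_le_card fun G hG => ?_) (Nat.le_add_right _ _)
      exact mem_filter.2 ⟨(mem_filter.1 hG).1, (mem_filter.1 hG).2.1⟩
    rw [zero_add]
    by_cases hd : c ∉ L' ∧ c' ∉ L ∧ c ≠ c' ∧ Disjoint L L'
    · rw [card_trees_filter, hB]
      have := card_isStarAt_pair_le hc hL hc' hL' hd.1 hd.2.1 hd.2.2.1 hd.2.2.2
        (by rw [Fintype.card_fin]; omega)
      rwa [Fintype.card_fin] at this
    · rw [card_eq_zero.2]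
      · exact Nat.zero_le _
      · refine filter_eq_empty_iff.2 fun G hG h => ?_
        rcases isStarAt_eq_or_disjoint hj (by rw [Fintype.card_fin]; omega)
          (mem_filter.1 hG).2 hL hL' h.1 h.2 with ⟨rfl, rfl⟩ | h3
        · exact heq rfl
        · exact hd h3
  calc ∑ G ∈ trees n, starCount j G ^ 2
      = ∑ p ∈ stars n j, ∑ q ∈ stars n j,
        ((trees n).filter fun G => IsStarAt G p.1 p.2 ∧ IsStarAt G q.1 q.2).card := by
        simp_rw [hsq]
        rw [sum_comm]
        refine sum_congr rfl fun p _ => ?_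
        rw [sum_comm]
        simp_rw [← card_filter]
    _ ≤ ∑ p ∈ stars n j, ∑ q ∈ stars n j,
        ((if p = q then ((trees n).filter fun G => IsStarAt G p.1 p.2).card else 0) + B) :=
        sum_le_sum fun p hp => sum_le_sum fun q hq => hpair p hp q hq
    _ = ∑ p ∈ stars n j, ((trees n).filter fun G => IsStarAt G p.1 p.2).card +
        (stars n j).card ^ 2 * B := by
        simp_rw [sum_add_distrib]
        congr 1
        · refine sum_congr rfl fun p hp => ?_
          simp [hp]
        · simp [sq, mul_assoc]
    _ = _ := by
        congr 1
        simp_rw [starCount, card_filter]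
        rw [sum_comm]

/-! ### Asymptotics -/

lemma tendsto_sub_div_pow (t m : ℕ) :
    Tendsto (fun n : ℕ => (((n - t : ℕ) : ℝ) / n) ^ (n - m)) atTop (𝓝 (Real.exp (-(t : ℝ)))) := by
  have h1 := Real.tendsto_one_add_div_pow_exp (-(t : ℝ))
  have h2 : Tendsto (fun n : ℕ => (1 + -(t : ℝ) / n) ^ m) atTop (𝓝 1) := by
    have := ((tendsto_const_div_atTop_nhds_zero_nat (-(t : ℝ))).const_add 1).pow m
    simpa using this
  have h3 := h1.div h2 one_ne_zero
  rw [div_one] at h3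
  refine h3.congr' ?_
  filter_upwards [eventually_gt_atTop t, eventually_ge_atTop m] with n hn hm
  have hn0 : (0 : ℝ) < n := by exact_mod_cast (Nat.zero_le t).trans_lt hn
  have e : ((n - t : ℕ) : ℝ) / n = 1 + -(t : ℝ) / n := by
    rw [Nat.cast_sub hn.le]
    field_simp
    ring
  have hpos : 1 + -(t : ℝ) / n ≠ 0 := by
    rw [← e]
    have : 0 < n - t := by omega
    positivity
  rw [e, Pi.div_apply, pow_sub₀ _ hpos hm, div_eq_mul_inv]

lemma tendsto_card_stars (j : ℕ) :
    Tendsto (fun n : ℕ => ((stars n j).card : ℝ) / n ^ (j + 1)) atTop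
      (𝓝 (1 / (Nat.factorial j : ℝ))) := by
  have h1 : Tendsto (fun n : ℕ => (n.choose (j + 1) : ℝ) / (n ^ (j + 1) / (j + 1).factorial))
      atTop (𝓝 1) := by
    refine (Asymptotics.isEquivalent_iff_tendsto_one ?_).1 (isEquivalent_choose (j + 1))
    filter_upwards [eventually_gt_atTop 0] with n hn
    positivity
  have h2 := h1.div_const (Nat.factorial j : ℝ)
  refine h2.congr' ?_
  filter_upwards [eventually_gt_atTop 0] with n hn
  have e : n * (n - 1).choose j = n.choose (j + 1) * (j + 1) := by
    obtain ⟨m, rfl⟩ : ∃ m, n = m + 1 := ⟨n - 1, by omega⟩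
    exact Nat.add_one_mul_choose_eq m j
  rw [card_stars, e, Nat.factorial_succ]
  push_cast
  have : (0 : ℝ) < n := by exact_mod_cast hn
  field_simp

/-- The expected number of pendant stars with `j` leaves, divided by `n`. -/
lemma tendsto_mean (j : ℕ) :
    Tendsto (fun n : ℕ => (∑ G ∈ trees n, (starCount j G : ℝ)) / numTrees n / n) atTop
      (𝓝 (Real.exp (-((j + 1 : ℕ) : ℝ)) / Nat.factorial j)) := by
  have h := (tendsto_card_stars j).mul (tendsto_sub_div_pow (j + 1) (j + 2))
  rw [one_div_mul_eq_div] at h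
  refine h.congr' ?_
  filter_upwards [eventually_ge_atTop (j + 3)] with n hn
  have hs := sum_starCount hn
  rw [numTrees_eq (by omega : 1 ≤ n - (j + 1)), ← pow_succ',
    show n - (j + 1) - 2 + 1 = n - (j + 2) by omega] at hs
  rw [← Nat.cast_sum, hs, numTrees_eq (by omega)]
  have hn0 : (0 : ℝ) < n := by exact_mod_cast (by omega : 0 < n)
  have e : (n : ℝ) ^ (n - 2) * n = n ^ (j + 1) * n ^ (n - (j + 2)) := by
    rw [← pow_succ, ← pow_add]
    congr 1
    omega
  push_cast
  rw [div_div, e, div_pow]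
  field_simp

/-- The contribution of disjoint pairs to the second moment, divided by `n ^ 2`. -/
lemma tendsto_pairs (j : ℕ) :
    Tendsto (fun n : ℕ => (((stars n j).card ^ 2 *
        ((n - 2 * (j + 1)) ^ 2 * numTrees (n - 2 * (j + 1))) : ℕ) : ℝ) / numTrees n / n ^ 2) atTop
      (𝓝 ((Real.exp (-((j + 1 : ℕ) : ℝ)) / Nat.factorial j) ^ 2)) := by
  have h := ((tendsto_card_stars j).pow 2).mul (tendsto_sub_div_pow (2 * (j + 1)) (2 * (j + 1)))
  have hl : (1 / (Nat.factorial j : ℝ)) ^ 2 * Real.exp (-((2 * (j + 1) : ℕ) : ℝ)) =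
      (Real.exp (-((j + 1 : ℕ) : ℝ)) / Nat.factorial j) ^ 2 := by
    rw [div_pow, div_pow, ← Real.exp_nat_mul]
    push_cast
    rw [show (2 : ℝ) * -((j : ℝ) + 1) = -(2 * (j + 1)) by ring]
    ring
  rw [hl] at h
  refine h.congr' ?_
  filter_upwards [eventually_ge_atTop (2 * (j + 1) + 2)] with n hn
  rw [numTrees_eq (by omega : 1 ≤ n - 2 * (j + 1)), ← pow_add,
    show 2 + (n - 2 * (j + 1) - 2) = n - 2 * (j + 1) by omega, numTrees_eq (by omega)]
  have hn0 : (0 : ℝ) < n := by exact_mod_cast (by omega : 0 < n)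
  have e : (n : ℝ) ^ (n - 2) * n ^ 2 = (n ^ (j + 1)) ^ 2 * n ^ (n - 2 * (j + 1)) := by
    rw [← pow_mul, ← pow_add, ← pow_add]
    congr 1
    omega
  push_cast
  rw [div_div, e, div_pow, div_pow]
  field_simp

/-- Chebyshev's inequality for a count `X` on the uniform random tree, around any value `m`. -/
lemma treeProb_ge {n : ℕ} (hn : 1 ≤ n) (X : SimpleGraph (Fin n) → ℝ) (m δ : ℝ) (hδ : 0 < δ) :
    1 - ((∑ G ∈ trees n, X G ^ 2) / numTrees n -
        2 * m * ((∑ G ∈ trees n, X G) / numTrees n) + m ^ 2) / δ ^ 2 ≤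
      treeProb n fun G => m - δ ≤ X G ∧ X G ≤ m + δ := by
  classical
  have hpos : (0 : ℝ) < numTrees n := by
    rw [numTrees_eq hn]
    positivity
  set p : SimpleGraph (Fin n) → Prop := fun G => m - δ ≤ X G ∧ X G ≤ m + δ with hp
  have hcard : (((trees n).filter p).card : ℝ) + ((trees n).filter fun G => ¬ p G).card =
      numTrees n := by
    rw [← card_trees, ← card_filter_add_card_filter_not (s := trees n) p]
    push_cast
    rfl
  have hprob : treeProb n p = (((trees n).filter p).card : ℝ) / numTrees n := by
    rw [treeProb, card_trees_filter]
    rfl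
  have hcheb : (((trees n).filter fun G => ¬ p G).card : ℝ) * δ ^ 2 ≤
      ∑ G ∈ trees n, (X G - m) ^ 2 := by
    rw [← nsmul_eq_mul, ← sum_const]
    refine le_trans (sum_le_sum fun G hG => ?_)
      (sum_le_sum_of_subset_of_nonneg (filter_subset (fun G => ¬ p G) (trees n))
        fun G _ _ => sq_nonneg (X G - m))
    have hG := (mem_filter.1 hG).2
    rw [← sq_abs (X G - m)]
    refine pow_le_pow_left₀ hδ.le ?_ 2
    by_contra hlt
    rw [not_le, abs_lt] at hlt
    exact hG ⟨by linarith [hlt.1], by linarith [hlt.2]⟩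
  have hexp : ∑ G ∈ trees n, (X G - m) ^ 2 =
      ∑ G ∈ trees n, X G ^ 2 - 2 * m * ∑ G ∈ trees n, X G + m ^ 2 * numTrees n := by
    simp_rw [sub_sq]
    rw [sum_add_distrib, sum_sub_distrib, sum_const, card_trees, mul_sum, nsmul_eq_mul]
    congr 1
    · congr 1
      exact sum_congr rfl fun G _ => by ring
    · ring
  rw [hprob]
  have e : (∑ G ∈ trees n, X G ^ 2) / numTrees n -
        2 * m * ((∑ G ∈ trees n, X G) / numTrees n) + m ^ 2 =
      (∑ G ∈ trees n, (X G - m) ^ 2) / numTrees n := by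
    rw [hexp]
    field_simp
  have e2 : (((trees n).filter p).card : ℝ) / numTrees n =
      1 - (((trees n).filter fun G => ¬ p G).card : ℝ) / numTrees n := by
    rw [← hcard] at hpos ⊢
    field_simp
    ring
  rw [e, e2, div_div, mul_comm (numTrees n : ℝ), ← div_div]
  gcongr
  rw [le_div_iff₀ (by positivity)]
  exact hcheb

lemma treeProb_le_one (n : ℕ) (p : SimpleGraph (Fin n) → Prop) : treeProb n p ≤ 1 := by
  classical
  refine div_le_one_of_le₀ ?_ (Nat.cast_nonneg _)
  exact_mod_cast Nat.card_le_card_of_injective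
    (fun G : {G : SimpleGraph (Fin n) // G.IsTree ∧ p G} =>
      (⟨G.1, G.2.1⟩ : {G : SimpleGraph (Fin n) // G.IsTree}))
    fun G G' h => Subtype.ext (congrArg Subtype.val h :)

/-- Since `E X² ≤ E X + Q` with `E X ~ a n` and `Q ~ (a n)²`, the second moment of `X` around
`a n` is `o(n²)`, and Chebyshev's inequality applies. -/
theorem tendsto_treeProb_starCount {j : ℕ} (hj : 1 ≤ j) {ε a : ℝ} (hε : 0 < ε)
    (ha : a = Real.exp (-((j + 1 : ℕ) : ℝ)) / Nat.factorial j) :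
    Tendsto (fun n : ℕ => treeProb n fun G =>
      a * n - ε * a * n ≤ starCount j G ∧ (starCount j G : ℝ) ≤ a * n + ε * a * n)
      atTop (𝓝 1) := by
  have ha0 : 0 < a := by rw [ha]; positivity
  set A : ℕ → ℝ := fun n => (∑ G ∈ trees n, (starCount j G : ℝ)) / numTrees n / n with hA
  set Q : ℕ → ℝ := fun n => (((stars n j).card ^ 2 *
        ((n - 2 * (j + 1)) ^ 2 * numTrees (n - 2 * (j + 1))) : ℕ) : ℝ) / numTrees n / n ^ 2 with hQ
  have tA : Tendsto A atTop (𝓝 a) := by rw [ha]; exact tendsto_mean j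
  have tQ : Tendsto Q atTop (𝓝 (a ^ 2)) := by rw [ha]; exact tendsto_pairs j
  have tinv : Tendsto (fun n : ℕ => (1 : ℝ) / n) atTop (𝓝 0) :=
    tendsto_const_div_atTop_nhds_zero_nat 1
  have tlow : Tendsto
      (fun n => 1 - (A n * (1 / n) + Q n - 2 * a * A n + a ^ 2) / (ε * a) ^ 2) atTop (𝓝 1) := by
    have := ((((tA.mul tinv).add tQ).sub (tA.const_mul (2 * a))).add_const
      (a ^ 2)).div_const ((ε * a) ^ 2) |>.const_sub 1
    convert this using 2
    ring
  refine tendsto_of_tendsto_of_tendsto_of_le_of_le' tlow tendsto_const_nhds ?_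
    (Eventually.of_forall fun n => treeProb_le_one n _)
  filter_upwards [eventually_ge_atTop (2 * j + 3)] with n hn
  have hn0 : (0 : ℝ) < n := by exact_mod_cast (by omega : 0 < n)
  have hT0 : (0 : ℝ) < numTrees n := by
    rw [numTrees_eq (by omega)]
    have : 0 < n := by omega
    positivity
  refine le_trans ?_ (treeProb_ge (by omega) (fun G => (starCount j G : ℝ)) (a * n) (ε * a * n)
    (by positivity))
  have hsq : (∑ G ∈ trees n, (starCount j G : ℝ) ^ 2) / numTrees n ≤
      A n * n + Q n * n ^ 2 := by
    rw [hA, hQ]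
    dsimp only
    rw [div_mul_cancel₀ _ hn0.ne', div_mul_cancel₀ _ (pow_pos hn0 2).ne', ← add_div]
    gcongr
    exact_mod_cast sum_starCount_sq_le hj hn
  have hmean : (∑ G ∈ trees n, (starCount j G : ℝ)) / numTrees n = A n * n := by
    rw [hA]
    dsimp only
    rw [div_mul_cancel₀ _ hn0.ne']
  rw [hmean, mul_pow (ε * a), sub_le_sub_iff_left, div_le_div_iff₀ (by positivity) (by positivity)]
  have : (A n * (1 / n) + Q n - 2 * a * A n + a ^ 2) * ((ε * a) ^ 2 * (n : ℝ) ^ 2) =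
      (A n * n + Q n * n ^ 2 - 2 * (a * n) * (A n * n) + (a * n) ^ 2) * (ε * a) ^ 2 := by
    field_simp
  rw [this]
  gcongr

end PendantStar

/-- For every fixed `k ≥ 2` and every `ε > 0`, a.a.s. the number `X_k` of pendant stars of
size `k` in `𝒯_n` satisfies `(1-ε) n e^{-k}/(k-1)! ≤ X_k ≤ (1+ε) n e^{-k}/(k-1)!`. -/
theorem aas_pendant_star_count (k : ℕ) (hk : 2 ≤ k) :
    ∀ ε : ℝ, 0 < ε →
      Tendsto (fun n : ℕ =>
        treeProb n (fun G =>
          (1 - ε) * n * Real.exp (-(k : ℝ)) / (Nat.factorial (k - 1)) ≤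
              (Nat.card {S : Finset (Fin n) // IsPendantStar G k S} : ℝ) ∧
          (Nat.card {S : Finset (Fin n) // IsPendantStar G k S} : ℝ) ≤
              (1 + ε) * n * Real.exp (-(k : ℝ)) / (Nat.factorial (k - 1))))
        atTop (𝓝 1) := by
  intro ε hε
  obtain ⟨j, rfl⟩ : ∃ j, k = j + 1 := ⟨k - 1, by omega⟩
  have h := PendantStar.tendsto_treeProb_starCount (j := j) (by omega) hε rfl
  refine h.congr fun n => ?_
  congr 1
  funext G
  rw [PendantStar.card_isPendantStar, Nat.add_sub_cancel]
  congr 2 <;> ring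
end
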